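/- Let f : S² → ℝ be a smooth nonzero function with ∫_{S²} f dv_{g₀} = 0, let g_t = (1+tf)²·g₀ be defined for |t| < a. Then there exists α ∈ (0,a) such that for all t with |t| < α, the systole satisfies sys(S², g_t) ≤ 2π. -/

import Mathlib

open scoped Manifold RealInnerProductSpace
open MeasureTheory Real

noncomputable section

/-- The ambient Euclidean space `ℝ³`. -/
abbrev E3 : Type := EuclideanSpace ℝ (Fin 3)

instance : Fact (Module.finrank ℝ E3 = 2 + 1) := ⟨finrank_euclideanSpace_fin⟩

/-- The unit 2-sphere `S² ⊂ ℝ³`. -/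
abbrev Sph : Type := Metric.sphere (0 : E3) 1

/-- A function on the sphere is smooth (as a map of smooth manifolds). -/
def SmoothSph (f : Sph → ℝ) : Prop := ContMDiff (𝓡 2) 𝓘(ℝ, ℝ) (⊤ : ℕ∞) f

/-- The round metric tensor `g₀` on `S²` (restriction of the ambient inner product). -/
def g0 : Sph → E3 → E3 → ℝ := fun _ u v => ⟪u, v⟫

/-- The conformal metric tensor `Φ · g₀` (length element `√Φ` times that of `g₀`). -/
def confMetric (Φ : Sph → ℝ) : Sph → E3 → E3 → ℝ := fun x u v => Φ x * ⟪u, v⟫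

/-- Velocity of a curve on the sphere, as a vector of the ambient `ℝ³`. -/
def cvel (c : ℝ → Sph) (t : ℝ) : E3 := deriv (fun s => (c s : E3)) t

/-- Speed of a curve at time `t` with respect to a metric tensor `g`. -/
def gspeed (g : Sph → E3 → E3 → ℝ) (c : ℝ → Sph) (t : ℝ) : ℝ :=
  Real.sqrt (g (c t) (cvel c t) (cvel c t))

/-- Length of the curve `c` over `[a, b]` with respect to `g`. -/
def glength (g : Sph → E3 → E3 → ℝ) (c : ℝ → Sph) (a b : ℝ) : ℝ :=
  ∫ t in a..b, gspeed g c t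

/-- A `C¹` curve on the sphere. -/
def IsC1Curve (c : ℝ → Sph) : Prop := ContDiff ℝ 1 (fun t => (c t : E3))

/-- The Riemannian distance associated with the metric tensor `g`: the infimum of
lengths of `C¹` curves joining the two points. -/
def gdist (g : Sph → E3 → E3 → ℝ) (x y : Sph) : ℝ :=
  sInf {L | ∃ c : ℝ → Sph, IsC1Curve c ∧ c 0 = x ∧ c 1 = y ∧ L = glength g c 0 1}

/-- A (complete, unit-speed) geodesic of `g`: a `C¹` curve with unit speed which is
locally distance-minimizing. -/
def IsGeodesic (g : Sph → E3 → E3 → ℝ) (c : ℝ → Sph) : Prop :=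
  IsC1Curve c ∧ (∀ t, gspeed g c t = 1) ∧
    ∀ t : ℝ, ∃ ε > 0, ∀ s₁ s₂ : ℝ, t - ε ≤ s₁ → s₁ ≤ s₂ → s₂ ≤ t + ε →
      gdist g (c s₁) (c s₂) = s₂ - s₁

/-- A closed geodesic of length `L` (not reduced to a point): a unit-speed geodesic,
periodic with period `L > 0`. -/
def IsClosedGeodesic (g : Sph → E3 → E3 → ℝ) (c : ℝ → Sph) (L : ℝ) : Prop :=
  0 < L ∧ Function.Periodic c L ∧ IsGeodesic g c

/-- The systole: the smallest length of a closed geodesic not reduced to a point. -/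
def systole (g : Sph → E3 → E3 → ℝ) : ℝ :=
  sInf {L | ∃ c : ℝ → Sph, IsClosedGeodesic g c L}

/-- Orthogonal projection of an ambient vector onto the tangent plane at `x ∈ S²`. -/
def tproj (x : Sph) (v : E3) : E3 := v - ⟪(x : E3), v⟫ • (x : E3)

/-- Auxiliary extension of `g` to all of `ℝ³`, equal to `g` on the tangent plane and to the
ambient inner product in the normal direction; its determinant computes the area density. -/
def ghat (g : Sph → E3 → E3 → ℝ) (x : Sph) (u v : E3) : ℝ :=
  g x (tproj x u) (tproj x v) + ⟪(x : E3), u⟫ * ⟪(x : E3), v⟫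

/-- The Riemannian area density of `g` with respect to the round metric:
`√det` of `g` on the tangent plane. -/
def areaDensity (g : Sph → E3 → E3 → ℝ) (x : Sph) : ℝ :=
  Real.sqrt (Matrix.det (Matrix.of fun i j : Fin 3 =>
    ghat g x (EuclideanSpace.single i 1) (EuclideanSpace.single j 1)))

/-- The Riemannian area of `(S², g)`, computed against the round area measure
(the 2-dimensional Hausdorff measure of the sphere). -/
def garea (g : Sph → E3 → E3 → ℝ) : ℝ :=
  ∫ x, areaDensity g x ∂(μH[2] : Measure Sph)

/-- The systolic area `𝔖(S², g) = Area(S², g) / sys(S², g)²`. -/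
def systolicArea (g : Sph → E3 → E3 → ℝ) : ℝ := garea g / (systole g) ^ 2

/-- `g` is a smooth Riemannian metric on `S²` (a smooth field of symmetric bilinear forms,
positive definite on tangent planes). -/
structure IsRiemannMetricS2 (g : Sph → E3 → E3 → ℝ) : Prop where
  symm : ∀ x u v, g x u v = g x v u
  add_left : ∀ x u v w, g x (u + v) w = g x u w + g x v w
  smul_left : ∀ (x : Sph) (r : ℝ) u v, g x (r • u) v = r * g x u v
  posdef : ∀ (x : Sph) (v : E3), ⟪(x : E3), v⟫ = 0 → v ≠ 0 → 0 < g x v v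
  smooth : ∀ u v : E3, ContMDiff (𝓡 2) 𝓘(ℝ, ℝ) (⊤ : ℕ∞) (fun x => g x u v)

/-- The circle `γ(u, s)`: intersection of `S²` with the plane orthogonal to `u` at distance `s`
from the origin (`s = 0` gives the great circle `γ(u)`). -/
def circleAt (u : Sph) (s : ℝ) : Set Sph := {x | ⟪(u : E3), (x : E3)⟫ = s}

/-- The great circle `γ(u)` orthogonal to `u`. -/
def greatCircle (u : Sph) : Set Sph := circleAt u 0

/-- The integral `∫_{γ(u)} h dl` of `h` along the great circle `γ(u)` with respect to
`g₀`-arc length (1-dimensional Hausdorff measure). -/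
def lineInt (h : Sph → ℝ) (u : Sph) : ℝ :=
  ∫ x in greatCircle u, h x ∂(μH[1] : Measure Sph)

/-- Length of the circle `γ(u, s)` with respect to the conformal metric `Φ · g₀`. -/
def circleLen (Φ : Sph → ℝ) (u : Sph) (s : ℝ) : ℝ :=
  ∫ x in circleAt u s, Real.sqrt (Φ x) ∂(μH[1] : Measure Sph)

/-- The antipodal map of `S²`. -/
def antip (x : Sph) : Sph :=
  ⟨-(x : E3), by
    rw [mem_sphere_zero_iff_norm, norm_neg, ← mem_sphere_zero_iff_norm]; exact x.2⟩

/-- A fundamental domain for the antipodal action on `S²` (an open hemisphere together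
with half of its boundary great circle): `ℝP²` is obtained by gluing. -/
def hemiDomain : Set Sph :=
  {x | 0 < (x : E3) 2 ∨ ((x : E3) 2 = 0 ∧ (0 < (x : E3) 1 ∨ ((x : E3) 1 = 0 ∧ 0 < (x : E3) 0)))}

/-- The area of `(ℝP², g̃)`, where `g̃` is induced by an antipodally invariant metric `g` on `S²`:
the area of a fundamental domain of the antipodal action. -/
def areaRP2 (g : Sph → E3 → E3 → ℝ) : ℝ :=
  ∫ x in hemiDomain, areaDensity g x ∂(μH[2] : Measure Sph)

/-- The systole of `(ℝP², g̃)`: the smallest length of a noncontractible closed curve of `ℝP²`,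
i.e. the infimum of `g`-lengths of curves of `S²` joining a point to its antipode
(such curves are exactly the lifts of noncontractible loops). -/
def sysRP2 (g : Sph → E3 → E3 → ℝ) : ℝ :=
  sInf {L | ∃ c : ℝ → Sph, IsC1Curve c ∧ c 1 = antip (c 0) ∧ L = glength g c 0 1}

/-- The systolic area of `(ℝP², g̃)`. -/
def systolicAreaRP2 (g : Sph → E3 → E3 → ℝ) : ℝ := areaRP2 g / (sysRP2 g) ^ 2

/-! A great circle along which the normal derivative of `1 + tf` vanishes is a closed geodesic of
`g_t`; for `t = 0` every great circle will do. For small `t ≠ 0`, closed geodesics near great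
circles come from a Lyapunov–Schmidt reduction: unit quaternions `ζ` parametrize the great circles
`θ ↦ ζ exp(kθ/2) i exp(-kθ/2) ζ⁻¹`, the Hopf map `z ↦ z i z̄` lifts the geodesic flow to a
Hamiltonian flow near `‖z‖ = 1`, and a minimum over `ζ` of the reduced action is a closed geodesic
of length at most `2π` as soon as the reduced action is nonpositive somewhere. The first-order term
of the reduced action is a multiple of `t S(ζ)`, where `S(ζ)` is the integral of `f` over the great
circle.

* If `S ≢ 0`, then `S` takes both signs because its average is that of `f`, and `ζ` is chosen with
  `t S(ζ) < 0`.
* If `S ≡ 0`, differentiating `S` shows that along every great circle the normal derivative of `f`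
  is orthogonal to `cos` and `sin`; since reversing a circle changes the sign of its mean, that mean
  vanishes for some `ζ`. Either the normal derivative vanishes identically there, or Wirtinger's
  inequality gives the second-order term of the reduced action the right sign. -/

section RadialExtension

open scoped ContDiff

theorem norm_coe_sph (x : Sph) : ‖(x : E3)‖ = 1 := mem_sphere_zero_iff_norm.mp x.2

theorem coe_sph_ne_zero (x : Sph) : (x : E3) ≠ 0 :=
  norm_ne_zero_iff.mp <| by rw [norm_coe_sph]; exact one_ne_zero

theorem inv_norm_smul_mem_sphere {x : E3} (hx : x ≠ 0) :
    ‖x‖⁻¹ • x ∈ Metric.sphere (0 : E3) 1 := by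
  rw [mem_sphere_zero_iff_norm, norm_smul, norm_inv, norm_norm,
    inv_mul_cancel₀ (norm_ne_zero_iff.mpr hx)]

open Classical in
/-- The radial projection `x ↦ x / ‖x‖` of `ℝ³ ∖ {0}` onto `S²`; its value at `0` is a dummy. -/
def radialProj (x : E3) : Sph :=
  if hx : x = 0 then ⟨EuclideanSpace.single 0 1, by simp⟩
  else ⟨‖x‖⁻¹ • x, inv_norm_smul_mem_sphere hx⟩

theorem radialProj_of_ne_zero {x : E3} (hx : x ≠ 0) :
    radialProj x = ⟨‖x‖⁻¹ • x, inv_norm_smul_mem_sphere hx⟩ :=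
  dif_neg hx

theorem radialProj_coe (x : Sph) : radialProj x = x := by
  rw [radialProj_of_ne_zero (coe_sph_ne_zero x)]
  exact Subtype.ext (by simp)

theorem radialProj_smul {r : ℝ} (hr : 0 < r) (x : E3) : radialProj (r • x) = radialProj x := by
  rcases eq_or_ne x 0 with rfl | hx
  · rw [smul_zero]
  · rw [radialProj_of_ne_zero hx, radialProj_of_ne_zero (smul_ne_zero hr.ne' hx), Subtype.mk.injEq,
      norm_smul, Real.norm_of_nonneg hr.le, smul_smul]
    congr 1
    field_simp

/-- The extension of a function on `S²` to `ℝ³ ∖ {0}` that is homogeneous of degree `0`. -/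
def radialExt (f : Sph → ℝ) (x : E3) : ℝ := f (radialProj x)

theorem radialExt_coe (f : Sph → ℝ) (x : Sph) : radialExt f x = f x := by
  rw [radialExt, radialProj_coe]

theorem radialExt_smul (f : Sph → ℝ) {r : ℝ} (hr : 0 < r) (x : E3) :
    radialExt f (r • x) = radialExt f x := by
  rw [radialExt, radialProj_smul hr, radialExt]

theorem contDiffAt_radialExt {f : Sph → ℝ} (hf : SmoothSph f) {x : E3} (hx : x ≠ 0) :
    ContDiffAt ℝ ∞ (radialExt f) x := by
  let U : TopologicalSpace.Opens E3 := ⟨{0}ᶜ, isOpen_compl_singleton⟩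
  have hU : ∀ y : U, (y : E3) ≠ 0 := fun y => y.2
  have hnormalize : ContMDiff 𝓘(ℝ, E3) 𝓘(ℝ, E3) ∞ fun y : U => ‖(y : E3)‖⁻¹ • (y : E3) := fun y =>
    contMDiffAt_subtype_iff (f := fun z : E3 => ‖z‖⁻¹ • z) |>.mpr <|
      ((contDiffAt_id.norm ℝ (hU y)).inv (norm_ne_zero_iff.mpr (hU y))).smul contDiffAt_id
        |>.contMDiffAt
  have hproj : ContMDiff 𝓘(ℝ, E3) (𝓡 2) ∞ fun y : U => radialProj y := by
    simp_rw [fun y : U => radialProj_of_ne_zero (hU y)]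
    exact hnormalize.codRestrict_sphere _
  exact (contMDiffAt_subtype_iff (f := radialExt f) (x := ⟨x, hx⟩)).mp
    (hf.comp hproj).contMDiffAt |>.contDiffAt

theorem hasFDerivAt_radialExt {f : Sph → ℝ} (hf : SmoothSph f) {x : E3} (hx : x ≠ 0) :
    HasFDerivAt (radialExt f) (fderiv ℝ (radialExt f) x) x :=
  ((contDiffAt_radialExt hf hx).differentiableAt (by simp)).hasFDerivAt

end RadialExtension

section AnnulusCutoff

open scoped ContDiff Topology

theorem eventually_mem_annulus {W : Type*} [NormedAddCommGroup W] {x : W} (h₁ : 1 / 2 < ‖x‖)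
    (h₂ : ‖x‖ < 2) :
    ∀ᶠ y in 𝓝 x, 1 / 2 < ‖y‖ ∧ ‖y‖ < 2 :=
  (continuousAt_const.eventually_lt continuous_norm.continuousAt h₁).and
    (continuous_norm.continuousAt.eventually_lt continuousAt_const h₂)

variable {W : Type*} [NormedAddCommGroup W] [InnerProductSpace ℝ W] [FiniteDimensional ℝ W]

/-- A smooth cutoff function equal to `1` on `1/2 ≤ ‖x‖ ≤ 2`, vanishing for `‖x‖ ≤ 1/4` and for
`3 ≤ ‖x‖`. -/
def annulusCutoff (x : W) : ℝ :=
  (⟨2, 3, by norm_num, by norm_num⟩ : ContDiffBump (0 : W)) x *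
    (1 - (⟨1 / 4, 1 / 2, by norm_num, by norm_num⟩ : ContDiffBump (0 : W)) x)

theorem contDiff_annulusCutoff : ContDiff ℝ ∞ (annulusCutoff : W → ℝ) :=
  (ContDiffBump.contDiff _).mul (contDiff_const.sub (ContDiffBump.contDiff _))

theorem hasCompactSupport_annulusCutoff : HasCompactSupport (annulusCutoff : W → ℝ) :=
  (ContDiffBump.hasCompactSupport _).mul_right

theorem annulusCutoff_eq_one {x : W} (h₁ : 1 / 2 ≤ ‖x‖) (h₂ : ‖x‖ ≤ 2) : annulusCutoff x = 1 := by
  rw [annulusCutoff, ContDiffBump.one_of_mem_closedBall _ (by simpa using h₂),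
    ContDiffBump.zero_of_le_dist _ (by simpa using h₁), sub_zero, one_mul]

theorem annulusCutoff_eq_zero {x : W} (hx : ‖x‖ ≤ 1 / 4) : annulusCutoff x = 0 := by
  rw [annulusCutoff,
    ContDiffBump.one_of_mem_closedBall (x := x) ⟨1 / 4, _, _, _⟩ (by simpa using hx),
    sub_self, mul_zero]

theorem contDiff_annulusCutoff_mul {X : Type*} [NormedAddCommGroup X] [NormedSpace ℝ X]
    {g : X → W} (hg : ContDiff ℝ ∞ g) {h : X → ℝ} (hh : ∀ x, g x ≠ 0 → ContDiffAt ℝ ∞ h x) :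
    ContDiff ℝ ∞ fun x => annulusCutoff (g x) * h x := by
  refine contDiff_iff_contDiffAt.mpr fun x => ?_
  by_cases hx : g x = 0
  · have hnear : ∀ᶠ y in 𝓝 x, ‖g y‖ < 1 / 4 :=
      hg.continuous.norm.continuousAt.eventually_lt continuousAt_const (by simp [hx])
    have hzero : (fun y => annulusCutoff (g y) * h y) =ᶠ[𝓝 x] fun _ => 0 :=
      hnear.mono fun y hy => mul_eq_zero_of_left (annulusCutoff_eq_zero hy.le) _
    exact contDiffAt_const.congr_of_eventuallyEq hzero
  · exact (contDiff_annulusCutoff.comp hg).contDiffAt.mul (hh x hx)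

/-- The radial extension of `f`, cut off away from the annulus `1/2 ≤ ‖x‖ ≤ 2` so as to become
smooth and compactly supported on `ℝ³`. -/
def cutoffExt (f : Sph → ℝ) (x : E3) : ℝ := annulusCutoff x * radialExt f x

theorem contDiff_cutoffExt {f : Sph → ℝ} (hf : SmoothSph f) : ContDiff ℝ ∞ (cutoffExt f) :=
  contDiff_annulusCutoff_mul contDiff_id fun _ => contDiffAt_radialExt hf

theorem hasCompactSupport_cutoffExt (f : Sph → ℝ) : HasCompactSupport (cutoffExt f) :=
  hasCompactSupport_annulusCutoff.mul_right

theorem cutoffExt_eq_radialExt (f : Sph → ℝ) {x : E3} (h₁ : 1 / 2 ≤ ‖x‖) (h₂ : ‖x‖ ≤ 2) :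
    cutoffExt f x = radialExt f x := by
  rw [cutoffExt, annulusCutoff_eq_one h₁ h₂, one_mul]

theorem cutoffExt_coe (f : Sph → ℝ) (x : Sph) : cutoffExt f x = f x := by
  rw [cutoffExt_eq_radialExt f, radialExt_coe] <;> rw [norm_coe_sph] <;> norm_num

theorem fderiv_cutoffExt (f : Sph → ℝ) (x : Sph) :
    fderiv ℝ (cutoffExt f) x = fderiv ℝ (radialExt f) x := by
  refine Filter.EventuallyEq.fderiv_eq ?_
  filter_upwards [eventually_mem_annulus (x := (x : E3)) (by rw [norm_coe_sph]; norm_num)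
    (by rw [norm_coe_sph]; norm_num)] with y hy
  exact cutoffExt_eq_radialExt f hy.1.le hy.2.le

end AnnulusCutoff

section BoundedSecondDerivative

open scoped ContDiff

variable {W : Type*} [NormedAddCommGroup W] [NormedSpace ℝ W] {Q : W → ℝ} {K : ℝ}

/-- `Q` and its derivative are bounded by `K`, and its derivative is `K`-Lipschitz: a `C^{1,1}` form
of the statement that `Q` has `C²` norm at most `K`. -/
structure HasC2Bound (Q : W → ℝ) (K : ℝ) : Prop where
  differentiable : Differentiable ℝ Q
  abs_le : ∀ x, |Q x| ≤ K
  norm_fderiv_le : ∀ x, ‖fderiv ℝ Q x‖ ≤ K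
  norm_fderiv_sub_le : ∀ x y, ‖fderiv ℝ Q y - fderiv ℝ Q x‖ ≤ K * ‖y - x‖

theorem HasC2Bound.nonneg (hQ : HasC2Bound Q K) : 0 ≤ K :=
  (abs_nonneg _).trans (hQ.abs_le 0)

theorem HasC2Bound.abs_sub_le (hQ : HasC2Bound Q K) (x y : W) : |Q y - Q x| ≤ K * ‖y - x‖ :=
  convex_univ.norm_image_sub_le_of_norm_fderiv_le (𝕜 := ℝ) (fun z _ => hQ.differentiable z)
    (fun z _ => hQ.norm_fderiv_le z) (Set.mem_univ x) (Set.mem_univ y)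

theorem HasC2Bound.abs_taylor_le (hQ : HasC2Bound Q K) (x y : W) :
    |Q y - Q x - fderiv ℝ Q x (y - x)| ≤ K * ‖y - x‖ ^ 2 := by
  have hK := hQ.nonneg
  have hderiv : ∀ z ∈ Metric.closedBall x ‖y - x‖,
      ‖fderiv ℝ Q z - fderiv ℝ Q x‖ ≤ K * ‖y - x‖ := fun z hz =>
    (hQ.norm_fderiv_sub_le x z).trans <| by gcongr; exact mem_closedBall_iff_norm.mp hz
  calc |Q y - Q x - fderiv ℝ Q x (y - x)| ≤ K * ‖y - x‖ * ‖y - x‖ :=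
        (convex_closedBall x _).norm_image_sub_le_of_norm_fderiv_le'
          (fun z _ => hQ.differentiable z) hderiv (by simp) (by simp [dist_eq_norm])
    _ = K * ‖y - x‖ ^ 2 := by ring

theorem exists_hasC2Bound (hQ : ContDiff ℝ ∞ Q) (hc : HasCompactSupport Q) :
    ∃ K, HasC2Bound Q K := by
  have hQ' : ContDiff ℝ ∞ (fderiv ℝ Q) := hQ.fderiv_right (by simp)
  obtain ⟨K₀, h₀⟩ := hQ.continuous.bounded_above_of_compact_support hc
  obtain ⟨K₁, h₁⟩ := hQ'.continuous.bounded_above_of_compact_support (hc.fderiv (𝕜 := ℝ))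
  obtain ⟨K₂, h₂⟩ := hQ'.lipschitzWith_of_hasCompactSupport (hc.fderiv (𝕜 := ℝ)) (by simp)
  exact ⟨max (max K₀ K₁) K₂, hQ.differentiable (by simp),
    fun x => (h₀ x).trans ((le_max_left _ _).trans (le_max_left _ _)),
    fun x => (h₁ x).trans ((le_max_right _ _).trans (le_max_left _ _)),
    fun x y => (h₂.norm_sub_le y x).trans (by gcongr; exact le_max_right _ _)⟩

end BoundedSecondDerivative

section IntervalIntegral

open intervalIntegral

variable {v w : ℝ → ℝ}

theorem sq_integral_le_integral_mul_integral_sq_div {a b : ℝ} (hab : a ≤ b) (hv : Continuous v)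
    (hw : Continuous w) (hw0 : ∀ τ, 0 < w τ) :
    (∫ τ in a..b, v τ) ^ 2 ≤ (∫ τ in a..b, w τ) * ∫ τ in a..b, v τ ^ 2 / w τ := by
  have hdiv : Continuous fun τ => v τ ^ 2 / w τ := (hv.pow 2).div hw fun τ => (hw0 τ).ne'
  have hquad : ∀ x : ℝ, 0 ≤ (∫ τ in a..b, w τ) * (x * x) + (-2 * ∫ τ in a..b, v τ) * x +
      ∫ τ in a..b, v τ ^ 2 / w τ := fun x => by
    have hsq : ∀ τ, (v τ - x * w τ) ^ 2 / w τ = x * x * w τ + -2 * x * v τ + v τ ^ 2 / w τ :=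
      fun τ => by have := (hw0 τ).ne'; field_simp; ring
    calc (0 : ℝ) ≤ ∫ τ in a..b, (v τ - x * w τ) ^ 2 / w τ :=
          integral_nonneg hab fun τ _ => div_nonneg (sq_nonneg _) (hw0 τ).le
      _ = _ := by
        simp_rw [hsq]
        rw [intervalIntegral.integral_add (by apply Continuous.intervalIntegrable; fun_prop)
            (hdiv.intervalIntegrable _ _),
          intervalIntegral.integral_add (by apply Continuous.intervalIntegrable; fun_prop)
            (by apply Continuous.intervalIntegrable; fun_prop),
          intervalIntegral.integral_const_mul, intervalIntegral.integral_const_mul]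
        ring
  have := discrim_le_zero hquad
  rw [discrim] at this
  linarith

theorem le_integral_of_forall_weight {ℓ : ℝ} (hv : Continuous v) (hv0 : ∀ τ, 0 ≤ v τ)
    (h : ∀ w : ℝ → ℝ, Continuous w → (∀ τ, 0 < w τ) → ∫ τ in (0 : ℝ)..1, w τ = ℓ →
      ℓ ≤ ∫ τ in (0 : ℝ)..1, v τ ^ 2 / w τ) :
    ℓ ≤ ∫ τ in (0 : ℝ)..1, v τ := by
  set Λ := ∫ τ in (0 : ℝ)..1, v τ with hΛ
  by_contra! hlt
  let w : ℝ → ℝ := fun τ => v τ + (ℓ - Λ)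
  have hw : Continuous w := hv.add continuous_const
  have hw0 : ∀ τ, 0 < w τ := fun τ => add_pos_of_nonneg_of_pos (hv0 τ) (sub_pos.mpr hlt)
  have hwℓ : ∫ τ in (0 : ℝ)..1, w τ = ℓ := by
    rw [intervalIntegral.integral_add (hv.intervalIntegrable _ _) (by simp), ← hΛ]
    simp
  refine (h w hw hw0 hwℓ).not_gt (lt_of_le_of_lt ?_ hlt)
  refine integral_mono_on zero_le_one
    (((hv.pow 2).div hw fun τ => (hw0 τ).ne').intervalIntegrable _ _)
    (hv.intervalIntegrable _ _) fun τ _ => ?_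
  rw [div_le_iff₀ (hw0 τ), sq]
  exact mul_le_mul_of_nonneg_left (le_add_of_nonneg_right (sub_pos.mpr hlt).le) (hv0 τ)

theorem norm_le_integral_norm_of_hasDerivAt {F : Type*} [NormedAddCommGroup F] [NormedSpace ℝ F]
    [CompleteSpace F] {η η' : ℝ → F} {a b τ : ℝ} (hη : ∀ τ, HasDerivAt η (η' τ) τ)
    (hη' : Continuous η') (ha : η a = 0) (hτ : τ ∈ Set.Icc a b) :
    ‖η τ‖ ≤ ∫ x in a..b, ‖η' x‖ := by
  have hFTC : ∫ x in a..τ, η' x = η τ := by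
    rw [integral_eq_sub_of_hasDerivAt (fun x _ => hη x) (hη'.intervalIntegrable _ _), ha, sub_zero]
  calc ‖η τ‖ ≤ ∫ x in a..τ, ‖η' x‖ := hFTC ▸ norm_integral_le_integral_norm hτ.1
    _ ≤ ∫ x in a..b, ‖η' x‖ := integral_mono_interval le_rfl hτ.1 hτ.2
        (Filter.Eventually.of_forall fun x => norm_nonneg _) (hη'.norm.intervalIntegrable _ _)

theorem integral_inner_deriv_add_eq_zero {F : Type*} [NormedAddCommGroup F]
    [InnerProductSpace ℝ F] {p p' η η' : ℝ → F} {a b : ℝ} (hp : ∀ τ, HasDerivAt p (p' τ) τ)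
    (hp' : Continuous p') (hη : ∀ τ, HasDerivAt η (η' τ) τ) (hη' : Continuous η')
    (hab : ⟪p a, η a⟫ = ⟪p b, η b⟫) :
    ∫ τ in a..b, (⟪p τ, η' τ⟫ + ⟪p' τ, η τ⟫) = 0 := by
  have hpc : Continuous p := continuous_iff_continuousAt.mpr fun τ => (hp τ).continuousAt
  have hηc : Continuous η := continuous_iff_continuousAt.mpr fun τ => (hη τ).continuousAt
  rw [integral_eq_sub_of_hasDerivAt (f := fun τ => ⟪p τ, η τ⟫)
    (fun τ _ => (hp τ).inner ℝ (hη τ))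
    (((hpc.inner hη').add (hp'.inner hηc)).intervalIntegrable _ _), hab, sub_self]

end IntervalIntegral

section LocalMinimality

open intervalIntegral

variable {E : Type*} [NormedAddCommGroup E] [InnerProductSpace ℝ E] {R : E → ℝ} {K r₀ : ℝ}

/-- `c` is a curve on the unit sphere of `E`, with velocity `c'`, that has unit speed for the
conformal metric `R · g₀` and solves its Euler-Lagrange equation. The latter is written for the
derivative `p'` of the momentum `R(c) • c'`; its last term is the constraint force. -/
structure IsConformalGeodesic (R : E → ℝ) (c c' p' : ℝ → E) : Prop where
  hasDerivAt : ∀ s, HasDerivAt c (c' s) s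
  continuous_velocity : Continuous c'
  norm_eq_one : ∀ s, ‖c s‖ = 1
  unit_speed : ∀ s, R (c s) * ‖c' s‖ ^ 2 = 1
  hasDerivAt_momentum : ∀ s, HasDerivAt (fun s => R (c s) • c' s) (p' s) s
  continuous_force : Continuous p'
  euler_lagrange : ∀ s v, ⟪p' s, v⟫ = 1 / 2 * ‖c' s‖ ^ 2 * fderiv ℝ R (c s) v - ⟪c s, v⟫

theorem inner_sub_self_of_norm_eq_one {x y : E} (hx : ‖x‖ = 1) (hy : ‖y‖ = 1) :
    ⟪x, y - x⟫ = -‖y - x‖ ^ 2 / 2 := by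
  have h := norm_sub_sq_real y x
  rw [real_inner_comm, hx, hy] at h
  rw [inner_sub_right, real_inner_self_eq_norm_sq, hx]
  linarith

theorem one_add_inner_force_le {x y u q : E} (hR : HasC2Bound R K) (hr₀ : 0 < r₀)
    (hx : ‖x‖ = 1) (hy : ‖y‖ = 1) (hRx : r₀ ≤ R x) (hunit : R x * ‖u‖ ^ 2 = 1)
    (hq : ∀ v, ⟪q, v⟫ = 1 / 2 * ‖u‖ ^ 2 * fderiv ℝ R x v - ⟪x, v⟫) :
    1 + 2 * ⟪q, y - x⟫ - (K / r₀ + 1) * ‖y - x‖ ^ 2 ≤ R y * ‖u‖ ^ 2 := by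
  have hu : ‖u‖ ^ 2 ≤ 1 / r₀ := by
    rw [le_div_iff₀ hr₀, ← hunit, mul_comm]; gcongr
  have hK := hR.nonneg
  have htaylor : ‖u‖ ^ 2 * -(K * ‖y - x‖ ^ 2) ≤
      ‖u‖ ^ 2 * (R y - R x - fderiv ℝ R x (y - x)) := by
    gcongr; exact (abs_le.mp (hR.abs_taylor_le x y)).1
  have hbound : ‖u‖ ^ 2 * (K * ‖y - x‖ ^ 2) ≤ 1 / r₀ * (K * ‖y - x‖ ^ 2) := by gcongr
  have hring : 1 / r₀ * (K * ‖y - x‖ ^ 2) = K / r₀ * ‖y - x‖ ^ 2 := by ring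
  rw [hq, inner_sub_self_of_norm_eq_one hx hy]
  linarith

/-- Here `x`, `u`, `q` are the position, velocity and force of a geodesic and `y`, `z` those of a
competitor running at `w` times the speed; the middle terms on the left form an exact derivative. -/
theorem energy_lower_bound {x y u z q : E} {w : ℝ} (hR : HasC2Bound R K) (hr₀ : 0 < r₀)
    (hw : 0 < w) (hx : ‖x‖ = 1) (hy : ‖y‖ = 1) (hRx : r₀ ≤ R x) (hRy : r₀ ≤ R y)
    (hunit : R x * ‖u‖ ^ 2 = 1)
    (hq : ∀ v, ⟪q, v⟫ = 1 / 2 * ‖u‖ ^ 2 * fderiv ℝ R x v - ⟪x, v⟫) :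
    w + 2 * (⟪R x • u, z - w • u⟫ + ⟪w • q, y - x⟫) + r₀ * (‖z - w • u‖ ^ 2 / w)
      - (3 * (K / r₀) + 2 * K + 1) * (‖y - x‖ * ‖z - w • u‖ + w * ‖y - x‖ ^ 2) ≤
      R y * ‖z‖ ^ 2 / w := by
  set ν := z - w • u with hν
  have hK := hR.nonneg
  have hexpand : R y * ‖z‖ ^ 2 / w =
      R y * (‖ν‖ ^ 2 / w) + 2 * (R y * ⟪u, ν⟫) + w * (R y * ‖u‖ ^ 2) := by
    have hz : z = ν + w • u := by simp [hν]
    rw [hz, norm_add_sq_real, inner_smul_right, norm_smul, real_inner_comm, mul_pow,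
      Real.norm_eq_abs, sq_abs]
    field_simp
  have hu : ‖u‖ ≤ 1 / r₀ + 1 := by
    have : ‖u‖ ^ 2 ≤ 1 / r₀ := by rw [le_div_iff₀ hr₀, ← hunit, mul_comm]; gcongr
    nlinarith [sq_nonneg (‖u‖ - 1)]
  have hcross : R x * ⟪u, ν⟫ - (K / r₀ + K) * (‖y - x‖ * ‖ν‖) ≤ R y * ⟪u, ν⟫ := by
    have : |(R y - R x) * ⟪u, ν⟫| ≤ K * ‖y - x‖ * ((1 / r₀ + 1) * ‖ν‖) := by
      rw [abs_mul]
      gcongr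
      · exact hR.abs_sub_le x y
      · exact (abs_real_inner_le_norm u ν).trans (by gcongr)
    have hring : K * ‖y - x‖ * ((1 / r₀ + 1) * ‖ν‖) = (K / r₀ + K) * (‖y - x‖ * ‖ν‖) := by ring
    linarith [(abs_le.mp this).1]
  have hkinetic : r₀ * (‖ν‖ ^ 2 / w) ≤ R y * (‖ν‖ ^ 2 / w) := by gcongr
  have hforce := mul_le_mul_of_nonneg_left
    (one_add_inner_force_le hR hr₀ hx hy hRx hunit hq) hw.le
  have hnonneg₁ : 0 ≤ (K / r₀ + 1) * (‖y - x‖ * ‖ν‖) := by positivity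
  have hnonneg₂ : 0 ≤ (2 * (K / r₀) + 2 * K) * (w * ‖y - x‖ ^ 2) := by positivity
  rw [hexpand, real_inner_smul_left, real_inner_smul_left]
  generalize K / r₀ = k at *
  linarith

theorem le_integral_of_quadratic_lower_bound {w n m e : ℝ → ℝ} {ℓ k : ℝ} (hk : 0 ≤ k)
    (hw : Continuous w) (hn : Continuous n) (hm : Continuous m) (he : Continuous e)
    (hw0 : ∀ τ, 0 < w τ) (hwi : ∫ τ in (0 : ℝ)..1, w τ = ℓ)
    (hmi : ∫ τ in (0 : ℝ)..1, m τ = 0) (hsmall : k * (ℓ + ℓ ^ 2) ≤ r₀)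
    (h : ∀ τ ∈ Set.Icc (0 : ℝ) 1, w τ + 2 * m τ + r₀ * (n τ ^ 2 / w τ) -
      (k * (∫ x in (0 : ℝ)..1, n x) * n τ + k * (∫ x in (0 : ℝ)..1, n x) ^ 2 * w τ) ≤ e τ) :
    ℓ ≤ ∫ τ in (0 : ℝ)..1, e τ := by
  set A := ∫ x in (0 : ℝ)..1, n x with hA
  set D := ∫ τ in (0 : ℝ)..1, n τ ^ 2 / w τ with hD
  have hdiv : Continuous fun τ => n τ ^ 2 / w τ := (hn.pow 2).div hw fun τ => (hw0 τ).ne'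
  have hℓ : 0 ≤ ℓ := hwi ▸ integral_nonneg zero_le_one fun τ _ => (hw0 τ).le
  have hD0 : 0 ≤ D :=
    integral_nonneg zero_le_one fun τ _ => div_nonneg (sq_nonneg _) (hw0 τ).le
  have hAD : A ^ 2 ≤ ℓ * D :=
    hwi ▸ sq_integral_le_integral_mul_integral_sq_div zero_le_one hn hw hw0
  have hInt {φ : ℝ → ℝ} (hφ : Continuous φ) : IntervalIntegrable φ volume 0 1 :=
    hφ.intervalIntegrable _ _
  have hintegrated : ℓ + r₀ * D - (k * A * A + k * A ^ 2 * ℓ) ≤ ∫ τ in (0 : ℝ)..1, e τ := by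
    have := integral_mono_on zero_le_one (hInt (by fun_prop)) (hInt he) h
    rw [intervalIntegral.integral_sub (hInt (by fun_prop)) (hInt (by fun_prop)),
      intervalIntegral.integral_add (hInt (by fun_prop)) (hInt (by fun_prop)),
      intervalIntegral.integral_add (hInt hw) (hInt (by fun_prop)),
      intervalIntegral.integral_add (hInt (by fun_prop)) (hInt (by fun_prop))] at this
    simp only [intervalIntegral.integral_const_mul] at this
    rw [hwi, hmi, ← hA, ← hD] at this
    linarith
  have herror : k * (1 + ℓ) * A ^ 2 ≤ k * (1 + ℓ) * (ℓ * D) := by gcongr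
  have habsorb : k * (ℓ + ℓ ^ 2) * D ≤ r₀ * D := by gcongr
  linarith

theorem IsConformalGeodesic.continuous {c c' p' : ℝ → E} (hc : IsConformalGeodesic R c c' p') :
    Continuous c :=
  continuous_iff_continuousAt.mpr fun s => (hc.hasDerivAt s).continuousAt

variable [CompleteSpace E] {c c' p' σ σ' : ℝ → E} {s₁ s₂ : ℝ}

theorem IsConformalGeodesic.sub_le_integral_energy (hc : IsConformalGeodesic R c c' p')
    (hR : HasC2Bound R K) (hr₀ : 0 < r₀) (hRr₀ : ∀ x, ‖x‖ = 1 → r₀ ≤ R x)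
    (hsmall : (3 * (K / r₀) + 2 * K + 1) * ((s₂ - s₁) + (s₂ - s₁) ^ 2) ≤ r₀)
    (hσ : ∀ τ, HasDerivAt σ (σ' τ) τ) (hσ' : Continuous σ') (hσ₁ : ∀ τ, ‖σ τ‖ = 1)
    (h₀ : σ 0 = c s₁) (h₁ : σ 1 = c s₂) {w : ℝ → ℝ} (hw : Continuous w) (hw0 : ∀ τ, 0 < w τ)
    (hwi : ∫ τ in (0 : ℝ)..1, w τ = s₂ - s₁) :
    s₂ - s₁ ≤ ∫ τ in (0 : ℝ)..1, R (σ τ) * ‖σ' τ‖ ^ 2 / w τ := by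
  set h : ℝ → ℝ := fun τ => s₁ + ∫ x in (0 : ℝ)..τ, w x with hh
  have hhd : ∀ τ, HasDerivAt h (w τ) τ := fun τ => (hw.integral_hasStrictDerivAt 0 τ).hasDerivAt
    |>.const_add s₁
  have hhc : Continuous h := continuous_iff_continuousAt.mpr fun τ => (hhd τ).continuousAt
  have hσc : Continuous σ := continuous_iff_continuousAt.mpr fun τ => (hσ τ).continuousAt
  set η' : ℝ → E := fun τ => σ' τ - w τ • c' (h τ)
  have hηd : ∀ τ, HasDerivAt (fun τ => σ τ - c (h τ)) (η' τ) τ := fun τ =>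
    (hσ τ).sub ((hc.hasDerivAt (h τ)).scomp τ (hhd τ))
  have hη'c : Continuous η' := hσ'.sub (hw.smul (hc.continuous_velocity.comp hhc))
  have hη0 : σ 0 - c (h 0) = 0 := by simp [hh, h₀]
  have hη1 : σ 1 - c (h 1) = 0 := by simp [hh, hwi, h₁]
  have hpd : ∀ τ, HasDerivAt (fun τ => R (c (h τ)) • c' (h τ)) (w τ • p' (h τ)) τ := fun τ =>
    (hc.hasDerivAt_momentum (h τ)).scomp τ (hhd τ)
  have hpc : Continuous fun τ => R (c (h τ)) • c' (h τ) :=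
    continuous_iff_continuousAt.mpr fun τ => (hpd τ).continuousAt
  have hp'c : Continuous fun τ => w τ • p' (h τ) := hw.smul (hc.continuous_force.comp hhc)
  set m : ℝ → ℝ := fun τ => ⟪R (c (h τ)) • c' (h τ), η' τ⟫ + ⟪w τ • p' (h τ), σ τ - c (h τ)⟫
  have hm0 : ∫ τ in (0 : ℝ)..1, m τ = 0 :=
    integral_inner_deriv_add_eq_zero hpd hp'c hηd hη'c
      (by rw [hη0, hη1, inner_zero_right, inner_zero_right])
  have hmc : Continuous m :=
    (hpc.inner hη'c).add (hp'c.inner (hσc.sub (hc.continuous.comp hhc)))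
  have hRc : Continuous R := hR.differentiable.continuous
  have hk : 0 ≤ 3 * (K / r₀) + 2 * K + 1 := by have := hR.nonneg; positivity
  refine le_integral_of_quadratic_lower_bound hk hw hη'c.norm hmc
    (((hRc.comp hσc).mul (hσ'.norm.pow 2)).div hw fun τ => (hw0 τ).ne') hw0 hwi hm0 hsmall
    fun τ hτ => ?_
  have henergy := energy_lower_bound (z := σ' τ) hR hr₀ (hw0 τ) (hc.norm_eq_one (h τ)) (hσ₁ τ)
    (hRr₀ _ (hc.norm_eq_one _)) (hRr₀ _ (hσ₁ _)) (hc.unit_speed _) (hc.euler_lagrange _)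
  have herror : (3 * (K / r₀) + 2 * K + 1) *
      (‖σ τ - c (h τ)‖ * ‖η' τ‖ + w τ * ‖σ τ - c (h τ)‖ ^ 2) ≤ (3 * (K / r₀) + 2 * K + 1) *
      ((∫ x in (0 : ℝ)..1, ‖η' x‖) * ‖η' τ‖ + w τ * (∫ x in (0 : ℝ)..1, ‖η' x‖) ^ 2) := by
    have := norm_le_integral_norm_of_hasDerivAt hηd hη'c hη0 hτ
    have := (hw0 τ).le
    gcongr
  linarith

theorem IsConformalGeodesic.sub_le_integral_sqrt_mul_norm (hc : IsConformalGeodesic R c c' p')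
    (hR : HasC2Bound R K) (hr₀ : 0 < r₀) (hRr₀ : ∀ x, ‖x‖ = 1 → r₀ ≤ R x)
    (hsmall : (3 * (K / r₀) + 2 * K + 1) * ((s₂ - s₁) + (s₂ - s₁) ^ 2) ≤ r₀)
    (hσ : ∀ τ, HasDerivAt σ (σ' τ) τ) (hσ' : Continuous σ') (hσ₁ : ∀ τ, ‖σ τ‖ = 1)
    (h₀ : σ 0 = c s₁) (h₁ : σ 1 = c s₂) :
    s₂ - s₁ ≤ ∫ τ in (0 : ℝ)..1, √(R (σ τ)) * ‖σ' τ‖ := by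
  have hσc : Continuous σ := continuous_iff_continuousAt.mpr fun τ => (hσ τ).continuousAt
  refine le_integral_of_forall_weight
    ((hR.differentiable.continuous.comp hσc).sqrt.mul hσ'.norm) (fun τ => by positivity)
    fun w hw hw0 hwi => ?_
  simp_rw [mul_pow, fun τ => Real.sq_sqrt (hr₀.le.trans (hRr₀ _ (hσ₁ τ)))]
  exact hc.sub_le_integral_energy hR hr₀ hRr₀ hsmall hσ hσ' hσ₁ h₀ h₁ hw hw0 hwi

end LocalMinimality

section SphereGeodesics

variable {Φ ρ : Sph → ℝ} {c : ℝ → Sph} {R : E3 → ℝ} {K : ℝ}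

theorem gspeed_confMetric (Φ : Sph → ℝ) (c : ℝ → Sph) (τ : ℝ) :
    gspeed (confMetric Φ) c τ = √(Φ (c τ)) * ‖cvel c τ‖ := by
  rw [gspeed, confMetric, real_inner_self_eq_norm_sq, Real.sqrt_mul' _ (sq_nonneg _),
    Real.sqrt_sq (norm_nonneg _)]

theorem gdist_confMetric_eq_of_forall_le_glength {s₁ s₂ : ℝ} (hc : IsC1Curve c)
    (hunit : ∀ τ, gspeed (confMetric Φ) c τ = 1) (hs : s₁ ≤ s₂)
    (hmin : ∀ σ : ℝ → Sph, IsC1Curve σ → σ 0 = c s₁ → σ 1 = c s₂ →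
      s₂ - s₁ ≤ glength (confMetric Φ) σ 0 1) :
    gdist (confMetric Φ) (c s₁) (c s₂) = s₂ - s₁ := by
  have hsegment : ∀ τ, gspeed (confMetric Φ) (fun τ => c (s₁ + τ * (s₂ - s₁))) τ = s₂ - s₁ := by
    intro τ
    have hreparam : HasDerivAt (fun τ => s₁ + τ * (s₂ - s₁)) (s₂ - s₁) τ := by
      simpa using ((hasDerivAt_id τ).mul_const (s₂ - s₁)).const_add s₁
    have hvel : cvel (fun τ => c (s₁ + τ * (s₂ - s₁))) τ =
        (s₂ - s₁) • cvel c (s₁ + τ * (s₂ - s₁)) :=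
      ((hc.differentiable (by simp) _).hasDerivAt.scomp τ hreparam).deriv
    have := hunit (s₁ + τ * (s₂ - s₁))
    rw [gspeed_confMetric] at this ⊢
    rw [hvel, norm_smul, Real.norm_of_nonneg (sub_nonneg.mpr hs)]
    linear_combination (s₂ - s₁) * this
  refine IsLeast.csInf_eq ⟨⟨fun τ => c (s₁ + τ * (s₂ - s₁)), hc.comp (by fun_prop), by simp,
    by simp, by simp [glength, hsegment]⟩, ?_⟩
  rintro _ ⟨σ, hσ, h₀, h₁, rfl⟩
  exact hmin σ hσ h₀ h₁

theorem IsConformalGeodesic.isGeodesic {c' p' : ℝ → E3} {r₀ : ℝ}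
    (hc : IsConformalGeodesic R (fun s => c s) c' p') (hR : HasC2Bound R K) (hr₀ : 0 < r₀)
    (hRr₀ : ∀ x, ‖x‖ = 1 → r₀ ≤ R x) (hΦ : ∀ x : Sph, R x = Φ x) :
    IsGeodesic (confMetric Φ) c := by
  have hvel : cvel c = c' := funext fun s => (hc.hasDerivAt s).deriv
  have hC1 : IsC1Curve c := contDiff_one_iff_deriv.mpr
    ⟨fun s => (hc.hasDerivAt s).differentiableAt, hc.continuous_velocity.congr fun s =>
      (congrFun hvel s).symm⟩
  have hunit : ∀ s, gspeed (confMetric Φ) c s = 1 := fun s => by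
    rw [gspeed_confMetric, hvel, ← Real.sqrt_sq (norm_nonneg (c' s)),
      ← Real.sqrt_mul' _ (sq_nonneg _), ← hΦ, hc.unit_speed, Real.sqrt_one]
  refine ⟨hC1, hunit, fun t => ?_⟩
  set k := 3 * (K / r₀) + 2 * K + 1
  have hk : 0 < k := by have := hR.nonneg; positivity
  refine ⟨min (1 / 2) (r₀ / (4 * k)), by positivity, fun s₁ s₂ h₁ h₁₂ h₂ => ?_⟩
  have hle_one : s₂ - s₁ ≤ 1 := by linarith [min_le_left (1 / 2) (r₀ / (4 * k))]
  have hle : k * (s₂ - s₁) ≤ r₀ / 2 := by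
    have : s₂ - s₁ ≤ 2 * (r₀ / (4 * k)) := by linarith [min_le_right (1 / 2) (r₀ / (4 * k))]
    calc k * (s₂ - s₁) ≤ k * (2 * (r₀ / (4 * k))) := by gcongr
      _ = r₀ / 2 := by field_simp; norm_num
  have hsmall : k * ((s₂ - s₁) + (s₂ - s₁) ^ 2) ≤ r₀ := by
    have : k * ((s₂ - s₁) * (s₂ - s₁)) ≤ k * ((s₂ - s₁) * 1) := by
      have := sub_nonneg.mpr h₁₂
      gcongr
    linarith
  refine gdist_confMetric_eq_of_forall_le_glength hC1 hunit h₁₂ fun σ hσ hσ₀ hσ₁ => ?_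
  obtain ⟨hσd, hσc⟩ := contDiff_one_iff_deriv.mp hσ
  calc s₂ - s₁ ≤ ∫ τ in (0 : ℝ)..1, √(R (σ τ)) * ‖cvel σ τ‖ :=
        hc.sub_le_integral_sqrt_mul_norm hR hr₀ hRr₀ hsmall (fun τ => (hσd τ).hasDerivAt) hσc
          (fun τ => norm_coe_sph _) (by rw [hσ₀]) (by rw [hσ₁])
    _ = glength (confMetric Φ) σ 0 1 := by simp_rw [glength, gspeed_confMetric, hΦ]

theorem IsClosedGeodesic.systole_le {g : Sph → E3 → E3 → ℝ} {L : ℝ}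
    (h : IsClosedGeodesic g c L) : systole g ≤ L :=
  csInf_le ⟨0, by rintro _ ⟨_, hc⟩; exact hc.1.le⟩ ⟨c, h⟩

theorem fderiv_cutoffExt_sq (hρ : SmoothSph ρ) (x : Sph) (v : E3) :
    fderiv ℝ (fun y => cutoffExt ρ y ^ 2) x v = 2 * ρ x * fderiv ℝ (radialExt ρ) x v := by
  have h : HasFDerivAt (cutoffExt ρ) (fderiv ℝ (radialExt ρ) x) x := by
    rw [← fderiv_cutoffExt]
    exact ((contDiff_cutoffExt hρ).differentiable (by simp) _).hasFDerivAt
  rw [(h.pow 2).fderiv]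
  simp [cutoffExt_coe]

theorem exists_pos_le_cutoffExt_sq (hρ : SmoothSph ρ) (hρ0 : ∀ x, 0 < ρ x) :
    ∃ r₀ > 0, ∀ x, ‖x‖ = 1 → r₀ ≤ cutoffExt ρ x ^ 2 := by
  obtain ⟨x, hx, hmin⟩ := (isCompact_sphere (0 : E3) 1).exists_isMinOn
    (NormedSpace.sphere_nonempty.mpr zero_le_one)
    ((contDiff_cutoffExt hρ).continuous.pow 2).continuousOn
  refine ⟨cutoffExt ρ x ^ 2, ?_, fun y hy => hmin (mem_sphere_zero_iff_norm.mpr hy)⟩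
  rw [show x = (⟨x, hx⟩ : Sph) from rfl, cutoffExt_coe]
  exact pow_pos (hρ0 _) 2

/-- The hypotheses are Hamilton's equations of the geodesic flow of `ρ² g₀`. -/
theorem systole_le_of_hamilton_eq (hρ : SmoothSph ρ) (hρ0 : ∀ x, 0 < ρ x) {p p' : ℝ → E3} {L : ℝ}
    (hc : ∀ s, HasDerivAt (fun s => (c s : E3)) ((ρ (c s) ^ 2)⁻¹ • p s) s)
    (hpρ : ∀ s, ‖p s‖ = ρ (c s)) (hp : ∀ s, HasDerivAt p (p' s) s) (hp'c : Continuous p')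
    (hp' : ∀ s v, ⟪p' s, v⟫ = (ρ (c s))⁻¹ * fderiv ℝ (radialExt ρ) (c s) v - ⟪(c s : E3), v⟫)
    (hL : 0 < L) (hper : Function.Periodic c L) :
    systole (confMetric fun x => ρ x ^ 2) ≤ L := by
  set R : E3 → ℝ := fun y => cutoffExt ρ y ^ 2 with hR
  have hRρ : ∀ x : Sph, R x = ρ x ^ 2 := fun x => by simp only [hR, cutoffExt_coe]
  obtain ⟨K, hK⟩ := exists_hasC2Bound (Q := R) ((contDiff_cutoffExt hρ).pow 2)
    ((hasCompactSupport_cutoffExt ρ).comp_left (g := (· ^ 2)) (by simp))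
  obtain ⟨r₀, hr₀, hRr₀⟩ := exists_pos_le_cutoffExt_sq hρ hρ0
  have hcc : Continuous fun s => (c s : E3) :=
    continuous_iff_continuousAt.mpr fun s => (hc s).continuousAt
  have hpc : Continuous p := continuous_iff_continuousAt.mpr fun s => (hp s).continuousAt
  have hρc : Continuous fun s => ρ (c s) := by
    simp_rw [← cutoffExt_coe ρ]
    exact (contDiff_cutoffExt hρ).continuous.comp hcc
  have hspeed : ∀ s, ‖(ρ (c s) ^ 2)⁻¹ • p s‖ = (ρ (c s))⁻¹ := fun s => by
    have := hρ0 (c s)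
    rw [norm_smul, hpρ, Real.norm_of_nonneg (by positivity)]
    field_simp
  have hmomentum : (fun s => R (c s) • (ρ (c s) ^ 2)⁻¹ • p s) = p := funext fun s => by
    rw [hRρ, smul_inv_smul₀ (pow_pos (hρ0 _) 2).ne']
  have hgeodesic : IsConformalGeodesic R (fun s => c s) (fun s => (ρ (c s) ^ 2)⁻¹ • p s) p' :=
    { hasDerivAt := hc
      continuous_velocity := ((hρc.pow 2).inv₀ fun s => (pow_pos (hρ0 _) 2).ne').smul hpc
      norm_eq_one := fun s => norm_coe_sph _
      unit_speed := fun s => by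
        rw [hspeed, hRρ, ← mul_pow, mul_inv_cancel₀ (hρ0 _).ne', one_pow]
      hasDerivAt_momentum := by rwa [hmomentum]
      continuous_force := hp'c
      euler_lagrange := fun s v => by
        have := (hρ0 (c s)).ne'
        rw [hp', hspeed, fderiv_cutoffExt_sq hρ]
        field_simp }
  exact IsClosedGeodesic.systole_le ⟨hL, hper, hgeodesic.isGeodesic hK hr₀ hRr₀ hRρ⟩

end SphereGeodesics

section PeriodAverage

open intervalIntegral

variable {V : Type*} [NormedAddCommGroup V] [NormedSpace ℝ V] {G G' : ℝ → V}

/-- The average of a `2π`-periodic function over a period. -/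
def periodAvg (G : ℝ → V) : V := (2 * π)⁻¹ • ∫ τ in (0 : ℝ)..2 * π, G τ

theorem two_pi_smul_periodAvg (G : ℝ → V) :
    (2 * π) • periodAvg G = ∫ τ in (0 : ℝ)..2 * π, G τ := by
  rw [periodAvg, smul_inv_smul₀ two_pi_pos.ne']

theorem norm_periodAvg_le {M : ℝ} (h : ∀ θ, ‖G θ‖ ≤ M) : ‖periodAvg G‖ ≤ M := by
  have hInt := norm_integral_le_of_norm_le_const (a := 0) (b := 2 * π) fun x _ => h x
  rw [sub_zero, abs_of_pos two_pi_pos] at hInt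
  rw [periodAvg, norm_smul, norm_inv, Real.norm_of_nonneg two_pi_pos.le,
    inv_mul_le_iff₀ two_pi_pos]
  linarith

theorem periodAvg_sub (hG : Continuous G) (hG' : Continuous G') :
    periodAvg (fun θ => G θ - G' θ) = periodAvg G - periodAvg G' := by
  rw [periodAvg, intervalIntegral.integral_sub (hG.intervalIntegrable _ _)
    (hG'.intervalIntegrable _ _), smul_sub, periodAvg, periodAvg]

variable [CompleteSpace V]

theorem integral_sub_periodAvg (hG : Continuous G) :
    ∫ τ in (0 : ℝ)..2 * π, (G τ - periodAvg G) = 0 := by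
  rw [intervalIntegral.integral_sub (hG.intervalIntegrable _ _) (by simp),
    intervalIntegral.integral_const, sub_zero, two_pi_smul_periodAvg, sub_self]

theorem norm_le_of_periodic_of_integral_eq_zero {w w' : ℝ → V} {M : ℝ}
    (hw : ∀ θ, HasDerivAt w (w' θ) θ) (hper : Function.Periodic w (2 * π))
    (hmean : ∫ τ in (0 : ℝ)..2 * π, w τ = 0) (hM : ∀ θ, ‖w' θ‖ ≤ M) (θ : ℝ) :
    ‖w θ‖ ≤ 2 * π * M := by
  have hc : Continuous w := continuous_iff_continuousAt.mpr fun τ => (hw τ).continuousAt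
  have hM0 : 0 ≤ M := (norm_nonneg _).trans (hM 0)
  obtain ⟨y, hy, hwy⟩ := hper.exists_mem_Ico₀ two_pi_pos θ
  have hosc : ∀ τ ∈ Set.uIoc 0 (2 * π), ‖w y - w τ‖ ≤ 2 * π * M := fun τ hτ => by
    rw [Set.uIoc_of_le two_pi_pos.le] at hτ
    have hyτ : |y - τ| ≤ 2 * π := abs_le.mpr ⟨by linarith [hy.1, hτ.2], by linarith [hy.2, hτ.1]⟩
    calc ‖w y - w τ‖ ≤ M * ‖y - τ‖ := convex_univ.norm_image_sub_le_of_norm_hasDerivWithin_le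
          (fun x _ => (hw x).hasDerivWithinAt) (fun x _ => hM x) (Set.mem_univ τ) (Set.mem_univ y)
      _ ≤ 2 * π * M := by rw [mul_comm]; gcongr; exact hyτ
  have hInt : (2 * π) • w y = ∫ τ in (0 : ℝ)..2 * π, (w y - w τ) := by
    rw [intervalIntegral.integral_sub (by simp) (hc.intervalIntegrable _ _), hmean]
    simp
  have := norm_integral_le_of_norm_le_const hosc
  rw [← hInt, norm_smul, Real.norm_of_nonneg two_pi_pos.le, sub_zero, abs_of_pos two_pi_pos,
    mul_comm] at this
  exact hwy ▸ le_of_mul_le_mul_right this two_pi_pos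

/-- The primitive of `G - periodAvg G` with average zero. -/
def meanZeroPrimitive (G : ℝ → V) (θ : ℝ) : V :=
  (∫ τ in (0 : ℝ)..θ, (G τ - periodAvg G)) -
    periodAvg fun θ => ∫ τ in (0 : ℝ)..θ, (G τ - periodAvg G)

theorem hasDerivAt_meanZeroPrimitive (hG : Continuous G) (θ : ℝ) :
    HasDerivAt (meanZeroPrimitive G) (G θ - periodAvg G) θ :=
  ((hG.sub continuous_const).integral_hasStrictDerivAt 0 θ).hasDerivAt.sub_const _

theorem periodic_meanZeroPrimitive (hG : Continuous G) (hper : Function.Periodic G (2 * π)) :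
    Function.Periodic (meanZeroPrimitive G) (2 * π) := fun θ => by
  have hc : Continuous fun τ => G τ - periodAvg G := hG.sub continuous_const
  have hper' : Function.Periodic (fun τ => G τ - periodAvg G) (2 * π) := fun x => by simp [hper x]
  rw [meanZeroPrimitive, meanZeroPrimitive, ← integral_add_adjacent_intervals (b := θ)
    (hc.intervalIntegrable _ _) (hc.intervalIntegrable _ _), hper'.intervalIntegral_add_eq θ 0,
    zero_add, integral_sub_periodAvg hG, add_zero]

theorem integral_meanZeroPrimitive (hG : Continuous G) :
    ∫ τ in (0 : ℝ)..2 * π, meanZeroPrimitive G τ = 0 :=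
  integral_sub_periodAvg <| continuous_primitive
    (fun _ _ => (hG.sub continuous_const).intervalIntegrable _ _) 0

end PeriodAverage

section MeanZeroLoop

open intervalIntegral

variable {V : Type*} [NormedAddCommGroup V] [InnerProductSpace ℝ V] {J : V →ₗᵢ[ℝ] V}
  {w w' G G' : ℝ → V}

/-- `w` is a `2π`-periodic curve of mean zero solving `w' = J (G - periodAvg G)`; in the
Lyapunov-Schmidt reduction `J` is the symplectic matrix and `G` a gradient along `ζ + w`. -/
structure IsMeanZeroLoop (J : V →ₗᵢ[ℝ] V) (w G : ℝ → V) : Prop where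
  periodic : Function.Periodic w (2 * π)
  integral_eq_zero : ∫ τ in (0 : ℝ)..2 * π, w τ = 0
  continuous_force : Continuous G
  hasDerivAt : ∀ θ, HasDerivAt w (J (G θ - periodAvg G)) θ

theorem IsMeanZeroLoop.continuous (h : IsMeanZeroLoop J w G) : Continuous w :=
  continuous_iff_continuousAt.mpr fun τ => (h.hasDerivAt τ).continuousAt

theorem isMeanZeroLoop_zero (J : V →ₗᵢ[ℝ] V) : IsMeanZeroLoop J (fun _ => 0) fun _ => 0 where
  periodic _ := rfl
  integral_eq_zero := by simp
  continuous_force := continuous_const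
  hasDerivAt θ := by simpa [periodAvg] using hasDerivAt_const θ (0 : V)

theorem IsMeanZeroLoop.sub (h' : IsMeanZeroLoop J w' G') (h : IsMeanZeroLoop J w G) :
    IsMeanZeroLoop J (fun θ => w' θ - w θ) fun θ => G' θ - G θ where
  periodic θ := by simp only [h.periodic θ, h'.periodic θ]
  integral_eq_zero := by
    rw [intervalIntegral.integral_sub (h'.continuous.intervalIntegrable _ _)
      (h.continuous.intervalIntegrable _ _), h.integral_eq_zero, h'.integral_eq_zero, sub_zero]
  continuous_force := h'.continuous_force.sub h.continuous_force
  hasDerivAt θ := by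
    rw [periodAvg_sub h'.continuous_force h.continuous_force, sub_sub_sub_comm, map_sub]
    exact (h'.hasDerivAt θ).sub (h.hasDerivAt θ)

theorem IsMeanZeroLoop.const_smul (h : IsMeanZeroLoop J w G) (r : ℝ) :
    IsMeanZeroLoop J (fun θ => r • w θ) fun θ => r • G θ where
  periodic θ := by simp only [h.periodic θ]
  integral_eq_zero := by rw [intervalIntegral.integral_smul, h.integral_eq_zero, smul_zero]
  continuous_force := h.continuous_force.const_smul r
  hasDerivAt θ := by
    have havg : periodAvg (fun θ => r • G θ) = r • periodAvg G := by
      rw [periodAvg, periodAvg, intervalIntegral.integral_smul, smul_comm]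
    rw [havg, ← smul_sub, map_smul]
    exact (h.hasDerivAt θ).const_smul r

theorem IsMeanZeroLoop.exists_norm_le (h : IsMeanZeroLoop J w G) : ∃ W, ∀ θ, ‖w θ‖ ≤ W :=
  let ⟨W, hW⟩ := (h.periodic.isBounded_of_continuous two_pi_pos.ne' h.continuous).exists_norm_le
  ⟨W, fun θ => hW _ ⟨θ, rfl⟩⟩

theorem integral_inner_const (v : V) (a b : ℝ) (hw : Continuous w) [CompleteSpace V] :
    ∫ θ in a..b, ⟪v, w θ⟫ = ⟪v, ∫ θ in a..b, w θ⟫ :=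
  (innerSL ℝ v).intervalIntegral_comp_comm (hw.intervalIntegrable _ _)

variable [CompleteSpace V]

theorem isMeanZeroLoop_meanZeroPrimitive (hG : Continuous G)
    (hper : Function.Periodic G (2 * π)) :
    IsMeanZeroLoop J (meanZeroPrimitive fun θ => J (G θ)) G where
  periodic := periodic_meanZeroPrimitive (J.continuous.comp hG) (hper.comp J)
  integral_eq_zero := integral_meanZeroPrimitive (J.continuous.comp hG)
  continuous_force := hG
  hasDerivAt θ := by
    have hJ : periodAvg (fun θ => J (G θ)) = J (periodAvg G) := by
      rw [periodAvg, periodAvg, map_smul]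
      exact congrArg _ (J.toContinuousLinearMap.intervalIntegral_comp_comm
        (hG.intervalIntegrable _ _))
    rw [map_sub, ← hJ]
    exact hasDerivAt_meanZeroPrimitive (J.continuous.comp hG) θ

theorem IsMeanZeroLoop.norm_le {M : ℝ} (h : IsMeanZeroLoop J w G) (hM : ∀ θ, ‖G θ‖ ≤ M) (θ : ℝ) :
    ‖w θ‖ ≤ 4 * π * M := by
  have hderiv : ∀ θ, ‖J (G θ - periodAvg G)‖ ≤ M + M := fun θ => by
    rw [J.norm_map]
    exact (norm_sub_le _ _).trans (add_le_add (hM θ) (norm_periodAvg_le hM))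
  linarith [norm_le_of_periodic_of_integral_eq_zero h.hasDerivAt h.periodic h.integral_eq_zero
    hderiv θ]

theorem IsMeanZeroLoop.integral_inner_sub_periodAvg (h : IsMeanZeroLoop J w G)
    (hG' : Continuous G') : ∫ θ in (0 : ℝ)..2 * π, ⟪G' θ - periodAvg G', w θ⟫ =
      ∫ θ in (0 : ℝ)..2 * π, ⟪G' θ, w θ⟫ := by
  simp_rw [inner_sub_left]
  rw [intervalIntegral.integral_sub ((hG'.inner h.continuous).intervalIntegrable _ _)
      ((continuous_const.inner h.continuous).intervalIntegrable _ _),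
    integral_inner_const _ _ _ h.continuous, h.integral_eq_zero, inner_zero_right, sub_zero]

theorem IsMeanZeroLoop.integral_inner_comm (hJ : ∀ u v, ⟪J u, v⟫ = -⟪u, J v⟫)
    (h : IsMeanZeroLoop J w G) (h' : IsMeanZeroLoop J w' G') :
    ∫ θ in (0 : ℝ)..2 * π, ⟪G' θ, w θ⟫ = ∫ θ in (0 : ℝ)..2 * π, ⟪G θ, w' θ⟫ := by
  have hc := h.continuous_force
  have hc' := h'.continuous_force
  have hw := h.continuous
  have hw' := h'.continuous
  have hJw : ∀ θ, HasDerivAt (fun θ => J (w θ)) (J (J (G θ - periodAvg G))) θ := fun θ =>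
    J.toContinuousLinearMap.hasFDerivAt.comp_hasDerivAt θ (h.hasDerivAt θ)
  have hboundary : ⟪w' 0, J (w 0)⟫ = ⟪w' (2 * π), J (w (2 * π))⟫ := by
    simp [← h.periodic 0, ← h'.periodic 0]
  have hparts := integral_inner_deriv_add_eq_zero h'.hasDerivAt
    (J.continuous.comp (hc'.sub continuous_const)) hJw
    (J.continuous.comp (J.continuous.comp (hc.sub continuous_const))) hboundary
  have hintegrand : ∀ θ, ⟪w' θ, J (J (G θ - periodAvg G))⟫ + ⟪J (G' θ - periodAvg G'), J (w θ)⟫ =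
      ⟪G' θ - periodAvg G', w θ⟫ - ⟪G θ - periodAvg G, w' θ⟫ := fun θ => by
    have := hJ (w' θ) (J (G θ - periodAvg G))
    rw [J.inner_map_map] at this ⊢
    rw [real_inner_comm (w' θ) (G θ - periodAvg G)]
    linarith
  simp_rw [hintegrand] at hparts
  rw [intervalIntegral.integral_sub (by apply Continuous.intervalIntegrable; fun_prop)
      (by apply Continuous.intervalIntegrable; fun_prop),
    h.integral_inner_sub_periodAvg hc', h'.integral_inner_sub_periodAvg hc] at hparts
  linarith

end MeanZeroLoop

section LyapunovSchmidt

open intervalIntegral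

variable {V : Type*} [NormedAddCommGroup V] [InnerProductSpace ℝ V]
  {J : V →ₗᵢ[ℝ] V} {K : ℝ → V → ℝ} {g : ℝ → V → V} {κ M : ℝ}

/-- `K` is a time-dependent Hamiltonian with `2π`-periodic gradient `g` that is bounded by `M` and
Lipschitz in space with a small constant `κ`. -/
structure IsSmallHamiltonian (K : ℝ → V → ℝ) (g : ℝ → V → V) (κ M : ℝ) : Prop where
  continuous_hamiltonian : Continuous fun x : ℝ × V => K x.1 x.2
  continuous_gradient : Continuous fun x : ℝ × V => g x.1 x.2
  periodic : Function.Periodic g (2 * π)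
  norm_gradient_sub_le : ∀ θ x y, ‖g θ x - g θ y‖ ≤ κ * ‖x - y‖
  abs_taylor_le : ∀ θ x y, |K θ y - K θ x - ⟪g θ x, y - x⟫| ≤ κ * ‖y - x‖ ^ 2
  norm_gradient_le : ∀ θ x, ‖g θ x‖ ≤ M
  nonneg : 0 ≤ κ
  le_small : κ ≤ 1 / 100

theorem IsSmallHamiltonian.continuous_hamiltonian_comp (H : IsSmallHamiltonian K g κ M) (ζ : V)
    {w : ℝ → V} (hw : Continuous w) : Continuous fun θ => K θ (ζ + w θ) :=
  H.continuous_hamiltonian.comp (continuous_id.prodMk (continuous_const.add hw))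

theorem IsSmallHamiltonian.continuous_gradient_comp (H : IsSmallHamiltonian K g κ M) (ζ : V)
    {w : ℝ → V} (hw : Continuous w) : Continuous fun θ => g θ (ζ + w θ) :=
  H.continuous_gradient.comp (continuous_id.prodMk (continuous_const.add hw))

theorem IsSmallHamiltonian.norm_gradient_add_sub_le (H : IsSmallHamiltonian K g κ M) (θ : ℝ)
    (ζ x y : V) : ‖g θ (ζ + x) - g θ (ζ + y)‖ ≤ κ * ‖x - y‖ := by
  simpa only [add_sub_add_left_eq_sub] using H.norm_gradient_sub_le θ (ζ + x) (ζ + y)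

theorem IsSmallHamiltonian.norm_sub_gradient_add_le (H : IsSmallHamiltonian K g κ M) (θ : ℝ)
    (ζ v G : V) : ‖G - g θ (ζ + v)‖ ≤ ‖G - g θ ζ‖ + κ * ‖v‖ := by
  have hLip : ‖g θ ζ - g θ (ζ + v)‖ ≤ κ * ‖v‖ := by
    simpa using H.norm_gradient_add_sub_le θ ζ 0 v
  linarith [norm_sub_le_norm_sub_add_norm_sub G (g θ ζ) (g θ (ζ + v))]

theorem IsSmallHamiltonian.half_inner_sub_hamiltonian_le (H : IsSmallHamiltonian K g κ M) (θ : ℝ)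
    (ζ v G : V) :
    1 / 2 * ⟪G, v⟫ - K θ (ζ + v) ≤
      -K θ ζ - 1 / 2 * ⟪G, v⟫ + ‖G - g θ ζ‖ * ‖v‖ + κ * ‖v‖ ^ 2 := by
  have htaylor := (abs_le.mp (H.abs_taylor_le θ ζ (ζ + v))).1
  have hdefect := real_inner_le_norm (G - g θ ζ) v
  rw [inner_sub_left] at hdefect
  rw [add_sub_cancel_left] at htaylor
  linarith

theorem IsSmallHamiltonian.four_pi_mul_le_half (H : IsSmallHamiltonian K g κ M) :
    4 * π * κ ≤ 1 / 2 := by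
  nlinarith [pi_lt_four, H.nonneg, H.le_small]

open scoped BoundedContinuousFunction in
theorem IsSmallHamiltonian.exists_isMeanZeroLoop [CompleteSpace V]
    (H : IsSmallHamiltonian K g κ M) (J : V →ₗᵢ[ℝ] V) (ζ : V) :
    ∃ w : ℝ → V, IsMeanZeroLoop J w fun θ => g θ (ζ + w θ) := by
  let X := {w : ℝ →ᵇ V // Function.Periodic w (2 * π)}
  have hclosed : IsClosed {w : ℝ →ᵇ V | Function.Periodic w (2 * π)} := by
    simp only [Function.Periodic, Set.ofPred_forall]
    exact isClosed_iInter fun θ => isClosed_eq (continuous_eval_const _) (continuous_eval_const _)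
  have : CompleteSpace X := hclosed.completeSpace_coe
  have : Nonempty X := ⟨⟨0, fun _ => rfl⟩⟩
  have hloop (w : X) : IsMeanZeroLoop J (meanZeroPrimitive fun θ => J (g θ (ζ + w.1 θ)))
      fun θ => g θ (ζ + w.1 θ) :=
    isMeanZeroLoop_meanZeroPrimitive (H.continuous_gradient_comp ζ w.1.continuous)
      fun θ => by simp only [H.periodic θ, w.2 θ]
  let T : X → X := fun w => ⟨BoundedContinuousFunction.ofNormedAddCommGroup _
    (hloop w).continuous _ ((hloop w).norm_le fun θ => H.norm_gradient_le _ _), (hloop w).periodic⟩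
  have hT : ContractingWith (1 / 2) T := by
    refine ⟨by rw [← NNReal.coe_lt_coe]; norm_num, LipschitzWith.of_dist_le_mul fun w w' => ?_⟩
    refine (BoundedContinuousFunction.dist_le (by positivity)).mpr fun θ => ?_
    have hforce : ∀ τ, ‖g τ (ζ + w.1 τ) - g τ (ζ + w'.1 τ)‖ ≤ κ * dist w.1 w'.1 := fun τ =>
      (H.norm_gradient_add_sub_le τ ζ _ _).trans <| mul_le_mul_of_nonneg_left
        (dist_eq_norm (w.1 τ) (w'.1 τ) ▸ BoundedContinuousFunction.dist_coe_le_dist τ) H.nonneg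
    rw [dist_eq_norm]
    calc ‖(T w).1 θ - (T w').1 θ‖ ≤ 4 * π * (κ * dist w.1 w'.1) :=
          ((hloop w).sub (hloop w')).norm_le hforce θ
      _ = 4 * π * κ * dist w.1 w'.1 := by ring
      _ ≤ 1 / 2 * dist w.1 w'.1 := by gcongr; exact H.four_pi_mul_le_half
      _ = _ := by simp; rfl
  refine ⟨(hT.fixedPoint T).1, ?_⟩
  have hfix : meanZeroPrimitive (fun θ => J (g θ (ζ + (hT.fixedPoint T).1 θ))) =
      (hT.fixedPoint T).1 :=
    congrArg (fun w : X => (w.1 : ℝ → V)) hT.fixedPoint_isFixedPt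
  have := hloop (hT.fixedPoint T)
  rwa [hfix] at this

/-- The action `∫ ½ ⟪G, w⟫ - K(ζ + w)` of the loop `ζ + w`, where `w` solves
`w' = J (G - periodAvg G)`. -/
def reducedAction (K : ℝ → V → ℝ) (ζ : V) (w G : ℝ → V) : ℝ :=
  ∫ θ in (0 : ℝ)..2 * π, (1 / 2 * ⟪G θ, w θ⟫ - K θ (ζ + w θ))

theorem reducedAction_zero (K : ℝ → V → ℝ) (ζ : V) :
    reducedAction K ζ (fun _ => 0) (fun _ => 0) = -∫ θ in (0 : ℝ)..2 * π, K θ ζ := by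
  simp [reducedAction]

variable [CompleteSpace V] {ζ h : V} {w w' G' : ℝ → V} {e : ℝ}

theorem IsSmallHamiltonian.norm_loop_sub_le (H : IsSmallHamiltonian K g κ M)
    (hw : IsMeanZeroLoop J w fun θ => g θ (ζ + w θ)) (hw' : IsMeanZeroLoop J w' G')
    (he : ∀ θ, ‖G' θ - g θ (ζ + w' θ)‖ ≤ e) (θ : ℝ) : ‖w' θ - w θ‖ ≤ 26 * e := by
  have hdiff := hw'.sub hw
  obtain ⟨x, -, hmax⟩ := (isCompact_Icc (a := (0 : ℝ)) (b := 2 * π)).exists_isMaxOn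
    ⟨0, le_rfl, two_pi_pos.le⟩ hdiff.continuous.norm.continuousOn
  set Δ := ‖w' x - w x‖
  have hΔ : ∀ θ, ‖w' θ - w θ‖ ≤ Δ := fun θ => by
    obtain ⟨y, hy, hwy⟩ := hdiff.periodic.exists_mem_Ico₀ two_pi_pos θ
    exact hwy ▸ hmax ⟨hy.1, hy.2.le⟩
  have hforce : ∀ τ, ‖G' τ - g τ (ζ + w τ)‖ ≤ e + κ * Δ := fun τ =>
    (norm_sub_le_norm_sub_add_norm_sub _ (g τ (ζ + w' τ)) _).trans <| add_le_add (he τ) <|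
      (H.norm_gradient_add_sub_le τ ζ _ _).trans (mul_le_mul_of_nonneg_left (hΔ τ) H.nonneg)
  have hself : Δ ≤ 4 * π * (e + κ * Δ) := hdiff.norm_le hforce x
  have hsmall : 4 * π * κ * Δ ≤ 1 / 2 * Δ := by gcongr; exact H.four_pi_mul_le_half
  have he0 : 0 ≤ e := (norm_nonneg _).trans (he 0)
  refine (hΔ θ).trans ?_
  nlinarith [pi_lt_d2]

theorem IsSmallHamiltonian.reducedAction_sub_eq (H : IsSmallHamiltonian K g κ M)
    (hJ : ∀ u v, ⟪J u, v⟫ = -⟪u, J v⟫)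
    (hw : IsMeanZeroLoop J w fun θ => g θ (ζ + w θ)) (hw' : IsMeanZeroLoop J w' G') (h : V) :
    reducedAction K (ζ + h) w' G' - reducedAction K ζ w (fun θ => g θ (ζ + w θ)) +
        2 * π * ⟪periodAvg fun θ => g θ (ζ + w θ), h⟫ =
      ∫ θ in (0 : ℝ)..2 * π, (1 / 2 * ⟪G' θ - g θ (ζ + w θ), w' θ - w θ⟫ -
        (K θ (ζ + h + w' θ) - K θ (ζ + w θ) - ⟪g θ (ζ + w θ), h + (w' θ - w θ)⟫)) := by
  set G := fun θ => g θ (ζ + w θ)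
  have hGc : Continuous G := hw.continuous_force
  have hG'c := hw'.continuous_force
  have hwc := hw.continuous
  have hw'c := hw'.continuous
  have hInt {φ : ℝ → ℝ} (hφ : Continuous φ) : IntervalIntegrable φ volume 0 (2 * π) :=
    hφ.intervalIntegrable _ _
  have ha : IntervalIntegrable (fun θ => 1 / 2 * ⟪G θ, w θ⟫ - K θ (ζ + w θ)) volume 0 (2 * π) :=
    hInt (.sub (by fun_prop) (H.continuous_hamiltonian_comp ζ hwc))
  have ha' : IntervalIntegrable (fun θ => 1 / 2 * ⟪G' θ, w' θ⟫ - K θ (ζ + h + w' θ)) volume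
      0 (2 * π) :=
    hInt (.sub (by fun_prop) (H.continuous_hamiltonian_comp (ζ + h) hw'c))
  have havg : 2 * π * ⟪periodAvg G, h⟫ = ∫ θ in (0 : ℝ)..2 * π, ⟪G θ, h⟫ := by
    simp_rw [real_inner_comm h]
    rw [integral_inner_const _ _ _ hGc, ← two_pi_smul_periodAvg, inner_smul_right]
  have hexpand : ∀ θ, 1 / 2 * ⟪G' θ - G θ, w' θ - w θ⟫ -
      (K θ (ζ + h + w' θ) - K θ (ζ + w θ) - ⟪G θ, h + (w' θ - w θ)⟫) =
      1 / 2 * ⟪G' θ, w' θ⟫ - K θ (ζ + h + w' θ) - (1 / 2 * ⟪G θ, w θ⟫ - K θ (ζ + w θ)) + ⟪G θ, h⟫ +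
        1 / 2 * (⟪G θ, w' θ⟫ - ⟪G' θ, w θ⟫) := fun θ => by
    simp only [inner_sub_left, inner_sub_right, inner_add_right]
    ring
  have hantisymm : ∫ θ in (0 : ℝ)..2 * π, (⟪G θ, w' θ⟫ - ⟪G' θ, w θ⟫) = 0 := by
    rw [intervalIntegral.integral_sub (hInt (by fun_prop)) (hInt (by fun_prop)), sub_eq_zero]
    exact (hw.integral_inner_comm hJ hw').symm
  rw [intervalIntegral.integral_congr fun θ _ => hexpand θ,
    intervalIntegral.integral_add ((ha'.sub ha).add (hInt (by fun_prop))) (hInt (by fun_prop)),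
    intervalIntegral.integral_add (ha'.sub ha) (hInt (by fun_prop)),
    intervalIntegral.integral_sub (f := fun θ => _ - _) ha' ha,
    intervalIntegral.integral_const_mul, hantisymm, havg, mul_zero, add_zero]
  rfl

theorem IsSmallHamiltonian.abs_reducedAction_sub_le (H : IsSmallHamiltonian K g κ M)
    (hJ : ∀ u v, ⟪J u, v⟫ = -⟪u, J v⟫)
    (hw : IsMeanZeroLoop J w fun θ => g θ (ζ + w θ)) (hw' : IsMeanZeroLoop J w' G')
    (he : ∀ θ, ‖G' θ - g θ (ζ + w' θ)‖ ≤ e) (h : V) :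
    |reducedAction K (ζ + h) w' G' - reducedAction K ζ w (fun θ => g θ (ζ + w θ)) +
      2 * π * ⟪periodAvg fun θ => g θ (ζ + w θ), h⟫| ≤ 300 * e ^ 2 + ‖h‖ ^ 2 := by
  have hΔ := H.norm_loop_sub_le hw hw' he
  have he0 : 0 ≤ e := (norm_nonneg _).trans (he 0)
  have hκ0 := H.nonneg
  have hκ1 := H.le_small
  have hforce : ∀ θ, ‖G' θ - g θ (ζ + w θ)‖ ≤ 2 * e := fun θ => calc
    ‖G' θ - g θ (ζ + w θ)‖ ≤ e + κ * (26 * e) :=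
      (norm_sub_le_norm_sub_add_norm_sub _ (g θ (ζ + w' θ)) _).trans <| add_le_add (he θ) <|
        (H.norm_gradient_add_sub_le θ ζ _ _).trans (mul_le_mul_of_nonneg_left (hΔ θ) hκ0)
    _ ≤ 2 * e := by nlinarith
  have hbound : ∀ θ, ‖1 / 2 * ⟪G' θ - g θ (ζ + w θ), w' θ - w θ⟫ -
      (K θ (ζ + h + w' θ) - K θ (ζ + w θ) - ⟪g θ (ζ + w θ), h + (w' θ - w θ)⟫)‖ ≤
      1 / 2 * (2 * e * (26 * e)) + κ * (‖h‖ + 26 * e) ^ 2 := fun θ => by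
    refine (norm_sub_le _ _).trans (add_le_add ?_ ?_)
    · rw [norm_mul, Real.norm_of_nonneg (by norm_num : (0 : ℝ) ≤ 1 / 2)]
      gcongr
      exact (abs_real_inner_le_norm _ _).trans
        (mul_le_mul (hforce θ) (hΔ θ) (norm_nonneg _) (by positivity))
    · have hdiff : h + (w' θ - w θ) = ζ + h + w' θ - (ζ + w θ) := by abel
      refine (hdiff ▸ H.abs_taylor_le θ (ζ + w θ) (ζ + h + w' θ)).trans ?_
      gcongr
      exact (norm_add_le _ _).trans (add_le_add le_rfl (hΔ θ))
  have hconst : 1 / 2 * (2 * e * (26 * e)) + κ * (‖h‖ + 26 * e) ^ 2 ≤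
      40 * e ^ 2 + 1 / 10 * ‖h‖ ^ 2 := by
    have : κ * (‖h‖ + 26 * e) ^ 2 ≤ 1 / 100 * (‖h‖ + 26 * e) ^ 2 := by gcongr
    nlinarith [sq_nonneg (‖h‖ - 26 * e)]
  rw [H.reducedAction_sub_eq hJ hw hw', ← Real.norm_eq_abs]
  calc _ ≤ (1 / 2 * (2 * e * (26 * e)) + κ * (‖h‖ + 26 * e) ^ 2) * |2 * π - 0| :=
        norm_integral_le_of_norm_le_const fun θ _ => hbound θ
    _ ≤ (40 * e ^ 2 + 1 / 10 * ‖h‖ ^ 2) * 6.3 := by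
        rw [sub_zero, abs_of_pos two_pi_pos]
        gcongr
        linarith [pi_lt_d2]
    _ ≤ 300 * e ^ 2 + ‖h‖ ^ 2 := by nlinarith [sq_nonneg e, sq_nonneg ‖h‖]

theorem hasFDerivAt_of_norm_sub_le_sq {E F : Type*} [NormedAddCommGroup E] [NormedSpace ℝ E]
    [NormedAddCommGroup F] [NormedSpace ℝ F] {Ψ : E → F} {L : E →L[ℝ] F} {x : E} {C : ℝ}
    (hΨ : ∀ h, ‖Ψ (x + h) - Ψ x - L h‖ ≤ C * ‖h‖ ^ 2) : HasFDerivAt Ψ L x := by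
  refine hasFDerivAt_iff_isLittleO_nhds_zero.mpr ?_
  refine Asymptotics.IsBigO.trans_isLittleO ?_ (Asymptotics.isLittleO_norm_pow_id one_lt_two)
  exact .of_bound C (Filter.Eventually.of_forall fun h => by simpa using hΨ h)

theorem IsSmallHamiltonian.hasFDerivAt_reducedAction (H : IsSmallHamiltonian K g κ M)
    (hJ : ∀ u v, ⟪J u, v⟫ = -⟪u, J v⟫) {w : V → ℝ → V}
    (hw : ∀ ζ, IsMeanZeroLoop J (w ζ) fun θ => g θ (ζ + w ζ θ)) (ζ : V) :
    HasFDerivAt (fun ζ => reducedAction K ζ (w ζ) fun θ => g θ (ζ + w ζ θ))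
      (-innerSL ℝ ((2 * π) • periodAvg fun θ => g θ (ζ + w ζ θ))) ζ := by
  refine hasFDerivAt_of_norm_sub_le_sq (C := 2) fun h => ?_
  have hforce : ∀ θ, ‖g θ (ζ + h + w (ζ + h) θ) - g θ (ζ + w (ζ + h) θ)‖ ≤ κ * ‖h‖ := fun θ => by
    refine (H.norm_gradient_sub_le _ _ _).trans (le_of_eq ?_)
    rw [add_sub_add_right_eq_sub, add_sub_cancel_left]
  have hκ : (κ * ‖h‖) ^ 2 ≤ (1 / 100 * ‖h‖) ^ 2 := by
    have := H.nonneg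
    gcongr
    exact H.le_small
  have hle := H.abs_reducedAction_sub_le hJ (hw ζ) (hw (ζ + h)) hforce h
  simp only [FunLike.coe_neg, Pi.neg_apply, innerSL_apply_apply, real_inner_smul_left,
    sub_neg_eq_add, Real.norm_eq_abs]
  exact hle.trans (by nlinarith [sq_nonneg ‖h‖])

theorem exists_isLocalMin_of_pos_on_spheres {E : Type*} [NormedAddCommGroup E] [ProperSpace E]
    {Ψ : E → ℝ} (hΨ : Continuous Ψ) {a b : ℝ}
    (hpos : ∀ x, ‖x‖ = a ∨ ‖x‖ = b → 0 < Ψ x) {x₀ : E} (ha : a ≤ ‖x₀‖) (hb : ‖x₀‖ ≤ b)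
    (hx₀ : Ψ x₀ ≤ 0) : ∃ x, a < ‖x‖ ∧ ‖x‖ < b ∧ IsLocalMin Ψ x ∧ Ψ x ≤ 0 := by
  have hcompact : IsCompact {x : E | a ≤ ‖x‖ ∧ ‖x‖ ≤ b} :=
    (isCompact_closedBall (0 : E) b).of_isClosed_subset
      ((isClosed_le continuous_const continuous_norm).inter
        (isClosed_le continuous_norm continuous_const)) fun x hx => by simpa using hx.2
  obtain ⟨x, hx, hmin⟩ := hcompact.exists_isMinOn ⟨x₀, ha, hb⟩ hΨ.continuousOn
  have hle : Ψ x ≤ 0 := (hmin ⟨ha, hb⟩).trans hx₀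
  have ha' : a < ‖x‖ := hx.1.lt_of_ne fun h => (hpos x (.inl h.symm)).not_ge hle
  have hb' : ‖x‖ < b := hx.2.lt_of_ne fun h => (hpos x (.inr h)).not_ge hle
  refine ⟨x, ha', hb', ?_, hle⟩
  filter_upwards [continuousAt_const.eventually_lt continuous_norm.continuousAt ha',
    continuous_norm.continuousAt.eventually_lt continuousAt_const hb'] with y hya hyb
  exact hmin ⟨hya.le, hyb.le⟩

/-- Lyapunov-Schmidt reduction: minimising the reduced action over an annulus makes the average of
the gradient vanish, so that the reduced equation becomes the full one. -/
theorem IsSmallHamiltonian.exists_periodic_solution [FiniteDimensional ℝ V]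
    (H : IsSmallHamiltonian K g κ M) (hJ : ∀ u v, ⟪J u, v⟫ = -⟪u, J v⟫)
    (hboundary : ∀ ζ, ‖ζ‖ = 3 / 4 ∨ ‖ζ‖ = 5 / 4 →
      300 * M ^ 2 < -∫ θ in (0 : ℝ)..2 * π, K θ ζ)
    {ζ₁ : V} (hζ₁ : ‖ζ₁‖ = 1) (hw' : IsMeanZeroLoop J w' G')
    (he : ∀ θ, ‖G' θ - g θ (ζ₁ + w' θ)‖ ≤ e)
    (hneg : reducedAction K ζ₁ w' G' + 300 * e ^ 2 ≤ 0) :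
    ∃ (ζ : V) (w : ℝ → V), 3 / 4 < ‖ζ‖ ∧ ‖ζ‖ < 5 / 4 ∧ Function.Periodic w (2 * π) ∧
      (∀ θ, HasDerivAt w (J (g θ (ζ + w θ))) θ) ∧ (∀ θ, ‖w θ‖ ≤ 26 * M) ∧
      reducedAction K ζ w (fun θ => g θ (ζ + w θ)) ≤ 0 := by
  choose w hw using H.exists_isMeanZeroLoop J
  set Ψ : V → ℝ := fun ζ => reducedAction K ζ (w ζ) fun θ => g θ (ζ + w ζ θ)
  have hΨ := H.hasFDerivAt_reducedAction hJ hw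
  have hcompare : ∀ {ζ w' G' e}, IsMeanZeroLoop J w' G' → (∀ θ, ‖G' θ - g θ (ζ + w' θ)‖ ≤ e) →
      |reducedAction K ζ w' G' - Ψ ζ| ≤ 300 * e ^ 2 := fun hw' he => by
    simpa using H.abs_reducedAction_sub_le hJ (hw _) hw' he 0
  have hzero : ∀ ζ θ, ‖(0 : V) - g θ (ζ + 0)‖ ≤ M := fun ζ θ => by
    simpa using H.norm_gradient_le θ ζ
  have hpos : ∀ ζ, ‖ζ‖ = 3 / 4 ∨ ‖ζ‖ = 5 / 4 → 0 < Ψ ζ := fun ζ hζ => by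
    have := abs_le.mp (hcompare (isMeanZeroLoop_zero J) (hzero ζ))
    rw [reducedAction_zero] at this
    linarith [hboundary ζ hζ]
  have hΨ₁ : Ψ ζ₁ ≤ 0 := by linarith [abs_le.mp (hcompare hw' he)]
  obtain ⟨ζ, hlt, hgt, hmin, hle⟩ := exists_isLocalMin_of_pos_on_spheres
    (continuous_iff_continuousAt.mpr fun ζ => (hΨ ζ).continuousAt) hpos (by rw [hζ₁]; norm_num)
    (by rw [hζ₁]; norm_num) hΨ₁
  have havg : periodAvg (fun θ => g θ (ζ + w ζ θ)) = 0 := by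
    have := congrArg norm (hmin.hasFDerivAt_eq_zero (hΨ ζ))
    rw [norm_neg, innerSL_apply_norm, norm_zero, norm_eq_zero] at this
    exact (smul_eq_zero.mp this).resolve_left two_pi_pos.ne'
  refine ⟨ζ, w ζ, hlt, hgt, (hw ζ).periodic, fun θ => ?_, fun θ => ?_, hle⟩
  · simpa only [havg, sub_zero] using (hw ζ).hasDerivAt θ
  · simpa using H.norm_loop_sub_le (hw ζ) (isMeanZeroLoop_zero J) (hzero ζ) θ

end LyapunovSchmidt

section Quaternions

open Quaternion
open scoped ContDiff

theorem inner_E3_eq (x y : E3) : ⟪x, y⟫ = x 0 * y 0 + x 1 * y 1 + x 2 * y 2 := by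
  simp [PiLp.inner_apply, Fin.sum_univ_three, mul_comm]

theorem norm_sq_E3_eq (x : E3) : ‖x‖ ^ 2 = x 0 ^ 2 + x 1 ^ 2 + x 2 ^ 2 := by
  rw [← real_inner_self_eq_norm_sq, inner_E3_eq]
  ring

theorem inner_quaternion_eq (x y : ℍ[ℝ]) :
    ⟪x, y⟫ = x.re * y.re + x.imI * y.imI + x.imJ * y.imJ + x.imK * y.imK := by
  simp [Quaternion.inner_def]

theorem norm_sq_quaternion_eq (x : ℍ[ℝ]) :
    ‖x‖ ^ 2 = x.re ^ 2 + x.imI ^ 2 + x.imJ ^ 2 + x.imK ^ 2 := by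
  rw [← real_inner_self_eq_norm_sq, inner_quaternion_eq]
  ring

/-- The quaternion unit `i`. -/
@[simps]
def unitI : ℍ[ℝ] := ⟨0, 1, 0, 0⟩

/-- The quaternion unit `j`. -/
@[simps]
def unitJ : ℍ[ℝ] := ⟨0, 0, 1, 0⟩

/-- The quaternion unit `k`. -/
@[simps]
def unitK : ℍ[ℝ] := ⟨0, 0, 0, 1⟩

@[simp]
theorem norm_unitI : ‖unitI‖ = 1 := by
  rw [← sq_eq_sq₀ (norm_nonneg _) zero_le_one, norm_sq_quaternion_eq]
  simp

@[simp]
theorem norm_unitJ : ‖unitJ‖ = 1 := by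
  rw [← sq_eq_sq₀ (norm_nonneg _) zero_le_one, norm_sq_quaternion_eq]
  simp

@[simp]
theorem norm_unitK : ‖unitK‖ = 1 := by
  rw [← sq_eq_sq₀ (norm_nonneg _) zero_le_one, norm_sq_quaternion_eq]
  simp

/-- The imaginary part of a quaternion, as a vector of `ℝ³`. -/
def imVec : ℍ[ℝ] →L[ℝ] E3 := LinearMap.toContinuousLinearMap
  { toFun := fun q => !₂[q.imI, q.imJ, q.imK]
    map_add' := fun p q => by ext i; fin_cases i <;> simp
    map_smul' := fun r q => by ext i; fin_cases i <;> simp }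

theorem imVec_apply (q : ℍ[ℝ]) : imVec q = !₂[q.imI, q.imJ, q.imK] := rfl

/-- The imaginary quaternion with a given vector part. -/
@[simps]
def imQuat (x : E3) : ℍ[ℝ] := ⟨0, x 0, x 1, x 2⟩

theorem imVec_imQuat (x : E3) : imVec (imQuat x) = x := by
  ext i
  fin_cases i <;> simp [imVec_apply]

theorem imQuat_imVec {q : ℍ[ℝ]} (hq : q.re = 0) : imQuat (imVec q) = q := by
  ext <;> simp [imVec_apply, hq]

theorem norm_imVec {q : ℍ[ℝ]} (hq : q.re = 0) : ‖imVec q‖ = ‖q‖ := by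
  rw [← sq_eq_sq₀ (norm_nonneg _) (norm_nonneg _), norm_sq_E3_eq, norm_sq_quaternion_eq]
  simp [imVec_apply, hq]

theorem norm_imQuat (x : E3) : ‖imQuat x‖ = ‖x‖ := by
  rw [← norm_imVec (re_imQuat x), imVec_imQuat]

/-- The vector `z u z̄`, for an imaginary quaternion `u`; for a unit quaternion `z` it is the image
of `u` under the rotation that `z` represents. For `u = i` this is the Kustaanheimo-Stiefel map
`ℝ⁴ → ℝ³`. -/
def conjVec (u z : ℍ[ℝ]) : E3 := imVec (z * u * star z)

/-- The derivative `z u v̄ + v u z̄` of `conjVec u` at `z` in the direction `v`. -/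
def conjVecPolar (u z v : ℍ[ℝ]) : E3 := imVec (z * u * star v + v * u * star z)

variable {u : ℍ[ℝ]}

theorem conjVec_add (u u' z : ℍ[ℝ]) : conjVec (u + u') z = conjVec u z + conjVec u' z := by
  simp only [conjVec, mul_add, add_mul, map_add]

theorem conjVec_smul (r : ℝ) (u z : ℍ[ℝ]) : conjVec (r • u) z = r • conjVec u z := by
  simp only [conjVec, mul_smul_comm, smul_mul_assoc, map_smul]

theorem conjVec_smul_right (u z : ℍ[ℝ]) (r : ℝ) : conjVec u (r • z) = r ^ 2 • conjVec u z := by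
  simp only [conjVec, Quaternion.star_smul, smul_mul_assoc, mul_smul_comm, smul_smul, map_smul,
    pow_two]

theorem conjVec_neg_right (u z : ℍ[ℝ]) : conjVec u (-z) = conjVec u z := by
  simp [conjVec]

theorem conjVec_mul (u z w : ℍ[ℝ]) : conjVec u (z * w) = conjVec (w * u * star w) z := by
  simp only [conjVec, star_mul, mul_assoc]

theorem re_conj (u z : ℍ[ℝ]) : (z * u * star z).re = ‖z‖ ^ 2 * u.re := by
  rw [norm_sq_quaternion_eq]
  simp
  ring

theorem norm_conjVec (hu : u.re = 0) (z : ℍ[ℝ]) : ‖conjVec u z‖ = ‖z‖ ^ 2 * ‖u‖ := by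
  rw [conjVec, norm_imVec (by rw [re_conj, hu, mul_zero]), norm_mul, norm_mul, norm_star]
  ring

theorem norm_conjVec_unitI (z : ℍ[ℝ]) : ‖conjVec unitI z‖ = ‖z‖ ^ 2 := by
  rw [norm_conjVec re_unitI, norm_unitI, mul_one]

theorem norm_conjVec_unitJ (z : ℍ[ℝ]) : ‖conjVec unitJ z‖ = ‖z‖ ^ 2 := by
  rw [norm_conjVec re_unitJ, norm_unitJ, mul_one]

theorem conjVec_unitI_ne_zero {z : ℍ[ℝ]} (hz : z ≠ 0) : conjVec unitI z ≠ 0 := by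
  rw [← norm_pos_iff, norm_conjVec_unitI]
  positivity

theorem conjVec_imQuat_conjVec (hu : u.re = 0) (z w : ℍ[ℝ]) :
    conjVec (imQuat (conjVec u w)) z = conjVec u (z * w) := by
  rw [conjVec_mul, conjVec.eq_1 u w, imQuat_imVec (by rw [re_conj, hu, mul_zero])]

instance : StarModule ℝ ℍ[ℝ] := ⟨Quaternion.star_smul⟩

theorem contDiff_conjVec (u : ℍ[ℝ]) : ContDiff ℝ ∞ (conjVec u) :=
  imVec.contDiff.comp ((contDiff_id.mul contDiff_const).mul (starL' ℝ (A := ℍ[ℝ])).contDiff)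

theorem hasDerivAt_conjVec (u : ℍ[ℝ]) {z : ℝ → ℍ[ℝ]} {z' : ℍ[ℝ]} {t : ℝ} (h : HasDerivAt z z' t) :
    HasDerivAt (fun s => conjVec u (z s)) (conjVecPolar u (z t) z') t :=
  (imVec.hasFDerivAt.comp_hasDerivAt t ((h.mul_const u).mul h.star)).congr_deriv <| by
    rw [conjVecPolar, add_comm]

theorem conjVecPolar_self (u z : ℍ[ℝ]) : conjVecPolar u z z = (2 : ℝ) • conjVec u z := by
  rw [conjVecPolar, conjVec, map_add, two_smul]

theorem conjVecPolar_smul (u z v : ℍ[ℝ]) (r : ℝ) :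
    conjVecPolar u z (r • v) = r • conjVecPolar u z v := by
  simp only [conjVecPolar, Quaternion.star_smul, mul_smul_comm, smul_mul_assoc, ← smul_add,
    map_smul]

theorem inner_conjVec_conjVecPolar (z v : ℍ[ℝ]) :
    ⟪conjVec unitI z, conjVecPolar unitI z v⟫ = 2 * ‖z‖ ^ 2 * ⟪z, v⟫ := by
  rw [norm_sq_quaternion_eq, inner_E3_eq, inner_quaternion_eq]
  simp [conjVecPolar, conjVec, imVec_apply]
  ring

/-- Right multiplication by a unit quaternion. -/
def mulRightIsometry (u : ℍ[ℝ]) (hu : ‖u‖ = 1) : ℍ[ℝ] →ₗᵢ[ℝ] ℍ[ℝ] :=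
  ⟨LinearMap.mulRight ℝ u, fun z => by simp [hu]⟩

theorem mulRightIsometry_apply (hu : ‖u‖ = 1) (z : ℍ[ℝ]) : mulRightIsometry u hu z = z * u := rfl

theorem inner_mul_right (x y u : ℍ[ℝ]) : ⟪x * u, y⟫ = ⟪x, y * star u⟫ := by
  simp only [Quaternion.inner_def, star_mul, star_star, mul_assoc]

theorem inner_mul_unitK (x y : ℍ[ℝ]) : ⟪x * unitK, y⟫ = -⟪x, y * unitK⟫ := by
  rw [inner_mul_right, ← inner_neg_right, ← mul_neg]
  congr 2
  ext <;> simp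

theorem unitK_mul_unitK : unitK * unitK = -1 := by
  ext <;> simp

/-- The quaternion `exp (kθ/2)`. -/
@[simps]
def expK (θ : ℝ) : ℍ[ℝ] := ⟨cos (θ / 2), 0, 0, sin (θ / 2)⟩

theorem expK_eq (θ : ℝ) : expK θ = cos (θ / 2) • 1 + sin (θ / 2) • unitK := by
  ext <;> simp

theorem star_expK (θ : ℝ) : star (expK θ) = expK (-θ) := by
  ext <;> simp [neg_div]

theorem norm_expK (θ : ℝ) : ‖expK θ‖ = 1 := by
  rw [← sq_eq_sq₀ (norm_nonneg _) zero_le_one, norm_sq_quaternion_eq]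
  simp

theorem star_expK_mul_expK (θ : ℝ) : star (expK θ) * expK θ = 1 := by
  rw [Quaternion.star_mul_self, Quaternion.normSq_eq_norm_mul_self, norm_expK, mul_one,
    Quaternion.coe_one]

theorem expK_add_two_pi (θ : ℝ) : expK (θ + 2 * π) = -expK θ := by
  have : (θ + 2 * π) / 2 = θ / 2 + π := by ring
  ext <;> simp [this]

theorem unitK_mul_expK (θ : ℝ) : unitK * expK θ = expK θ * unitK := by
  ext <;> simp

theorem continuous_expK : Continuous expK := by
  simp_rw [funext expK_eq]
  fun_prop

theorem hasDerivAt_expK (θ : ℝ) : HasDerivAt expK ((1 / 2 : ℝ) • (expK θ * unitK)) θ := by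
  have h : HasDerivAt (fun s : ℝ => s / 2) (1 / 2) θ := (hasDerivAt_id θ).div_const 2
  rw [funext expK_eq]
  refine ((h.cos.smul_const 1).add (h.sin.smul_const unitK)).congr_deriv ?_
  ext <;> simp <;> ring

theorem conjVec_unitI_mul_expK (θ : ℝ) (z : ℍ[ℝ]) :
    conjVec unitI (z * expK θ) = cos θ • conjVec unitI z + sin θ • conjVec unitJ z := by
  have hcos : cos θ = cos (θ / 2) ^ 2 - sin (θ / 2) ^ 2 := by
    rw [← cos_two_mul', mul_div_cancel₀ θ two_ne_zero]
  have hsin : sin θ = 2 * sin (θ / 2) * cos (θ / 2) := by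
    rw [← sin_two_mul, mul_div_cancel₀ θ two_ne_zero]
  rw [conjVec_mul, ← conjVec_smul, ← conjVec_smul, ← conjVec_add, hcos, hsin]
  congr 1
  ext <;> simp <;> ring

theorem conjVec_unitJ_mul_expK (θ : ℝ) (z : ℍ[ℝ]) :
    conjVec unitJ (z * expK θ) = cos θ • conjVec unitJ z - sin θ • conjVec unitI z := by
  have hcos : cos θ = cos (θ / 2) ^ 2 - sin (θ / 2) ^ 2 := by
    rw [← cos_two_mul', mul_div_cancel₀ θ two_ne_zero]
  have hsin : sin θ = 2 * sin (θ / 2) * cos (θ / 2) := by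
    rw [← sin_two_mul, mul_div_cancel₀ θ two_ne_zero]
  rw [sub_eq_add_neg, ← neg_smul, conjVec_mul, ← conjVec_smul, ← conjVec_smul, ← conjVec_add,
    hcos, hsin]
  congr 1
  ext <;> simp <;> ring

/-- The quaternion `n z j`. -/
def mulVecJ (n : E3) (z : ℍ[ℝ]) : ℍ[ℝ] := imQuat n * z * unitJ

theorem two_mul_inner_mulVecJ (n : E3) (z v : ℍ[ℝ]) :
    2 * ⟪mulVecJ n z, v⟫ = -⟪n, conjVecPolar unitI z (v * unitK)⟫ := by
  rw [inner_quaternion_eq, inner_E3_eq]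
  simp [mulVecJ, conjVecPolar, imVec_apply]
  ring

theorem conjVecPolar_unitJ_mulVecJ (n : E3) (z : ℍ[ℝ]) :
    conjVecPolar unitJ z (mulVecJ n z) = -(2 * ‖z‖ ^ 2) • n := by
  rw [norm_sq_quaternion_eq]
  ext i
  fin_cases i <;> simp [conjVecPolar, mulVecJ, imVec_apply] <;> ring

theorem inner_self_mulVecJ (n : E3) (z : ℍ[ℝ]) : ⟪z, mulVecJ n z⟫ = -⟪conjVec unitJ z, n⟫ := by
  rw [inner_quaternion_eq, inner_E3_eq]
  simp [mulVecJ, conjVec, imVec_apply]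
  ring

theorem norm_sq_smul_conjVecPolar_unitI_mulVecJ (n : E3) (z : ℍ[ℝ]) :
    ‖z‖ ^ 2 • conjVecPolar unitI z (mulVecJ n z) =
      (2 * ⟪n, conjVec unitI z⟫) • conjVec unitJ z -
        (2 * ⟪n, conjVec unitJ z⟫) • conjVec unitI z := by
  rw [norm_sq_quaternion_eq, inner_E3_eq, inner_E3_eq]
  ext i
  fin_cases i <;> simp [conjVecPolar, conjVec, mulVecJ, imVec_apply] <;> ring

theorem inner_conjVecPolar_unitI_mulVecJ {z : ℍ[ℝ]} (hz : z ≠ 0) (n : E3) :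
    ⟪n, conjVecPolar unitI z (mulVecJ n z)⟫ = 0 := by
  have hsmul : ‖z‖ ^ 2 * ⟪n, conjVecPolar unitI z (mulVecJ n z)⟫ = 0 := by
    rw [← real_inner_smul_right, norm_sq_smul_conjVecPolar_unitI_mulVecJ, inner_sub_right,
      real_inner_smul_right, real_inner_smul_right]
    ring
  exact (mul_eq_zero.mp hsmul).resolve_left (pow_ne_zero 2 (norm_ne_zero_iff.mpr hz))

end Quaternions

section GradientBounds

open scoped Gradient

variable {W : Type*} [NormedAddCommGroup W] [NormedSpace ℝ W] {P Q : W → ℝ} {K L : ℝ}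

theorem HasC2Bound.mono (hQ : HasC2Bound Q K) (hKL : K ≤ L) : HasC2Bound Q L where
  differentiable := hQ.differentiable
  abs_le x := (hQ.abs_le x).trans hKL
  norm_fderiv_le x := (hQ.norm_fderiv_le x).trans hKL
  norm_fderiv_sub_le x y := (hQ.norm_fderiv_sub_le x y).trans (by gcongr)

theorem HasC2Bound.const_mul (hQ : HasC2Bound Q K) (a : ℝ) :
    HasC2Bound (fun x => a * Q x) (|a| * K) := by
  have hfderiv : ∀ x, fderiv ℝ (fun x => a * Q x) x = a • fderiv ℝ Q x := fun x =>
    fderiv_const_mul (hQ.differentiable x) a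
  refine ⟨hQ.differentiable.const_mul a, fun x => ?_, fun x => ?_, fun x y => ?_⟩
  · rw [abs_mul]
    gcongr
    exact hQ.abs_le x
  · rw [hfderiv, norm_smul, Real.norm_eq_abs]
    gcongr
    exact hQ.norm_fderiv_le x
  · rw [hfderiv, hfderiv, ← smul_sub, norm_smul, Real.norm_eq_abs, mul_assoc]
    gcongr
    exact hQ.norm_fderiv_sub_le x y

theorem HasC2Bound.sub (hP : HasC2Bound P K) (hQ : HasC2Bound Q L) :
    HasC2Bound (fun x => P x - Q x) (K + L) := by
  have hfderiv : ∀ x, fderiv ℝ (fun x => P x - Q x) x = fderiv ℝ P x - fderiv ℝ Q x := fun x =>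
    fderiv_fun_sub (hP.differentiable x) (hQ.differentiable x)
  refine ⟨hP.differentiable.sub hQ.differentiable, fun x => ?_, fun x => ?_, fun x y => ?_⟩
  · exact (abs_sub _ _).trans (add_le_add (hP.abs_le x) (hQ.abs_le x))
  · rw [hfderiv]
    exact (norm_sub_le _ _).trans (add_le_add (hP.norm_fderiv_le x) (hQ.norm_fderiv_le x))
  · rw [hfderiv, hfderiv, sub_sub_sub_comm, add_mul]
    exact (norm_sub_le _ _).trans
      (add_le_add (hP.norm_fderiv_sub_le x y) (hQ.norm_fderiv_sub_le x y))

section Slice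

variable {X : Type*} [NormedAddCommGroup X] [NormedSpace ℝ X] {Q : X × W → ℝ}

theorem HasC2Bound.fderiv_slice (hQ : HasC2Bound Q K) (t : X) (z : W) :
    fderiv ℝ (fun y => Q (t, y)) z = (fderiv ℝ Q (t, z)).comp (ContinuousLinearMap.inr ℝ X W) :=
  ((hQ.differentiable (t, z)).hasFDerivAt.comp z (hasFDerivAt_prodMk_right t z)).fderiv

theorem HasC2Bound.norm_fderiv_slice_sub_le (hQ : HasC2Bound Q K) (s t : X) (y z : W) :
    ‖fderiv ℝ (fun y => Q (t, y)) z - fderiv ℝ (fun y => Q (s, y)) y‖ ≤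
      K * ‖((t, z) : X × W) - (s, y)‖ := by
  rw [hQ.fderiv_slice, hQ.fderiv_slice, ← ContinuousLinearMap.sub_comp]
  calc _ ≤ ‖fderiv ℝ Q (t, z) - fderiv ℝ Q (s, y)‖ * ‖ContinuousLinearMap.inr ℝ X W‖ :=
        ContinuousLinearMap.opNorm_comp_le _ _
    _ ≤ ‖fderiv ℝ Q (t, z) - fderiv ℝ Q (s, y)‖ :=
        mul_le_of_le_one_right (norm_nonneg _) (ContinuousLinearMap.norm_inr_le_one ℝ X W)
    _ ≤ K * ‖((t, z) : X × W) - (s, y)‖ := hQ.norm_fderiv_sub_le _ _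

theorem HasC2Bound.slice (hQ : HasC2Bound Q K) (t : X) : HasC2Bound (fun z => Q (t, z)) K where
  differentiable := hQ.differentiable.comp (differentiable_const t |>.prodMk differentiable_id)
  abs_le z := hQ.abs_le (t, z)
  norm_fderiv_le z := by
    rw [hQ.fderiv_slice]
    exact (ContinuousLinearMap.opNorm_comp_le _ _).trans <|
      (mul_le_of_le_one_right (norm_nonneg _)
        (ContinuousLinearMap.norm_inr_le_one ℝ X W)).trans (hQ.norm_fderiv_le _)
  norm_fderiv_sub_le y z := by simpa using hQ.norm_fderiv_slice_sub_le t t y z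

end Slice

variable {V : Type*} [NormedAddCommGroup V] [InnerProductSpace ℝ V] [CompleteSpace V]

theorem norm_gradient_sub_gradient (P Q : V → ℝ) (x y : V) :
    ‖∇ P x - ∇ Q y‖ = ‖fderiv ℝ P x - fderiv ℝ Q y‖ := by
  rw [gradient, gradient, ← map_sub, LinearIsometryEquiv.norm_map]

theorem gradient_neg_of_even {Q : V → ℝ} (hQ : ∀ z, Q (-z) = Q z) (z : V) :
    ∇ Q (-z) = -∇ Q z := by
  have hfderiv : fderiv ℝ Q z = (fderiv ℝ Q (-z)).comp (-ContinuousLinearMap.id ℝ V) := by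
    conv_lhs => rw [← funext hQ]
    exact (ContinuousLinearEquiv.neg ℝ).comp_right_fderiv (f := Q)
  rw [gradient, gradient, hfderiv, ← map_neg]
  congr 1
  ext v
  simp

theorem inner_gradient_eq_of_hasDerivAt {Q : V → ℝ} {z v : V} {d : ℝ}
    (hQ : DifferentiableAt ℝ Q z) (hd : HasDerivAt (fun s : ℝ => Q (z + s • v)) d 0) :
    ⟪∇ Q z, v⟫ = d := by
  rw [inner_gradient_left]
  exact (hQ.hasFDerivAt.hasLineDerivAt v).unique hd

theorem HasC2Bound.continuous_gradient {Q : V → ℝ} (hQ : HasC2Bound Q K) : Continuous (∇ Q) := by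
  have hLip : LipschitzWith K.toNNReal (∇ Q) := LipschitzWith.of_dist_le_mul fun x y => by
    rw [dist_eq_norm, dist_eq_norm, Real.coe_toNNReal K hQ.nonneg, norm_gradient_sub_gradient]
    exact hQ.norm_fderiv_sub_le y x
  exact hLip.continuous

end GradientBounds

section RotatingFrame

open Quaternion
open scoped Gradient

variable {h : ℍ[ℝ] → ℝ} {K M : ℝ}

/-- The Hamiltonian `h` seen in the frame rotating by `z ↦ z exp (kθ/2)`. -/
def rotHamiltonian (h : ℍ[ℝ] → ℝ) (θ : ℝ) (ζ : ℍ[ℝ]) : ℝ := h (ζ * expK θ)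

/-- The gradient of `rotHamiltonian h θ`. -/
def rotGradient (h : ℍ[ℝ] → ℝ) (θ : ℝ) (ζ : ℍ[ℝ]) : ℍ[ℝ] := ∇ h (ζ * expK θ) * star (expK θ)

theorem norm_mul_expK (z : ℍ[ℝ]) (θ : ℝ) : ‖z * expK θ‖ = ‖z‖ := by
  rw [norm_mul, norm_expK, mul_one]

theorem norm_mul_star_expK (z : ℍ[ℝ]) (θ : ℝ) : ‖z * star (expK θ)‖ = ‖z‖ := by
  rw [norm_mul, norm_star, norm_expK, mul_one]

theorem mul_expK_ne_zero {ζ : ℍ[ℝ]} (hζ : ‖ζ‖ = 1) (θ : ℝ) : ζ * expK θ ≠ 0 := by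
  rw [← norm_ne_zero_iff, norm_mul_expK, hζ]
  exact one_ne_zero

theorem inner_rotGradient (h : ℍ[ℝ] → ℝ) (θ : ℝ) (ζ v : ℍ[ℝ]) :
    ⟪rotGradient h θ ζ, v⟫ = ⟪∇ h (ζ * expK θ), v * expK θ⟫ := by
  rw [rotGradient, inner_mul_right, star_star]

theorem rotGradient_mul_expK (h : ℍ[ℝ] → ℝ) (θ : ℝ) (ζ : ℍ[ℝ]) :
    rotGradient h θ ζ * expK θ = ∇ h (ζ * expK θ) := by
  rw [rotGradient, mul_assoc, star_expK_mul_expK, mul_one]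

theorem continuous_rotGradient (hh : HasC2Bound h K) :
    Continuous fun x : ℝ × ℍ[ℝ] => rotGradient h x.1 x.2 := by
  have hexp : Continuous fun x : ℝ × ℍ[ℝ] => expK x.1 := continuous_expK.comp continuous_fst
  exact (hh.continuous_gradient.comp (continuous_snd.mul hexp)).mul hexp.star

theorem periodic_rotGradient (heven : ∀ z, h (-z) = h z) :
    Function.Periodic (rotGradient h) (2 * π) := fun θ => funext fun ζ => by
  rw [rotGradient, rotGradient, expK_add_two_pi, mul_neg, gradient_neg_of_even heven, star_neg,
    neg_mul_neg]

theorem HasC2Bound.isSmallHamiltonian (hh : HasC2Bound h M) (heven : ∀ z, h (-z) = h z)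
    (hM : M ≤ 1 / 100) : IsSmallHamiltonian (rotHamiltonian h) (rotGradient h) M M where
  continuous_hamiltonian :=
    hh.differentiable.continuous.comp (continuous_snd.mul (continuous_expK.comp continuous_fst))
  continuous_gradient := continuous_rotGradient hh
  periodic := periodic_rotGradient heven
  norm_gradient_sub_le θ x y := by
    rw [rotGradient, rotGradient, ← sub_mul, norm_mul_star_expK, norm_gradient_sub_gradient,
      ← norm_mul_expK (x - y) θ, sub_mul]
    exact hh.norm_fderiv_sub_le _ _
  abs_taylor_le θ x y := by
    rw [inner_rotGradient, inner_gradient_left, ← norm_mul_expK (y - x) θ, sub_mul]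
    exact hh.abs_taylor_le _ _
  norm_gradient_le θ x := by
    rw [rotGradient, norm_mul_star_expK, gradient, LinearIsometryEquiv.norm_map]
    exact hh.norm_fderiv_le _
  nonneg := hh.nonneg
  le_small := hM

end RotatingFrame

section Perturbation

open Quaternion
open scoped ContDiff Gradient

variable {f : Sph → ℝ} {β : ContDiffBump (0 : ℝ)} {C t : ℝ}

/-- The pull-back of `f` along the Hopf map `z ↦ z i z̄ / ‖z‖²`, extended by a constant to `0`. -/
def hopfLift (f : Sph → ℝ) (z : ℍ[ℝ]) : ℝ := radialExt f (conjVec unitI z)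

theorem hopfLift_neg (f : Sph → ℝ) (z : ℍ[ℝ]) : hopfLift f (-z) = hopfLift f z := by
  rw [hopfLift, hopfLift, conjVec_neg_right]

theorem contDiffAt_hopfLift (hf : SmoothSph f) {z : ℍ[ℝ]} (hz : z ≠ 0) :
    ContDiffAt ℝ ∞ (hopfLift f) z :=
  (contDiffAt_radialExt hf (conjVec_unitI_ne_zero hz)).comp z (contDiff_conjVec unitI).contDiffAt

theorem annulusCutoff_neg (z : ℍ[ℝ]) : annulusCutoff (-z) = annulusCutoff z := by
  simp only [annulusCutoff, ContDiffBump.neg]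

/-- The lifted length factor `1 + tf`, with `t` truncated by the bump function `β` so that the
factor stays away from `0` for every `t`. -/
def lengthFactor (f : Sph → ℝ) (β : ContDiffBump (0 : ℝ)) (x : ℝ × ℍ[ℝ]) : ℝ :=
  1 + x.1 * β x.1 * hopfLift f x.2

theorem half_le_lengthFactor (hβ : ∀ x, β.rOut * |f x| ≤ 1 / 2) (x : ℝ × ℍ[ℝ]) :
    1 / 2 ≤ lengthFactor f β x := by
  have hx : |x.1 * β x.1| ≤ β.rOut := by
    rw [abs_mul, abs_of_nonneg β.nonneg]
    by_cases h : |x.1| < β.rOut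
    · exact (mul_le_of_le_one_right (abs_nonneg _) β.le_one).trans h.le
    · rw [β.zero_of_le_dist (by simpa using h), mul_zero]
      exact β.rOut_pos.le
  have hfactor : |x.1 * β x.1 * hopfLift f x.2| ≤ 1 / 2 := by
    rw [abs_mul]
    exact (mul_le_mul_of_nonneg_right hx (abs_nonneg _)).trans (hβ _)
  rw [lengthFactor]
  linarith [neg_le_of_abs_le hfactor]

theorem contDiffAt_lengthFactor (hf : SmoothSph f) {x : ℝ × ℍ[ℝ]} (hx : x.2 ≠ 0) :
    ContDiffAt ℝ ∞ (lengthFactor f β) x :=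
  contDiffAt_const.add ((contDiffAt_fst.mul (β.contDiff.contDiffAt.comp x contDiffAt_fst)).mul
    ((contDiffAt_hopfLift hf hx).comp x contDiffAt_snd))

theorem lengthFactor_neg (f : Sph → ℝ) (β : ContDiffBump (0 : ℝ)) (t : ℝ) (z : ℍ[ℝ]) :
    lengthFactor f β (t, -z) = lengthFactor f β (t, z) := by
  rw [lengthFactor, lengthFactor, hopfLift_neg]

/-- Multiplication by a cut-off function in both variables, equal to `1` where `|t| ≤ β.rIn` and
`1/2 ≤ ‖z‖ ≤ 2`. -/
def localize (β : ContDiffBump (0 : ℝ)) (h : ℝ × ℍ[ℝ] → ℝ) (x : ℝ × ℍ[ℝ]) : ℝ :=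
  annulusCutoff x.2 * (β x.1 * h x)

theorem contDiff_localize {h : ℝ × ℍ[ℝ] → ℝ} (hh : ∀ x, x.2 ≠ 0 → ContDiffAt ℝ ∞ h x) :
    ContDiff ℝ ∞ (localize β h) :=
  contDiff_annulusCutoff_mul contDiff_snd fun x hx =>
    (β.contDiff.contDiffAt.comp x contDiffAt_fst).mul (hh x hx)

theorem hasCompactSupport_localize (β : ContDiffBump (0 : ℝ)) (h : ℝ × ℍ[ℝ] → ℝ) :
    HasCompactSupport (localize β h) := by
  refine HasCompactSupport.intro (β.hasCompactSupport.isCompact.prod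
    (hasCompactSupport_annulusCutoff (W := ℍ[ℝ])).isCompact) fun x hx => ?_
  rw [Set.mem_prod, not_and_or] at hx
  rcases hx with hx | hx
  · rw [localize, image_eq_zero_of_notMem_tsupport hx, zero_mul, mul_zero]
  · rw [localize, image_eq_zero_of_notMem_tsupport hx, zero_mul]

theorem localize_eq (h : ℝ × ℍ[ℝ] → ℝ) (ht : |t| ≤ β.rIn) {z : ℍ[ℝ]} (h₁ : 1 / 2 ≤ ‖z‖)
    (h₂ : ‖z‖ ≤ 2) : localize β h (t, z) = h (t, z) := by
  rw [localize, annulusCutoff_eq_one h₁ h₂, β.one_of_mem_closedBall (by simpa using ht), one_mul,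
    one_mul]

theorem localize_neg {h : ℝ × ℍ[ℝ] → ℝ} (hh : ∀ t z, h (t, -z) = h (t, z)) (t : ℝ) (z : ℍ[ℝ]) :
    localize β h (t, -z) = localize β h (t, z) := by
  rw [localize, localize, hh, annulusCutoff_neg]

/-- Up to the factor `-t/4`, the difference between the lifted Hamiltonian `‖z‖² / (1 + tf)` and
`‖z‖²`. -/
def linearTerm (f : Sph → ℝ) (β : ContDiffBump (0 : ℝ)) : ℝ × ℍ[ℝ] → ℝ :=
  localize β fun x => ‖x.2‖ ^ 2 * hopfLift f x.2 / lengthFactor f β x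

/-- The squared distance of the lifted Hamiltonian from the energy level `1`. -/
def penaltyTerm (f : Sph → ℝ) (β : ContDiffBump (0 : ℝ)) : ℝ × ℍ[ℝ] → ℝ :=
  localize β fun x => (‖x.2‖ ^ 2 / lengthFactor f β x - 1) ^ 2

theorem contDiff_linearTerm (hf : SmoothSph f) (hβ : ∀ x, β.rOut * |f x| ≤ 1 / 2) :
    ContDiff ℝ ∞ (linearTerm f β) :=
  contDiff_localize fun x hx => ((contDiff_snd.norm_sq ℝ).contDiffAt.mul
    ((contDiffAt_hopfLift hf hx).comp x contDiffAt_snd)).div (contDiffAt_lengthFactor hf hx)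
    (by linarith [half_le_lengthFactor hβ x])

theorem contDiff_penaltyTerm (hf : SmoothSph f) (hβ : ∀ x, β.rOut * |f x| ≤ 1 / 2) :
    ContDiff ℝ ∞ (penaltyTerm f β) :=
  contDiff_localize fun x hx => (((contDiff_snd.norm_sq ℝ).contDiffAt.div
    (contDiffAt_lengthFactor hf hx) (by linarith [half_le_lengthFactor hβ x])).sub
    contDiffAt_const).pow 2

theorem linearTerm_neg (f : Sph → ℝ) (β : ContDiffBump (0 : ℝ)) (t : ℝ) (z : ℍ[ℝ]) :
    linearTerm f β (t, -z) = linearTerm f β (t, z) :=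
  localize_neg (fun t z => by simp only [norm_neg, hopfLift_neg, lengthFactor_neg]) t z

theorem penaltyTerm_neg (f : Sph → ℝ) (β : ContDiffBump (0 : ℝ)) (t : ℝ) (z : ℍ[ℝ]) :
    penaltyTerm f β (t, -z) = penaltyTerm f β (t, z) :=
  localize_neg (fun t z => by simp only [norm_neg, lengthFactor_neg]) t z

theorem penaltyTerm_zero (f : Sph → ℝ) (β : ContDiffBump (0 : ℝ)) {z : ℍ[ℝ]} (h₁ : 1 / 2 ≤ ‖z‖)
    (h₂ : ‖z‖ ≤ 2) : penaltyTerm f β (0, z) = (‖z‖ ^ 2 - 1) ^ 2 := by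
  rw [penaltyTerm, localize_eq _ (by simpa using β.rIn_pos.le) h₁ h₂, lengthFactor]
  simp

/-- `C` bounds both terms of the perturbation in `C²`, jointly in `t` and `z`. -/
structure PerturbationBounds (f : Sph → ℝ) (β : ContDiffBump (0 : ℝ)) (C : ℝ) : Prop where
  smooth : SmoothSph f
  rOut_mul_abs_le : ∀ x, β.rOut * |f x| ≤ 1 / 2
  one_le : 1 ≤ C
  linear : HasC2Bound (linearTerm f β) C
  penalty : HasC2Bound (penaltyTerm f β) C

theorem exists_perturbationBounds (hf : SmoothSph f) (hβ : ∀ x, β.rOut * |f x| ≤ 1 / 2) :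
    ∃ C, PerturbationBounds f β C := by
  obtain ⟨C₁, h₁⟩ := exists_hasC2Bound (contDiff_linearTerm hf hβ) (hasCompactSupport_localize β _)
  obtain ⟨C₂, h₂⟩ := exists_hasC2Bound (contDiff_penaltyTerm hf hβ)
    (hasCompactSupport_localize β _)
  exact ⟨max 1 (max C₁ C₂), hf, hβ, le_max_left _ _,
    h₁.mono ((le_max_left _ _).trans (le_max_right _ _)),
    h₂.mono ((le_max_right _ _).trans (le_max_right _ _))⟩

/-- The range of parameters `t ≠ 0` covered by the perturbation argument. -/
structure IsSmallParameter (β : ContDiffBump (0 : ℝ)) (C t : ℝ) : Prop where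
  ne_zero : t ≠ 0
  sqrt_mul_le : √|t| * (10 ^ 4 * C ^ 2) ≤ 1
  abs_le : |t| ≤ β.rIn

theorem IsSmallParameter.sqrt_pos (h : IsSmallParameter β C t) : 0 < √|t| :=
  Real.sqrt_pos.mpr (abs_pos.mpr h.ne_zero)

theorem IsSmallParameter.sqrt_mul_le_const (h : IsSmallParameter β C t) (hC : 1 ≤ C) :
    √|t| * C ≤ 1 / 10 ^ 4 := by
  have hCC : √|t| * C ≤ √|t| * C ^ 2 :=
    mul_le_mul_of_nonneg_left (le_self_pow₀ hC two_ne_zero) h.sqrt_pos.le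
  linarith [h.sqrt_mul_le]

theorem IsSmallParameter.sqrt_le (h : IsSmallParameter β C t) (hC : 1 ≤ C) :
    √|t| ≤ 1 / 10 ^ 4 :=
  (le_mul_of_one_le_right h.sqrt_pos.le hC).trans (h.sqrt_mul_le_const hC)

theorem sq_sqrt_abs (t : ℝ) : √|t| ^ 2 = |t| := Real.sq_sqrt (abs_nonneg t)

/-- On the annulus `1/2 ≤ ‖z‖ ≤ 2` this is `(H - √|t| (H - 1)² / 2 - ‖z‖²) / 4` with
`H = ‖z‖² / (1 + tf)`. The closed orbits of the reparametrized Hamiltonian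
`H - √|t| (H - 1)² / 2` are those of `H`, and the last term makes the action large where `‖z‖` is
far from `1`. -/
def perturbation (f : Sph → ℝ) (β : ContDiffBump (0 : ℝ)) (t : ℝ) (z : ℍ[ℝ]) : ℝ :=
  -(t / 4) * linearTerm f β (t, z) - √|t| / 8 * penaltyTerm f β (t, z)

theorem perturbation_neg (f : Sph → ℝ) (β : ContDiffBump (0 : ℝ)) (t : ℝ) (z : ℍ[ℝ]) :
    perturbation f β t (-z) = perturbation f β t z := by
  rw [perturbation, perturbation, linearTerm_neg, penaltyTerm_neg]

theorem PerturbationBounds.hasC2Bound (X : PerturbationBounds f β C)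
    (h : IsSmallParameter β C t) : HasC2Bound (perturbation f β t) (√|t| * C) := by
  refine (((X.linear.slice t).const_mul (-(t / 4))).sub
    ((X.penalty.slice t).const_mul (√|t| / 8))).mono ?_
  have hC := X.one_le
  rw [abs_neg, abs_div, abs_of_pos (by positivity : (0 : ℝ) < 4),
    abs_of_nonneg (by positivity : 0 ≤ √|t| / 8), ← add_mul]
  gcongr
  nlinarith [h.sqrt_le X.one_le, h.sqrt_pos, sq_sqrt_abs t]

theorem PerturbationBounds.isSmallHamiltonian (X : PerturbationBounds f β C)
    (h : IsSmallParameter β C t) :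
    IsSmallHamiltonian (rotHamiltonian (perturbation f β t)) (rotGradient (perturbation f β t))
      (√|t| * C) (√|t| * C) :=
  (X.hasC2Bound h).isSmallHamiltonian (perturbation_neg f β t)
    ((h.sqrt_mul_le_const X.one_le).trans (by norm_num))

theorem PerturbationBounds.perturbation_le (X : PerturbationBounds f β C)
    (h : IsSmallParameter β C t) {z : ℍ[ℝ]} (hz : ‖z‖ = 3 / 4 ∨ ‖z‖ = 5 / 4) :
    perturbation f β t z ≤ -(√|t| / 50) := by
  have hpenalty₀ : 19 / 100 ≤ penaltyTerm f β (0, z) := by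
    rcases hz with hz | hz <;> rw [penaltyTerm_zero] <;> rw [hz] <;> norm_num
  have hpenalty : |penaltyTerm f β (t, z) - penaltyTerm f β (0, z)| ≤ C * |t| := by
    simpa [Prod.norm_def] using X.penalty.abs_sub_le (0, z) (t, z)
  have hlinear : -(t / 4) * linearTerm f β (t, z) ≤ |t| / 4 * C := by
    refine (le_abs_self _).trans ?_
    rw [abs_mul, abs_neg, abs_div, abs_of_pos (by positivity : (0 : ℝ) < 4)]
    gcongr
    exact X.linear.abs_le _
  have hCt : |t| * C ≤ √|t| * (1 / 10 ^ 4) := by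
    calc |t| * C = √|t| * (√|t| * C) := by rw [← mul_assoc, ← sq, sq_sqrt_abs]
      _ ≤ √|t| * (1 / 10 ^ 4) :=
          mul_le_mul_of_nonneg_left (h.sqrt_mul_le_const X.one_le) h.sqrt_pos.le
  have hpenalty' : 18 / 100 ≤ penaltyTerm f β (t, z) := by
    linarith [(abs_le.mp hpenalty).1, h.sqrt_le X.one_le]
  rw [perturbation]
  linarith [mul_le_mul_of_nonneg_left hpenalty' h.sqrt_pos.le, h.sqrt_pos]

theorem PerturbationBounds.lt_neg_integral (X : PerturbationBounds f β C)
    (h : IsSmallParameter β C t) (ζ : ℍ[ℝ]) (hζ : ‖ζ‖ = 3 / 4 ∨ ‖ζ‖ = 5 / 4) :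
    300 * (√|t| * C) ^ 2 < -∫ θ in (0 : ℝ)..2 * π, rotHamiltonian (perturbation f β t) θ ζ := by
  have hle : ∫ θ in (0 : ℝ)..2 * π, rotHamiltonian (perturbation f β t) θ ζ ≤
      ∫ _ in (0 : ℝ)..2 * π, -(√|t| / 50) := by
    refine intervalIntegral.integral_mono_on (by positivity) ?_ (by simp) fun θ _ =>
      X.perturbation_le h (by rwa [norm_mul_expK])
    have hcont := (X.isSmallHamiltonian h).continuous_hamiltonian_comp ζ (w := 0) continuous_zero
    exact (by simpa using hcont : Continuous _).intervalIntegrable _ _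
  have hsq : 300 * (√|t| * C) ^ 2 = √|t| * (√|t| * (10 ^ 4 * C ^ 2)) * (3 / 100) := by ring
  have hsq' := mul_le_mul_of_nonneg_left h.sqrt_mul_le h.sqrt_pos.le
  rw [intervalIntegral.integral_const, smul_eq_mul, sub_zero] at hle
  nlinarith [h.sqrt_pos, Real.pi_gt_three]

end Perturbation

section LiftedGeodesic

open Quaternion
open scoped ContDiff Gradient

variable {ρ : Sph → ℝ} {z : ℝ → ℍ[ℝ]} {z' : ℍ[ℝ]} {h o s : ℝ}

theorem fderiv_radialExt_smul (ρ : Sph → ℝ) {r : ℝ} (hr : 0 < r) (x v : E3) :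
    r * fderiv ℝ (radialExt ρ) (r • x) v = fderiv ℝ (radialExt ρ) x v := by
  conv_rhs => rw [← funext (radialExt_smul ρ hr), fderiv_comp_smul]
  rfl

theorem fderiv_radialExt_self (hρ : SmoothSph ρ) {x : E3} (hx : x ≠ 0) :
    fderiv ℝ (radialExt ρ) x x = 0 := by
  have hconst : (fun s : ℝ => radialExt ρ (x + s • x)) =ᶠ[nhds 0] fun _ => radialExt ρ x := by
    filter_upwards [lt_mem_nhds (show (-1 : ℝ) < 0 by norm_num)] with s hs
    rw [← radialExt_smul ρ (by linarith : 0 < 1 + s) x, add_smul, one_smul]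
  exact ((hasFDerivAt_radialExt hρ hx).hasLineDerivAt x).unique
    ((hasDerivAt_const _ _).congr_of_eventuallyEq hconst)

/-- The lift of the geodesic Hamiltonian of the metric `ρ² g₀`, as a function of the quaternion `z`
over the point `z i z̄ / ‖z‖²`. -/
def liftedHamiltonian (ρ : Sph → ℝ) (z : ℍ[ℝ]) : ℝ := ‖z‖ ^ 2 / hopfLift ρ z

/-- The derivative of `liftedHamiltonian` with respect to `z i z̄`. -/
def liftedMomentum (ρ : Sph → ℝ) (z : ℍ[ℝ]) : E3 :=
  (‖z‖ ^ 2 * hopfLift ρ z)⁻¹ • conjVec unitI z -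
    (‖z‖ ^ 2 / hopfLift ρ z ^ 2) • ∇ (radialExt ρ) (conjVec unitI z)

theorem inner_liftedMomentum_conjVec (hρ : SmoothSph ρ) {z : ℍ[ℝ]} (hz : z ≠ 0) :
    ⟪liftedMomentum ρ z, conjVec unitI z⟫ = liftedHamiltonian ρ z := by
  have hnorm : ‖z‖ ≠ 0 := norm_ne_zero_iff.mpr hz
  rw [liftedMomentum, liftedHamiltonian, inner_sub_left, real_inner_smul_left,
    real_inner_smul_left, inner_gradient_left, fderiv_radialExt_self hρ (conjVec_unitI_ne_zero hz),
    real_inner_self_eq_norm_sq, norm_conjVec_unitI, mul_zero, sub_zero, mul_inv]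
  field_simp

theorem hasDerivAt_liftedHamiltonian (hρ : SmoothSph ρ) (hρ0 : ∀ x, 0 < ρ x)
    (hz : HasDerivAt z z' s) (h0 : z s ≠ 0) :
    HasDerivAt (fun s => liftedHamiltonian ρ (z s))
      ⟪liftedMomentum ρ (z s), conjVecPolar unitI (z s) z'⟫ s := by
  have hlift : HasDerivAt (fun s => hopfLift ρ (z s)) (fderiv ℝ (radialExt ρ)
      (conjVec unitI (z s)) (conjVecPolar unitI (z s) z')) s :=
    HasFDerivAt.comp_hasDerivAt (l := radialExt ρ) (f := fun s => conjVec unitI (z s)) s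
      (hasFDerivAt_radialExt hρ (conjVec_unitI_ne_zero h0)) (hasDerivAt_conjVec unitI hz)
  have hpos : hopfLift ρ (z s) ≠ 0 := (hρ0 _).ne'
  have hnorm : ‖z s‖ ≠ 0 := norm_ne_zero_iff.mpr h0
  refine (hz.norm_sq.div hlift hpos).congr_deriv ?_
  rw [liftedMomentum, inner_sub_left, real_inner_smul_left, real_inner_smul_left,
    inner_gradient_left, inner_conjVec_conjVecPolar]
  field_simp

theorem continuousAt_liftedMomentum (hρ : SmoothSph ρ) (hρ0 : ∀ x, 0 < ρ x) {z : ℍ[ℝ]}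
    (hz : z ≠ 0) : ContinuousAt (liftedMomentum ρ) z := by
  have hbase : ContinuousAt (conjVec unitI) z := (contDiff_conjVec unitI).continuous.continuousAt
  have hlift : ContinuousAt (hopfLift ρ) z := (contDiffAt_hopfLift hρ hz).continuousAt
  have hgrad : ContinuousAt (fun z => ∇ (radialExt ρ) (conjVec unitI z)) z :=
    (InnerProductSpace.toDual ℝ E3).symm.continuous.continuousAt.comp <|
      ContinuousAt.comp (f := conjVec unitI)
        ((contDiffAt_radialExt hρ (conjVec_unitI_ne_zero hz)).fderiv_right (m := 0)
          (by simp)).continuousAt hbase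
  have hpos : hopfLift ρ z ≠ 0 := (hρ0 _).ne'
  have hnorm : ContinuousAt (fun z : ℍ[ℝ] => ‖z‖ ^ 2) z := by fun_prop
  exact (((hnorm.mul hlift).inv₀ (mul_ne_zero (by simpa using hz) hpos)).smul hbase).sub
    ((hnorm.div (hlift.pow 2) (pow_ne_zero 2 hpos)).smul hgrad)

/-- A curve of energy `h` which, up to the time change with constant factor `o`, solves the lift of
the geodesic equation of `ρ² g₀`. -/
structure IsLiftedGeodesic (ρ : Sph → ℝ) (h o : ℝ) (z : ℝ → ℍ[ℝ]) : Prop where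
  ne_zero : ∀ θ, z θ ≠ 0
  hamiltonian_eq : ∀ θ, liftedHamiltonian ρ (z θ) = h
  hasDerivAt : ∀ θ, HasDerivAt z ((o / 2) • mulVecJ (liftedMomentum ρ (z θ)) (z θ)) θ

namespace IsLiftedGeodesic

variable (hz : IsLiftedGeodesic ρ h o z)

include hz

theorem norm_sq_pos (θ : ℝ) : 0 < ‖z θ‖ ^ 2 := pow_pos (norm_pos_iff.mpr (hz.ne_zero θ)) 2

theorem continuous : Continuous z :=
  continuous_iff_continuousAt.mpr fun θ => (hz.hasDerivAt θ).continuousAt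

theorem norm_sq_eq (hρ0 : ∀ x, 0 < ρ x) (θ : ℝ) : ‖z θ‖ ^ 2 = h * hopfLift ρ (z θ) := by
  have hpos : hopfLift ρ (z θ) ≠ 0 := (hρ0 _).ne'
  rw [← hz.hamiltonian_eq θ, liftedHamiltonian, div_mul_cancel₀ _ hpos]

theorem hasDerivAt_position (hρ : SmoothSph ρ) (hρ0 : ∀ x, 0 < ρ x) (hh : 0 < h) (θ : ℝ) :
    HasDerivAt (fun θ => (‖z θ‖ ^ 2)⁻¹ • conjVec unitI (z θ))
      (o • (hopfLift ρ (z θ) ^ 2)⁻¹ • h⁻¹ • conjVec unitJ (z θ)) θ := by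
  refine (((hz.hasDerivAt θ).norm_sq.fun_inv (hz.norm_sq_pos θ).ne').fun_smul
    (hasDerivAt_conjVec unitI (hz.hasDerivAt θ))).congr_deriv ?_
  have hpolar : conjVecPolar unitI (z θ) (mulVecJ (liftedMomentum ρ (z θ)) (z θ)) =
      (‖z θ‖ ^ 2)⁻¹ • ((2 * h) • conjVec unitJ (z θ) -
        (2 * ⟪liftedMomentum ρ (z θ), conjVec unitJ (z θ)⟫) • conjVec unitI (z θ)) := by
    rw [← hz.hamiltonian_eq θ, ← inner_liftedMomentum_conjVec hρ (hz.ne_zero θ),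
      ← norm_sq_smul_conjVecPolar_unitI_mulVecJ, smul_smul,
      inv_mul_cancel₀ (hz.norm_sq_pos θ).ne', one_smul]
  have hpos : 0 < hopfLift ρ (z θ) := hρ0 _
  rw [conjVecPolar_smul, real_inner_smul_right, inner_self_mulVecJ, hpolar,
    real_inner_comm (liftedMomentum ρ (z θ)) (conjVec unitJ (z θ)), hz.norm_sq_eq hρ0 θ]
  match_scalars <;> field_simp
  ring

theorem hasDerivAt_momentum (hρ0 : ∀ x, 0 < ρ x) (hh : 0 < h) (θ : ℝ) :
    HasDerivAt (fun θ => h⁻¹ • conjVec unitJ (z θ))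
      (o • -hopfLift ρ (z θ) • liftedMomentum ρ (z θ)) θ := by
  refine ((hasDerivAt_conjVec unitJ (hz.hasDerivAt θ)).const_smul h⁻¹).congr_deriv ?_
  rw [conjVecPolar_smul, conjVecPolar_unitJ_mulVecJ, hz.norm_sq_eq hρ0 θ]
  match_scalars
  field_simp

theorem continuous_force (hρ : SmoothSph ρ) (hρ0 : ∀ x, 0 < ρ x) :
    Continuous fun θ => -hopfLift ρ (z θ) • liftedMomentum ρ (z θ) :=
  continuous_iff_continuousAt.mpr fun θ =>
    ((contDiffAt_hopfLift hρ (hz.ne_zero θ)).continuousAt.neg.smul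
      (continuousAt_liftedMomentum hρ hρ0 (hz.ne_zero θ))).comp hz.continuous.continuousAt

theorem inner_force (θ : ℝ) (hρ0 : ∀ x, 0 < ρ x) (v : E3) :
    ⟪-hopfLift ρ (z θ) • liftedMomentum ρ (z θ), v⟫ = (hopfLift ρ (z θ))⁻¹ *
      fderiv ℝ (radialExt ρ) ((‖z θ‖ ^ 2)⁻¹ • conjVec unitI (z θ)) v -
        ⟪(‖z θ‖ ^ 2)⁻¹ • conjVec unitI (z θ), v⟫ := by
  have hnorm := hz.norm_sq_pos θ
  have hne : ‖z θ‖ ≠ 0 := norm_ne_zero_iff.mpr (hz.ne_zero θ)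
  have hpos : 0 < hopfLift ρ (z θ) := hρ0 _
  rw [liftedMomentum, real_inner_smul_left, inner_sub_left, real_inner_smul_left,
    real_inner_smul_left, real_inner_smul_left, inner_gradient_left,
    ← fderiv_radialExt_smul ρ (inv_pos.mpr hnorm) (conjVec unitI (z θ)) v]
  generalize fderiv ℝ (radialExt ρ) _ v = d
  field_simp
  ring

theorem systole_le (hρ : SmoothSph ρ) (hρ0 : ∀ x, 0 < ρ x) (hh : 0 < h) (ho : 0 < o)
    (ho1 : o ≤ 1) (hanti : ∀ θ, z (θ + 2 * π) = -z θ) :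
    systole (confMetric fun x => ρ x ^ 2) ≤ 2 * π := by
  have hdiv : ∀ s, HasDerivAt (fun s : ℝ => s / o) (1 / o) s := fun s =>
    (hasDerivAt_id s).div_const o
  have hcoe : ∀ θ, (radialProj (conjVec unitI (z θ)) : E3) =
      (‖z θ‖ ^ 2)⁻¹ • conjVec unitI (z θ) := fun θ => by
    rw [radialProj_of_ne_zero (conjVec_unitI_ne_zero (hz.ne_zero θ)), ← norm_conjVec_unitI]
  have hperiod : systole (confMetric fun x => ρ x ^ 2) ≤ 2 * π * o := by
    refine systole_le_of_hamilton_eq (c := fun s => radialProj (conjVec unitI (z (s / o))))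
      (p := fun s => h⁻¹ • conjVec unitJ (z (s / o)))
      (p' := fun s => -hopfLift ρ (z (s / o)) • liftedMomentum ρ (z (s / o))) hρ hρ0
      (fun s => ?_) (fun s => ?_) (fun s => ?_) ((hz.continuous_force hρ hρ0).comp (by fun_prop))
      (fun s v => ?_) (by positivity) fun s => ?_
    · simp only [hcoe]
      refine ((hz.hasDerivAt_position hρ hρ0 hh (s / o)).scomp s (hdiv s)).congr_deriv ?_
      rw [smul_smul, one_div, inv_mul_cancel₀ ho.ne', one_smul]
      rfl
    · rw [norm_smul, norm_conjVec_unitJ, hz.norm_sq_eq hρ0, norm_inv, Real.norm_of_nonneg hh.le,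
        inv_mul_cancel_left₀ hh.ne']
      rfl
    · refine ((hz.hasDerivAt_momentum hρ0 hh (s / o)).scomp s (hdiv s)).congr_deriv ?_
      rw [smul_smul, one_div, inv_mul_cancel₀ ho.ne', one_smul]
    · rw [hz.inner_force (s / o) hρ0, ← hcoe]
      rfl
    · beta_reduce
      rw [add_div, mul_div_cancel_right₀ _ ho.ne', hanti, conjVec_neg_right]
  exact hperiod.trans (mul_le_of_le_one_right (by positivity) ho1)

end IsLiftedGeodesic

end LiftedGeodesic

section ReducedOrbit

open Quaternion
open scoped ContDiff Gradient

variable {f : Sph → ℝ} {β : ContDiffBump (0 : ℝ)} {C t : ℝ} {z ζ : ℍ[ℝ]} {w : ℝ → ℍ[ℝ]}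

/-- The factor `1 + tf` by which the metric `g_t` multiplies lengths. -/
def conformalFactor (f : Sph → ℝ) (t : ℝ) (x : Sph) : ℝ := 1 + t * f x

theorem smoothSph_conformalFactor (hf : SmoothSph f) (t : ℝ) : SmoothSph (conformalFactor f t) :=
  contMDiff_const.add (contMDiff_const.mul hf)

theorem PerturbationBounds.conformalFactor_pos (X : PerturbationBounds f β C)
    (h : IsSmallParameter β C t) (x : Sph) : 0 < conformalFactor f t x := by
  have hle : |t * f x| ≤ 1 / 2 := by
    rw [abs_mul]
    exact (mul_le_mul_of_nonneg_right (h.abs_le.trans β.rIn_lt_rOut.le) (abs_nonneg _)).trans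
      (X.rOut_mul_abs_le x)
  rw [conformalFactor]
  linarith [neg_le_of_abs_le hle]

theorem IsSmallParameter.bump_eq_one (h : IsSmallParameter β C t) : β t = 1 :=
  β.one_of_mem_closedBall (by simpa using h.abs_le)

theorem IsSmallParameter.lengthFactor_eq (h : IsSmallParameter β C t) (z : ℍ[ℝ]) :
    lengthFactor f β (t, z) = hopfLift (conformalFactor f t) z := by
  rw [lengthFactor, h.bump_eq_one, mul_one]
  rfl

theorem PerturbationBounds.half_le_hopfLift (X : PerturbationBounds f β C)
    (h : IsSmallParameter β C t) (z : ℍ[ℝ]) : 1 / 2 ≤ hopfLift (conformalFactor f t) z := by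
  rw [← h.lengthFactor_eq]
  exact half_le_lengthFactor X.rOut_mul_abs_le _

theorem PerturbationBounds.perturbation_eq (X : PerturbationBounds f β C)
    (h : IsSmallParameter β C t) (h₁ : 1 / 2 ≤ ‖z‖) (h₂ : ‖z‖ ≤ 2) :
    perturbation f β t z = 1 / 4 * (liftedHamiltonian (conformalFactor f t) z -
      √|t| / 2 * (liftedHamiltonian (conformalFactor f t) z - 1) ^ 2 - ‖z‖ ^ 2) := by
  have hpos : hopfLift (conformalFactor f t) z ≠ 0 := by linarith [X.half_le_hopfLift h z]
  have hdiff : liftedHamiltonian (conformalFactor f t) z - ‖z‖ ^ 2 =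
      -t * (‖z‖ ^ 2 * hopfLift f z / hopfLift (conformalFactor f t) z) := by
    have hfactor : hopfLift (conformalFactor f t) z = 1 + t * hopfLift f z := rfl
    rw [liftedHamiltonian]
    field_simp
    rw [hfactor]
    ring
  rw [perturbation, linearTerm, penaltyTerm, localize_eq _ h.abs_le h₁ h₂,
    localize_eq _ h.abs_le h₁ h₂, h.lengthFactor_eq]
  rw [liftedHamiltonian] at hdiff ⊢
  linear_combination (-1 / 4) * hdiff

theorem PerturbationBounds.inner_gradient_perturbation (X : PerturbationBounds f β C)
    (h : IsSmallParameter β C t) (h₁ : 1 / 2 < ‖z‖) (h₂ : ‖z‖ < 2) (v : ℍ[ℝ]) :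
    ⟪∇ (perturbation f β t) z, v⟫ =
      1 / 4 * ((1 - √|t| * (liftedHamiltonian (conformalFactor f t) z - 1)) *
        ⟪liftedMomentum (conformalFactor f t) z, conjVecPolar unitI z v⟫ - 2 * ⟪z, v⟫) := by
  have hz : z ≠ 0 := norm_pos_iff.mp (by linarith)
  have hline : HasDerivAt (fun s : ℝ => z + s • v) v 0 := by
    simpa using ((hasDerivAt_id (0 : ℝ)).smul_const v).const_add z
  have hH := hasDerivAt_liftedHamiltonian (smoothSph_conformalFactor X.smooth t)
    (X.conformalFactor_pos h) hline (by simpa using hz)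
  refine inner_gradient_eq_of_hasDerivAt (X.hasC2Bound h).differentiable.differentiableAt <|
    ((((hH.sub (((hH.sub_const 1).pow 2).const_mul (√|t| / 2))).sub
      hline.norm_sq).const_mul (1 / 4)).congr_of_eventuallyEq ?_).congr_deriv ?_
  · have htendsto : Filter.Tendsto (fun s : ℝ => z + s • v) (nhds 0) (nhds z) := by
      simpa using hline.continuousAt.tendsto
    filter_upwards [htendsto.eventually (eventually_mem_annulus h₁ h₂)] with s hs
    exact X.perturbation_eq h hs.1.le hs.2.le
  · simp only [zero_smul, add_zero]
    ring

theorem PerturbationBounds.gradient_perturbation_mul_unitK (X : PerturbationBounds f β C)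
    (h : IsSmallParameter β C t) (h₁ : 1 / 2 < ‖z‖) (h₂ : ‖z‖ < 2) :
    ∇ (perturbation f β t) z * unitK + (1 / 2 : ℝ) • (z * unitK) =
      ((1 - √|t| * (liftedHamiltonian (conformalFactor f t) z - 1)) / 2) •
        mulVecJ (liftedMomentum (conformalFactor f t) z) z := by
  refine ext_inner_right ℝ fun v => ?_
  rw [inner_add_left, real_inner_smul_left, real_inner_smul_left, inner_mul_unitK, inner_mul_unitK,
    X.inner_gradient_perturbation h h₁ h₂]
  linear_combination (-1 / 4) * (1 - √|t| * (liftedHamiltonian (conformalFactor f t) z - 1)) *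
    two_mul_inner_mulVecJ (liftedMomentum (conformalFactor f t) z) z v

/-- A periodic solution `ζ + w` of the equation of `perturbation f β t` in the rotating frame,
contained in the annulus where the cut-off is invisible. -/
structure IsReducedOrbit (f : Sph → ℝ) (β : ContDiffBump (0 : ℝ)) (t : ℝ) (ζ : ℍ[ℝ])
    (w : ℝ → ℍ[ℝ]) : Prop where
  periodic : Function.Periodic w (2 * π)
  hasDerivAt : ∀ θ, HasDerivAt w (rotGradient (perturbation f β t) θ (ζ + w θ) * unitK) θ
  half_lt_norm : ∀ θ, 1 / 2 < ‖ζ + w θ‖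
  norm_lt_two : ∀ θ, ‖ζ + w θ‖ < 2

namespace IsReducedOrbit

variable (hw : IsReducedOrbit f β t ζ w) (X : PerturbationBounds f β C)
  (h : IsSmallParameter β C t)

section

include hw

theorem continuous : Continuous w :=
  continuous_iff_continuousAt.mpr fun θ => (hw.hasDerivAt θ).continuousAt

theorem half_lt_norm_mul_expK (θ : ℝ) : 1 / 2 < ‖(ζ + w θ) * expK θ‖ := by
  rw [norm_mul_expK]
  exact hw.half_lt_norm θ

theorem norm_mul_expK_lt_two (θ : ℝ) : ‖(ζ + w θ) * expK θ‖ < 2 := by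
  rw [norm_mul_expK]
  exact hw.norm_lt_two θ

theorem mul_expK_ne_zero (θ : ℝ) : (ζ + w θ) * expK θ ≠ 0 :=
  norm_pos_iff.mp (by linarith [hw.half_lt_norm_mul_expK θ])

end

include hw X h

theorem hasDerivAt_mul_expK (θ : ℝ) : HasDerivAt (fun θ => (ζ + w θ) * expK θ)
    (((1 - √|t| * (liftedHamiltonian (conformalFactor f t) ((ζ + w θ) * expK θ) - 1)) / 2) •
      mulVecJ (liftedMomentum (conformalFactor f t) ((ζ + w θ) * expK θ))
        ((ζ + w θ) * expK θ)) θ := by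
  refine (((hw.hasDerivAt θ).const_add ζ).mul (hasDerivAt_expK θ)).congr_deriv ?_
  rw [← X.gradient_perturbation_mul_unitK h (hw.half_lt_norm_mul_expK θ)
    (hw.norm_mul_expK_lt_two θ), mul_assoc, unitK_mul_expK, ← mul_assoc, rotGradient_mul_expK,
    mul_smul_comm, mul_assoc]

theorem liftedHamiltonian_eq (θ : ℝ) :
    liftedHamiltonian (conformalFactor f t) ((ζ + w θ) * expK θ) =
      liftedHamiltonian (conformalFactor f t) ((ζ + w 0) * expK 0) := by
  have hderiv : ∀ θ, HasDerivAt
      (fun θ => liftedHamiltonian (conformalFactor f t) ((ζ + w θ) * expK θ)) 0 θ := fun θ =>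
    (hasDerivAt_liftedHamiltonian (smoothSph_conformalFactor X.smooth t) (X.conformalFactor_pos h)
      (hw.hasDerivAt_mul_expK X h θ) (hw.mul_expK_ne_zero θ)).congr_deriv <| by
        rw [conjVecPolar_smul, real_inner_smul_right,
          inner_conjVecPolar_unitI_mulVecJ (hw.mul_expK_ne_zero θ), mul_zero]
  exact is_const_of_deriv_eq_zero (fun s => (hderiv s).differentiableAt)
    (fun s => (hderiv s).deriv) θ 0

theorem continuous_rotGradient :
    Continuous fun θ => rotGradient (perturbation f β t) θ (ζ + w θ) :=
  (X.isSmallHamiltonian h).continuous_gradient_comp ζ hw.continuous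

theorem integral_rotGradient :
    ∫ θ in (0 : ℝ)..2 * π, rotGradient (perturbation f β t) θ (ζ + w θ) = 0 := by
  have hcont := hw.continuous_rotGradient X h
  have hmul := intervalIntegral.integral_eq_sub_of_hasDerivAt (fun θ _ => hw.hasDerivAt θ)
    ((hcont.mul continuous_const).intervalIntegrable 0 (2 * π))
  rw [hw.periodic.eq, sub_self] at hmul
  set J := mulRightIsometry unitK norm_unitK
  exact (map_eq_zero_iff J J.injective).mp <| (J.toContinuousLinearMap.intervalIntegral_comp_comm
    (hcont.intervalIntegrable _ _)).symm.trans hmul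

/-- The penalty makes the action of an orbit determine its energy. -/
theorem reducedAction_eq : reducedAction (rotHamiltonian (perturbation f β t)) ζ w
    (fun θ => rotGradient (perturbation f β t) θ (ζ + w θ)) = 2 * π * (-(√|t| / 8) *
      (liftedHamiltonian (conformalFactor f t) ((ζ + w 0) * expK 0) ^ 2 - 1)) := by
  set η := liftedHamiltonian (conformalFactor f t) ((ζ + w 0) * expK 0)
  have hcont := hw.continuous_rotGradient X h
  have hζ : ∫ θ in (0 : ℝ)..2 * π, ⟪ζ, rotGradient (perturbation f β t) θ (ζ + w θ)⟫ = 0 := by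
    rw [integral_inner_const _ _ _ hcont, hw.integral_rotGradient X h, inner_zero_right]
  have hpointwise : ∀ θ, 1 / 2 * ⟪rotGradient (perturbation f β t) θ (ζ + w θ), w θ⟫ -
      rotHamiltonian (perturbation f β t) θ (ζ + w θ) = -(√|t| / 8) * (η ^ 2 - 1) -
        1 / 2 * ⟪ζ, rotGradient (perturbation f β t) θ (ζ + w θ)⟫ := fun θ => by
    have hlow := hw.half_lt_norm_mul_expK θ
    have hup := hw.norm_mul_expK_lt_two θ
    have hinner := inner_rotGradient (perturbation f β t) θ (ζ + w θ) (ζ + w θ)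
    rw [X.inner_gradient_perturbation h hlow hup, conjVecPolar_self, real_inner_smul_right,
      inner_liftedMomentum_conjVec (smoothSph_conformalFactor X.smooth t)
        (hw.mul_expK_ne_zero θ), hw.liftedHamiltonian_eq X h, real_inner_self_eq_norm_sq,
      inner_add_right, real_inner_comm ζ] at hinner
    rw [rotHamiltonian, X.perturbation_eq h hlow.le hup.le, hw.liftedHamiltonian_eq X h]
    linear_combination (1 / 2) * hinner
  simp only [reducedAction, hpointwise]
  rw [intervalIntegral.integral_sub (by simp)
      (Continuous.intervalIntegrable (by fun_prop) _ _),
    intervalIntegral.integral_const_mul (1 / 2 : ℝ), hζ, intervalIntegral.integral_const,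
    smul_eq_mul]
  ring

theorem systole_le (haction : reducedAction (rotHamiltonian (perturbation f β t)) ζ w
      (fun θ => rotGradient (perturbation f β t) θ (ζ + w θ)) ≤ 0) :
    systole (confMetric fun x => (1 + t * f x) ^ 2) ≤ 2 * π := by
  have hsmall := h.sqrt_le X.one_le
  have hsqrt := h.sqrt_pos
  set η := liftedHamiltonian (conformalFactor f t) ((ζ + w 0) * expK 0) with hη
  have hη_le : η ≤ 8 := by
    have hlow := hw.half_lt_norm_mul_expK 0
    have hup := hw.norm_mul_expK_lt_two 0
    have hhalf := X.half_le_hopfLift h ((ζ + w 0) * expK 0)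
    rw [hη, liftedHamiltonian, div_le_iff₀ (by linarith)]
    nlinarith
  have hη_nonneg : 0 ≤ η :=
    div_nonneg (sq_nonneg _) (by linarith [X.half_le_hopfLift h ((ζ + w 0) * expK 0)])
  have hη_ge : 1 ≤ η := by
    by_contra! hlt
    rw [hw.reducedAction_eq X h, ← hη] at haction
    have hneg : 0 < 2 * π * (√|t| / 8) * (1 - η ^ 2) := mul_pos (by positivity) (by nlinarith)
    linarith
  have hgeodesic : IsLiftedGeodesic (conformalFactor f t) η (1 - √|t| * (η - 1))
      fun θ => (ζ + w θ) * expK θ :=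
    { ne_zero := hw.mul_expK_ne_zero
      hamiltonian_eq := hw.liftedHamiltonian_eq X h
      hasDerivAt θ := by simpa only [hw.liftedHamiltonian_eq X h] using
        hw.hasDerivAt_mul_expK X h θ }
  refine hgeodesic.systole_le (smoothSph_conformalFactor X.smooth t) (X.conformalFactor_pos h)
    (by linarith) (by nlinarith) (by nlinarith) fun θ => ?_
  rw [hw.periodic, expK_add_two_pi, mul_neg]

end IsReducedOrbit

/-- A trial loop of negative action, up to the defect in its equation of motion, forces a closed
geodesic of length at most `2π`. -/
theorem PerturbationBounds.systole_le_of_reducedAction_le (X : PerturbationBounds f β C)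
    (h : IsSmallParameter β C t) {ζ₁ : ℍ[ℝ]} (hζ₁ : ‖ζ₁‖ = 1) {w₁ G₁ : ℝ → ℍ[ℝ]} {e : ℝ}
    (hw₁ : IsMeanZeroLoop (mulRightIsometry unitK norm_unitK) w₁ G₁)
    (he : ∀ θ, ‖G₁ θ - rotGradient (perturbation f β t) θ (ζ₁ + w₁ θ)‖ ≤ e)
    (hneg : reducedAction (rotHamiltonian (perturbation f β t)) ζ₁ w₁ G₁ + 300 * e ^ 2 ≤ 0) :
    systole (confMetric fun x => (1 + t * f x) ^ 2) ≤ 2 * π := by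
  obtain ⟨ζ, w, hζ_lower, hζ_upper, hper, hw, hw_le, haction⟩ :=
    (X.isSmallHamiltonian h).exists_periodic_solution inner_mul_unitK (X.lt_neg_integral h)
      hζ₁ hw₁ he hneg
  have hsmall := h.sqrt_mul_le_const X.one_le
  have horbit : IsReducedOrbit f β t ζ w :=
    { periodic := hper
      hasDerivAt := hw
      half_lt_norm θ := by linarith [hw_le θ, norm_le_add_norm_add ζ (w θ)]
      norm_lt_two θ := by linarith [hw_le θ, norm_add_le ζ (w θ)] }
  exact horbit.systole_le X h haction

end ReducedOrbit

section SecondVariation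

open Filter Quaternion Topology
open scoped ContDiff Gradient

variable {f : Sph → ℝ} {β : ContDiffBump (0 : ℝ)} {B C t : ℝ} {z ζ : ℍ[ℝ]} {w : ℝ → ℍ[ℝ]}

/-- `f` along the great circle through `ζ i ζ̄` and `ζ j ζ̄`, parametrized by arc length. -/
def circleRestrict (f : Sph → ℝ) (ζ : ℍ[ℝ]) (θ : ℝ) : ℝ := hopfLift f (ζ * expK θ)

theorem continuous_circleRestrict (hf : SmoothSph f) (hζ : ‖ζ‖ = 1) :
    Continuous (circleRestrict f ζ) :=
  continuous_iff_continuousAt.mpr fun θ =>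
    ContinuousAt.comp (g := hopfLift f)
      (contDiffAt_hopfLift hf (mul_expK_ne_zero hζ θ)).continuousAt
      (continuous_const.mul continuous_expK).continuousAt

/-- The derivative at `t = 0` of the gradient of the perturbation in the rotating frame. -/
def linearForce (f : Sph → ℝ) (β : ContDiffBump (0 : ℝ)) (ζ : ℍ[ℝ]) (θ : ℝ) : ℍ[ℝ] :=
  -(1 / 4 : ℝ) • rotGradient (fun z => linearTerm f β (0, z)) θ ζ

theorem continuous_linearForce (X : PerturbationBounds f β C) (ζ : ℍ[ℝ]) :
    Continuous (linearForce f β ζ) :=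
  ((continuous_rotGradient (X.linear.slice 0)).comp (Continuous.prodMk_left ζ)).const_smul
    (-(1 / 4) : ℝ)

theorem periodic_linearForce (f : Sph → ℝ) (β : ContDiffBump (0 : ℝ)) (ζ : ℍ[ℝ]) :
    Function.Periodic (linearForce f β ζ) (2 * π) := fun θ => by
  rw [linearForce, linearForce, periodic_rotGradient (linearTerm_neg f β 0)]

theorem PerturbationBounds.gradient_penaltyTerm_zero (X : PerturbationBounds f β C)
    (hz : ‖z‖ = 1) : ∇ (fun z => penaltyTerm f β (0, z)) z = 0 := by
  refine ext_inner_right ℝ fun v => ?_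
  have hline : HasDerivAt (fun s : ℝ => z + s • v) v 0 := by
    simpa using ((hasDerivAt_id (0 : ℝ)).smul_const v).const_add z
  rw [inner_zero_left]
  refine inner_gradient_eq_of_hasDerivAt (X.penalty.slice 0).differentiable.differentiableAt <|
    (((hline.norm_sq.sub_const 1).pow 2).congr_of_eventuallyEq ?_).congr_deriv ?_
  · have htendsto : Filter.Tendsto (fun s : ℝ => z + s • v) (nhds 0) (nhds z) := by
      simpa using hline.continuousAt.tendsto
    filter_upwards [htendsto.eventually
      (eventually_mem_annulus (hz.symm ▸ by norm_num) (hz.symm ▸ by norm_num))] with s hs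
    exact penaltyTerm_zero f β hs.1.le hs.2.le
  · simp [hz]

theorem PerturbationBounds.gradient_perturbation (X : PerturbationBounds f β C) (t : ℝ)
    (z : ℍ[ℝ]) :
    ∇ (perturbation f β t) z = -(t / 4) • ∇ (fun z => linearTerm f β (t, z)) z -
      (√|t| / 8) • ∇ (fun z => penaltyTerm f β (t, z)) z := by
  have hlinear := ((X.linear.slice t).differentiable z).hasFDerivAt.const_mul (-(t / 4))
  have hpenalty := ((X.penalty.slice t).differentiable z).hasFDerivAt.const_mul (√|t| / 8)
  refine ext_inner_right ℝ fun v => ?_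
  rw [inner_gradient_left, show fderiv ℝ (perturbation f β t) z = _ from
    (hlinear.sub hpenalty).fderiv, inner_sub_left, real_inner_smul_left, real_inner_smul_left,
    inner_gradient_left, inner_gradient_left]
  rfl

theorem HasC2Bound.norm_gradient_slice_sub_le {V : Type*} [NormedAddCommGroup V]
    [InnerProductSpace ℝ V] [CompleteSpace V] {Q : ℝ × V → ℝ} (hQ : HasC2Bound Q C) (t : ℝ)
    (x : V) : ‖∇ (fun y => Q (t, y)) x - ∇ (fun y => Q (0, y)) x‖ ≤ C * |t| := by
  rw [norm_gradient_sub_gradient]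
  simpa [Prod.norm_def] using hQ.norm_fderiv_slice_sub_le 0 t x x

theorem PerturbationBounds.norm_smul_linearForce_sub_le (X : PerturbationBounds f β C)
    (h : IsSmallParameter β C t) (hζ : ‖ζ‖ = 1) (θ : ℝ) :
    ‖t • linearForce f β ζ θ - rotGradient (perturbation f β t) θ ζ‖ ≤ √|t| * |t| * C := by
  set z := ζ * expK θ
  have hz : ‖z‖ = 1 := (norm_mul_expK ζ θ).trans hζ
  set R := (t / 4) • (∇ (fun z => linearTerm f β (t, z)) z - ∇ (fun z => linearTerm f β (0, z)) z) +
    (√|t| / 8) • (∇ (fun z => penaltyTerm f β (t, z)) z - ∇ (fun z => penaltyTerm f β (0, z)) z)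
  have heq : t • linearForce f β ζ θ - rotGradient (perturbation f β t) θ ζ =
      R * star (expK θ) := by
    rw [linearForce, rotGradient, rotGradient, X.gradient_perturbation, ← smul_mul_assoc,
      ← smul_mul_assoc, ← sub_mul]
    congr 1
    simp only [R, X.gradient_penaltyTerm_zero hz]
    module
  have hlinear := mul_le_mul_of_nonneg_left (X.linear.norm_gradient_slice_sub_le t z)
    (by positivity : 0 ≤ |t| / 4)
  have hpenalty := mul_le_mul_of_nonneg_left (X.penalty.norm_gradient_slice_sub_le t z)
    (by positivity : 0 ≤ √|t| / 8)
  rw [heq, norm_mul_star_expK]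
  refine (norm_add_le _ _).trans ?_
  rw [norm_smul, norm_smul, Real.norm_eq_abs, Real.norm_eq_abs, abs_div,
    abs_of_nonneg (by positivity : 0 ≤ √|t| / 8), abs_of_nonneg (by norm_num : (0 : ℝ) ≤ 4)]
  have hsqrt : |t| ≤ √|t| := by nlinarith [sq_sqrt_abs t, h.sqrt_le X.one_le, h.sqrt_pos]
  have hCt : 0 ≤ C * |t| := by linarith [X.one_le, mul_nonneg X.linear.nonneg (abs_nonneg t)]
  nlinarith [mul_le_mul_of_nonneg_right hsqrt hCt, mul_nonneg h.sqrt_pos.le hCt]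

theorem abs_reparametrized_sub_taylor_le {a s : ℝ} (ha : |a| ≤ 1 / 2) (hs : 0 ≤ s) :
    |1 / 4 * (1 / (1 + a) - s / 2 * (1 / (1 + a) - 1) ^ 2 - 1) - (-(1 / 4) * a + 1 / 4 * a ^ 2)| ≤
      |a| ^ 3 / 2 + s * |a| ^ 2 / 2 := by
  have hpos : 1 / 2 ≤ 1 + a := by linarith [neg_le_of_abs_le ha]
  set i := 1 / (1 + a)
  have hi_mul : i * (1 + a) = 1 := div_mul_cancel₀ 1 (by linarith)
  have hi_pos : 0 < i := by positivity
  have hi_le : i ≤ 2 := by nlinarith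
  have hrest : 1 / 4 * (i - s / 2 * (i - 1) ^ 2 - 1) - (-(1 / 4) * a + 1 / 4 * a ^ 2) =
      -(1 / 4) * a ^ 3 * i - s / 8 * a ^ 2 * i ^ 2 := by
    rw [show i - 1 = -a * i by linear_combination hi_mul]
    linear_combination (1 / 4) * (1 - a + a ^ 2) * hi_mul
  rw [hrest]
  refine (abs_sub _ _).trans (add_le_add ?_ ?_)
  · rw [abs_mul, abs_mul, abs_pow, abs_of_pos hi_pos, abs_neg, abs_of_pos (by norm_num)]
    nlinarith [mul_le_mul_of_nonneg_left hi_le (pow_nonneg (abs_nonneg a) 3)]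
  · rw [abs_of_nonneg (by positivity), ← sq_abs]
    calc s / 8 * |a| ^ 2 * i ^ 2 ≤ s / 8 * |a| ^ 2 * 2 ^ 2 := by gcongr
      _ = s * |a| ^ 2 / 2 := by ring

theorem PerturbationBounds.abs_rotHamiltonian_sub_le (X : PerturbationBounds f β C)
    (h : IsSmallParameter β C t) (hζ : ‖ζ‖ = 1) (hB : ∀ x, |f x| ≤ B) (θ : ℝ) :
    |rotHamiltonian (perturbation f β t) θ ζ -
        (-(1 / 4) * (t * circleRestrict f ζ θ) + 1 / 4 * (t * circleRestrict f ζ θ) ^ 2)| ≤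
      √|t| * t ^ 2 * (B ^ 3 + B ^ 2) := by
  have hz : ‖ζ * expK θ‖ = 1 := (norm_mul_expK ζ θ).trans hζ
  have hF : |circleRestrict f ζ θ| ≤ B := hB _
  have hB₀ : 0 ≤ B := (abs_nonneg _).trans hF
  have hsmall : |t * circleRestrict f ζ θ| ≤ 1 / 2 := by
    rw [abs_mul]
    exact (mul_le_mul_of_nonneg_right (h.abs_le.trans β.rIn_lt_rOut.le) (abs_nonneg _)).trans
      (X.rOut_mul_abs_le _)
  have htF : |t * circleRestrict f ζ θ| ≤ |t| * B := by
    rw [abs_mul]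
    gcongr
  have hsqrt : |t| ≤ √|t| := by nlinarith [sq_sqrt_abs t, h.sqrt_le X.one_le, h.sqrt_pos]
  rw [rotHamiltonian, X.perturbation_eq h (by rw [hz]; norm_num) (by rw [hz]; norm_num),
    liftedHamiltonian, hz, one_pow]
  refine (abs_reparametrized_sub_taylor_le hsmall h.sqrt_pos.le).trans ?_
  calc |t * circleRestrict f ζ θ| ^ 3 / 2 + √|t| * |t * circleRestrict f ζ θ| ^ 2 / 2
      ≤ (|t| * B) ^ 3 / 2 + √|t| * (|t| * B) ^ 2 / 2 := by gcongr
    _ = (|t| * (|t| ^ 2 * B ^ 3) + √|t| * (|t| ^ 2 * B ^ 2)) / 2 := by ring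
    _ ≤ (√|t| * (|t| ^ 2 * B ^ 3) + √|t| * (|t| ^ 2 * B ^ 2)) / 2 := by gcongr
    _ = √|t| * t ^ 2 * (B ^ 3 + B ^ 2) / 2 := by rw [sq_abs]; ring
    _ ≤ √|t| * t ^ 2 * (B ^ 3 + B ^ 2) := half_le_self (by positivity)

/-- The Funk transform: the integral of `f` over the great circle through `ζ i ζ̄` and `ζ j ζ̄`. -/
def funkTransform (f : Sph → ℝ) (ζ : ℍ[ℝ]) : ℝ := ∫ θ in (0 : ℝ)..2 * π, circleRestrict f ζ θ

/-- Minus the coefficient of `t²` in the action of the loop `ζ + t w`, for `w` a solution of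
`w' = (linearForce - periodAvg linearForce) k`. -/
def secondVariation (f : Sph → ℝ) (β : ContDiffBump (0 : ℝ)) (ζ : ℍ[ℝ]) (w : ℝ → ℍ[ℝ]) : ℝ :=
  ∫ θ in (0 : ℝ)..2 * π, (1 / 4 * circleRestrict f ζ θ ^ 2 + 1 / 2 * ⟪linearForce f β ζ θ, w θ⟫)

theorem PerturbationBounds.reducedAction_integrand_le (X : PerturbationBounds f β C)
    (h : IsSmallParameter β C t) (hζ : ‖ζ‖ = 1) (hB : ∀ x, |f x| ≤ B) {W : ℝ} {v : ℍ[ℝ]}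
    (hv : ‖v‖ ≤ W) (θ : ℝ) :
    1 / 2 * ⟪t • linearForce f β ζ θ, t • v⟫ -
        rotHamiltonian (perturbation f β t) θ (ζ + t • v) ≤
      1 / 4 * t * circleRestrict f ζ θ -
        t ^ 2 * (1 / 4 * circleRestrict f ζ θ ^ 2 + 1 / 2 * ⟪linearForce f β ζ θ, v⟫) +
        √|t| * t ^ 2 * (C * W ^ 2 + C * W + (B ^ 3 + B ^ 2)) := by
  have hC : 0 ≤ C := X.linear.nonneg
  have htv : ‖t • v‖ ≤ |t| * W := by
    rw [norm_smul, Real.norm_eq_abs]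
    gcongr
  have : 0 ≤ |t| * W := (norm_nonneg _).trans htv
  have hsecond := (X.isSmallHamiltonian h).half_inner_sub_hamiltonian_le θ ζ (t • v)
    (t • linearForce f β ζ θ)
  have hcenter := (abs_le.mp (X.abs_rotHamiltonian_sub_le h hζ hB θ)).1
  have hdefect : ‖t • linearForce f β ζ θ - rotGradient (perturbation f β t) θ ζ‖ * ‖t • v‖ ≤
      √|t| * t ^ 2 * (C * W) := by
    calc _ ≤ √|t| * |t| * C * (|t| * W) :=
          mul_le_mul (X.norm_smul_linearForce_sub_le h hζ θ) htv (norm_nonneg _) (by positivity)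
      _ = √|t| * t ^ 2 * (C * W) := by rw [← sq_abs t]; ring
  have hquad : √|t| * C * ‖t • v‖ ^ 2 ≤ √|t| * t ^ 2 * (C * W ^ 2) := by
    calc _ ≤ √|t| * C * (|t| * W) ^ 2 := by gcongr
      _ = √|t| * t ^ 2 * (C * W ^ 2) := by rw [← sq_abs t]; ring
  rw [real_inner_smul_left, real_inner_smul_right] at hsecond ⊢
  linarith

theorem PerturbationBounds.reducedAction_le (X : PerturbationBounds f β C)
    (h : IsSmallParameter β C t) (hζ : ‖ζ‖ = 1) (hB : ∀ x, |f x| ≤ B) {W : ℝ}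
    (hwc : Continuous w) (hw : ∀ θ, ‖w θ‖ ≤ W) :
    reducedAction (rotHamiltonian (perturbation f β t)) ζ (fun θ => t • w θ)
        (fun θ => t • linearForce f β ζ θ) ≤
      1 / 4 * t * funkTransform f ζ - t ^ 2 * secondVariation f β ζ w +
        2 * π * (√|t| * t ^ 2 * (C * W ^ 2 + C * W + (B ^ 3 + B ^ 2))) := by
  have hF := continuous_circleRestrict X.smooth hζ
  have hforce := continuous_linearForce X ζ
  have hK : Continuous fun θ => rotHamiltonian (perturbation f β t) θ (ζ + t • w θ) :=
    (X.isSmallHamiltonian h).continuous_hamiltonian_comp ζ (hwc.const_smul t)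
  refine (intervalIntegral.integral_mono (μ := volume) two_pi_pos.le
    (Continuous.intervalIntegrable (by fun_prop) _ _)
    (Continuous.intervalIntegrable (by fun_prop) _ _)
    fun θ => X.reducedAction_integrand_le h hζ hB (hw θ) θ).trans_eq ?_
  rw [intervalIntegral.integral_add (Continuous.intervalIntegrable (by fun_prop) _ _) (by simp),
    intervalIntegral.integral_sub (Continuous.intervalIntegrable (by fun_prop) _ _)
      (Continuous.intervalIntegrable (by fun_prop) _ _),
    intervalIntegral.integral_const_mul (1 / 4 * t), intervalIntegral.integral_const_mul (t ^ 2),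
    intervalIntegral.integral_const, smul_eq_mul, sub_zero]
  rfl

theorem PerturbationBounds.abs_le (X : PerturbationBounds f β C) (x : Sph) :
    |f x| ≤ 1 / 2 / β.rOut := by
  rw [le_div_iff₀ β.rOut_pos, mul_comm]
  exact X.rOut_mul_abs_le x

theorem PerturbationBounds.exists_systole_le_of_action_le (X : PerturbationBounds f β C)
    (hζ : ‖ζ‖ = 1)
    (hw : IsMeanZeroLoop (mulRightIsometry unitK norm_unitK) w (linearForce f β ζ)) :
    ∃ A, 0 < A ∧ ∀ t, IsSmallParameter β C t →
      1 / 4 * t * funkTransform f ζ - t ^ 2 * secondVariation f β ζ w + A * √|t| * t ^ 2 ≤ 0 →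
      systole (confMetric fun x => (1 + t * f x) ^ 2) ≤ 2 * π := by
  obtain ⟨W, hW⟩ := hw.exists_norm_le
  have hW₀ : 0 ≤ W := (norm_nonneg _).trans (hW 0)
  have hC := X.linear.nonneg
  have hB := X.abs_le
  have hrOut := β.rOut_pos
  set B := 1 / 2 / β.rOut
  set R := C * W ^ 2 + C * W + (B ^ 3 + B ^ 2)
  refine ⟨2 * π * R + 300 * (C * (1 + W)) ^ 2, by positivity [X.one_le], fun t h hneg => ?_⟩
  have hdefect : ∀ θ, ‖t • linearForce f β ζ θ -
      rotGradient (perturbation f β t) θ (ζ + t • w θ)‖ ≤ √|t| * |t| * (C * (1 + W)) := fun θ => by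
    have hlip := (X.isSmallHamiltonian h).norm_sub_gradient_add_le θ ζ (t • w θ)
      (t • linearForce f β ζ θ)
    have htw : √|t| * C * ‖t • w θ‖ ≤ √|t| * C * (|t| * W) := by
      rw [norm_smul, Real.norm_eq_abs]
      gcongr
      exact hW θ
    linarith [X.norm_smul_linearForce_sub_le h hζ θ]
  have hsq : (√|t| * |t| * (C * (1 + W))) ^ 2 ≤ √|t| * t ^ 2 * (C * (1 + W)) ^ 2 := by
    rw [← sq_abs t]
    calc _ = √|t| * (√|t| * |t| ^ 2 * (C * (1 + W)) ^ 2) := by ring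
      _ ≤ 1 * (√|t| * |t| ^ 2 * (C * (1 + W)) ^ 2) := by
          gcongr
          exact (h.sqrt_le X.one_le).trans (by norm_num)
      _ = _ := one_mul _
  refine X.systole_le_of_reducedAction_le h hζ (hw.const_smul t) hdefect ?_
  linarith [X.reducedAction_le h hζ hB hw.continuous hW]

theorem eventually_isSmallParameter (β : ContDiffBump (0 : ℝ)) (C : ℝ) :
    ∀ᶠ t in 𝓝[≠] 0, IsSmallParameter β C t := by
  have hsqrt : ∀ᶠ t in 𝓝 (0 : ℝ), √|t| * (10 ^ 4 * C ^ 2) < 1 :=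
    ((by fun_prop : Continuous fun t : ℝ => √|t| * (10 ^ 4 * C ^ 2)).tendsto' 0 0
      (by simp)).eventually_lt_const one_pos
  have habs : ∀ᶠ t in 𝓝 (0 : ℝ), |t| < β.rIn :=
    (continuous_abs.tendsto' 0 0 abs_zero).eventually_lt_const β.rIn_pos
  filter_upwards [eventually_mem_nhdsWithin, hsqrt.filter_mono nhdsWithin_le_nhds,
    habs.filter_mono nhdsWithin_le_nhds] with t h₀ h₁ h₂
  exact ⟨h₀, h₁.le, h₂.le⟩

theorem PerturbationBounds.eventually_systole_le_of_mul_funkTransform_neg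
    (X : PerturbationBounds f β C) (hζ : ‖ζ‖ = 1) (hS : funkTransform f ζ ≠ 0) :
    ∀ᶠ t in 𝓝[≠] 0, t * funkTransform f ζ < 0 →
      systole (confMetric fun x => (1 + t * f x) ^ 2) ≤ 2 * π := by
  have hloop := isMeanZeroLoop_meanZeroPrimitive (J := mulRightIsometry unitK norm_unitK)
    (continuous_linearForce X ζ) (periodic_linearForce f β ζ)
  obtain ⟨A, hA, hsystole⟩ := X.exists_systole_le_of_action_le hζ hloop
  set S := funkTransform f ζ
  set Q := secondVariation f β ζ _
  have hsmall : ∀ᶠ t in 𝓝 (0 : ℝ), |t| * (4 * (|Q| + A)) < |S| :=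
    ((by fun_prop : Continuous fun t : ℝ => |t| * (4 * (|Q| + A))).tendsto' 0 0
      (by simp)).eventually_lt_const (abs_pos.mpr hS)
  filter_upwards [eventually_isSmallParameter β C, hsmall.filter_mono nhdsWithin_le_nhds]
    with t ht htt hneg
  refine hsystole t ht ?_
  have htS : t * S = -(|t| * |S|) := by rw [← abs_mul, abs_of_neg hneg, neg_neg]
  have herror : A * √|t| * t ^ 2 ≤ A * 1 * t ^ 2 := by
    gcongr
    exact (ht.sqrt_le X.one_le).trans (by norm_num)
  have hQ : -(t ^ 2 * Q) ≤ t ^ 2 * |Q| := by nlinarith [neg_abs_le Q, sq_nonneg t]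
  have htt' : t ^ 2 * (4 * (|Q| + A)) ≤ |t| * |S| := by
    rw [← sq_abs t, sq, mul_assoc]
    exact mul_le_mul_of_nonneg_left htt.le (abs_nonneg t)
  linarith

theorem PerturbationBounds.eventually_systole_le_of_secondVariation_pos
    (X : PerturbationBounds f β C) (hζ : ‖ζ‖ = 1)
    (hw : IsMeanZeroLoop (mulRightIsometry unitK norm_unitK) w (linearForce f β ζ))
    (hS : funkTransform f ζ = 0) (hQ : 0 < secondVariation f β ζ w) :
    ∀ᶠ t in 𝓝[≠] 0, systole (confMetric fun x => (1 + t * f x) ^ 2) ≤ 2 * π := by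
  obtain ⟨A, -, hsystole⟩ := X.exists_systole_le_of_action_le hζ hw
  have hsmall : ∀ᶠ t in 𝓝 (0 : ℝ), A * √|t| < secondVariation f β ζ w :=
    ((by fun_prop : Continuous fun t : ℝ => A * √|t|).tendsto' 0 0
      (by simp)).eventually_lt_const hQ
  filter_upwards [eventually_isSmallParameter β C, hsmall.filter_mono nhdsWithin_le_nhds]
    with t ht htt
  refine hsystole t ht ?_
  rw [hS]
  nlinarith [mul_le_mul_of_nonneg_right htt.le (sq_nonneg t)]

end SecondVariation

section CircleFrame

open Quaternion
open scoped Gradient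

variable {f : Sph → ℝ} {β : ContDiffBump (0 : ℝ)} {C : ℝ} {u z ζ : ℍ[ℝ]}

theorem inner_smul_conjVec_add_add_eq (hz : ‖z‖ = 1) (m : E3) :
    ⟪m, conjVec unitI z⟫ • conjVec unitI z + ⟪m, conjVec unitJ z⟫ • conjVec unitJ z +
      ⟪m, conjVec unitK z⟫ • conjVec unitK z = m := by
  have hnorm : z.re ^ 2 + z.imI ^ 2 + z.imJ ^ 2 + z.imK ^ 2 = 1 := by
    rw [← norm_sq_quaternion_eq, hz, one_pow]
  have hscaled : ⟪m, conjVec unitI z⟫ • conjVec unitI z + ⟪m, conjVec unitJ z⟫ • conjVec unitJ z +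
      ⟪m, conjVec unitK z⟫ • conjVec unitK z =
        (z.re ^ 2 + z.imI ^ 2 + z.imJ ^ 2 + z.imK ^ 2) ^ 2 • m := by
    simp only [inner_E3_eq]
    ext i
    fin_cases i <;> simp [conjVec, imVec_apply] <;> ring
  rw [hscaled, hnorm, one_pow, one_smul]

theorem mulVecJ_add (m n : E3) (z : ℍ[ℝ]) : mulVecJ (m + n) z = mulVecJ m z + mulVecJ n z := by
  ext <;> simp [mulVecJ] <;> ring

theorem mulVecJ_smul (r : ℝ) (n : E3) (z : ℍ[ℝ]) : mulVecJ (r • n) z = r • mulVecJ n z := by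
  ext <;> simp [mulVecJ] <;> ring

theorem mulVecJ_conjVec (hu : u.re = 0) (z : ℍ[ℝ]) :
    mulVecJ (conjVec u z) z = ‖z‖ ^ 2 • (z * u * unitJ) := by
  rw [mulVecJ, conjVec, imQuat_imVec (by rw [re_conj, hu, mul_zero]), mul_assoc (z * u),
    Quaternion.star_mul_self, normSq_eq_norm_mul_self, ← sq, ← Quaternion.coe_commutes,
    Quaternion.coe_mul_eq_smul, smul_mul_assoc]

theorem unitJ_mul_unitJ : unitJ * unitJ = -1 := by
  ext <;> simp

theorem unitK_mul_unitJ : unitK * unitJ = -unitI := by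
  ext <;> simp

theorem expK_mul_star_expK (θ : ℝ) : expK θ * star (expK θ) = 1 := by
  rw [Quaternion.self_mul_star, normSq_eq_norm_mul_self, norm_expK, one_mul, Quaternion.coe_one]

theorem star_expK_mul_unitK (θ : ℝ) : star (expK θ) * unitK = unitK * star (expK θ) := by
  rw [star_expK, unitK_mul_expK]

theorem conjVec_unitK_mul_expK (θ : ℝ) (z : ℍ[ℝ]) :
    conjVec unitK (z * expK θ) = conjVec unitK z := by
  rw [conjVec_mul, ← unitK_mul_expK, mul_assoc, expK_mul_star_expK, mul_one]

theorem expK_mul_unitI_mul_star_expK (θ : ℝ) :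
    expK θ * unitI * star (expK θ) = cos θ • unitI + sin θ • unitJ := by
  have hcos : cos θ = cos (θ / 2) ^ 2 - sin (θ / 2) ^ 2 := by
    rw [← cos_two_mul', mul_div_cancel₀ θ two_ne_zero]
  have hsin : sin θ = 2 * sin (θ / 2) * cos (θ / 2) := by
    rw [← sin_two_mul, mul_div_cancel₀ θ two_ne_zero]
  ext <;> simp [hcos, hsin] <;> ring

/-- The derivative of `f` along the great circle through `ζ i ζ̄` and `ζ j ζ̄`. -/
def tangentDeriv (f : Sph → ℝ) (ζ : ℍ[ℝ]) (θ : ℝ) : ℝ :=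
  fderiv ℝ (radialExt f) (conjVec unitI (ζ * expK θ)) (conjVec unitJ (ζ * expK θ))

/-- The derivative of `f` normal to the great circle through `ζ i ζ̄` and `ζ j ζ̄`. -/
def normalDeriv (f : Sph → ℝ) (ζ : ℍ[ℝ]) (θ : ℝ) : ℝ :=
  fderiv ℝ (radialExt f) (conjVec unitI (ζ * expK θ)) (conjVec unitK ζ)

theorem gradient_radialExt_eq (hf : SmoothSph f) (hζ : ‖ζ‖ = 1) (θ : ℝ) :
    ∇ (radialExt f) (conjVec unitI (ζ * expK θ)) =
      tangentDeriv f ζ θ • conjVec unitJ (ζ * expK θ) +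
        normalDeriv f ζ θ • conjVec unitK (ζ * expK θ) := by
  have hframe := inner_smul_conjVec_add_add_eq ((norm_mul_expK ζ θ).trans hζ)
    (∇ (radialExt f) (conjVec unitI (ζ * expK θ)))
  rw [inner_gradient_left, inner_gradient_left, inner_gradient_left,
    fderiv_radialExt_self hf (conjVec_unitI_ne_zero (mul_expK_ne_zero hζ θ)), zero_smul,
    zero_add] at hframe
  rw [← hframe, tangentDeriv, normalDeriv, conjVec_unitK_mul_expK]

theorem PerturbationBounds.inner_gradient_linearTerm_zero (X : PerturbationBounds f β C)
    (hz : ‖z‖ = 1) (v : ℍ[ℝ]) :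
    ⟪∇ (fun z => linearTerm f β (0, z)) z, v⟫ = 2 * hopfLift f z * ⟪z, v⟫ +
      ⟪∇ (radialExt f) (conjVec unitI z), conjVecPolar unitI z v⟫ := by
  have hz₀ : z ≠ 0 := norm_ne_zero_iff.mp (hz.symm ▸ one_ne_zero)
  have hline : HasDerivAt (fun s : ℝ => z + s • v) v 0 := by
    simpa using ((hasDerivAt_id (0 : ℝ)).smul_const v).const_add z
  have hlift : HasDerivAt (fun s : ℝ => hopfLift f (z + s • v))
      (fderiv ℝ (radialExt f) (conjVec unitI z) (conjVecPolar unitI z v)) 0 := by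
    refine HasFDerivAt.comp_hasDerivAt_of_eq 0
      (hasFDerivAt_radialExt X.smooth (conjVec_unitI_ne_zero hz₀)) ?_ (by simp)
    simpa using hasDerivAt_conjVec unitI hline
  refine inner_gradient_eq_of_hasDerivAt (X.linear.slice 0).differentiable.differentiableAt <|
    ((hline.norm_sq.fun_mul hlift).congr_of_eventuallyEq ?_).congr_deriv ?_
  · have htendsto : Filter.Tendsto (fun s : ℝ => z + s • v) (nhds 0) (nhds z) := by
      simpa using hline.continuousAt.tendsto
    filter_upwards [htendsto.eventually
      (eventually_mem_annulus (hz.symm ▸ by norm_num) (hz.symm ▸ by norm_num))] with s hs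
    rw [linearTerm, localize_eq _ (by simpa using β.rIn_pos.le) hs.1.le hs.2.le]
    simp [lengthFactor]
  · rw [inner_gradient_left, zero_smul, add_zero, hz]
    ring

theorem PerturbationBounds.gradient_linearTerm_zero_mul_unitK (X : PerturbationBounds f β C)
    (hz : ‖z‖ = 1) : ∇ (fun z => linearTerm f β (0, z)) z * unitK =
      (2 * hopfLift f z) • (z * unitK) +
        (2 : ℝ) • mulVecJ (∇ (radialExt f) (conjVec unitI z)) z := by
  refine ext_inner_right ℝ fun v => ?_
  rw [inner_mul_unitK, X.inner_gradient_linearTerm_zero hz, inner_add_left, real_inner_smul_left,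
    real_inner_smul_left, inner_mul_unitK, two_mul_inner_mulVecJ]
  ring

theorem PerturbationBounds.linearForce_mul_unitK (X : PerturbationBounds f β C) (hζ : ‖ζ‖ = 1)
    (θ : ℝ) :
    linearForce f β ζ θ * unitK =
      (1 / 2 * tangentDeriv f ζ θ) • ζ - (1 / 2 * circleRestrict f ζ θ) • (ζ * unitK) +
        (1 / 2 * normalDeriv f ζ θ) • (cos θ • (ζ * unitI) + sin θ • (ζ * unitJ)) := by
  have hz : ‖ζ * expK θ‖ = 1 := (norm_mul_expK ζ θ).trans hζ
  have hgrad := X.gradient_linearTerm_zero_mul_unitK hz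
  rw [gradient_radialExt_eq X.smooth hζ, mulVecJ_add, mulVecJ_smul, mulVecJ_smul,
    mulVecJ_conjVec re_unitJ, mulVecJ_conjVec re_unitK, mul_assoc _ unitJ, mul_assoc _ unitK,
    unitJ_mul_unitJ, unitK_mul_unitJ, hz, one_pow, one_smul, one_smul, mul_neg, mul_neg,
    mul_one] at hgrad
  have hunitK : ζ * expK θ * unitK * star (expK θ) = ζ * unitK := by
    rw [mul_assoc ζ, ← unitK_mul_expK, mul_assoc ζ, mul_assoc unitK, expK_mul_star_expK, mul_one]
  have hone : ζ * expK θ * star (expK θ) = ζ := by rw [mul_assoc, expK_mul_star_expK, mul_one]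
  have hunitI : ζ * expK θ * unitI * star (expK θ) = cos θ • (ζ * unitI) + sin θ • (ζ * unitJ) := by
    rw [mul_assoc ζ, mul_assoc ζ, expK_mul_unitI_mul_star_expK, mul_add, mul_smul_comm,
      mul_smul_comm]
  rw [linearForce, rotGradient, smul_mul_assoc, mul_assoc, star_expK_mul_unitK, ← mul_assoc, hgrad]
  simp only [add_mul, smul_mul_assoc, neg_mul, hunitK, hone, hunitI, circleRestrict]
  module

end CircleFrame

section Wirtinger

variable {a b : ℝ} {u v φ : ℝ → ℝ}

theorem fourierCoeffOn_deriv_of_eq (hab : a < b) {g g' : ℝ → ℂ}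
    (hg : ∀ x ∈ Set.uIcc a b, HasDerivAt g (g' x) x) (hg' : IntervalIntegrable g' volume a b)
    (hends : g b = g a) (n : ℤ) :
    fourierCoeffOn hab g' n = 2 * π * Complex.I * n / (b - a) * fourierCoeffOn hab g n := by
  rcases eq_or_ne n 0 with rfl | hn
  · simp [fourierCoeffOn_eq_integral, intervalIntegral.integral_eq_sub_of_hasDerivAt hg hg', hends]
  have hn' : (n : ℂ) ≠ 0 := Int.cast_ne_zero.mpr hn
  have hba : (b : ℂ) - a ≠ 0 := sub_ne_zero.mpr (Complex.ofReal_injective.ne hab.ne')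
  rw [fourierCoeffOn_of_hasDerivAt hab hn hg hg', hends, sub_self, mul_zero, zero_sub]
  field_simp [Complex.I_ne_zero, Complex.ofReal_ne_zero.mpr pi_ne_zero]

theorem fourierCoeffOn_sub (hab : a < b) {g h : ℝ → ℂ} (hg : IntervalIntegrable g volume a b)
    (hh : IntervalIntegrable h volume a b) (n : ℤ) :
    fourierCoeffOn hab (fun x => g x - h x) n =
      fourierCoeffOn hab g n - fourierCoeffOn hab h n := by
  have hcont : Continuous fun x : ℝ => fourier (-n) (x : AddCircle (b - a)) :=
    (map_continuous (fourier (-n))).comp (AddCircle.continuous_mk' _)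
  simp only [fourierCoeffOn_eq_integral, smul_sub]
  rw [intervalIntegral.integral_sub (hg.continuousOn_smul hcont.continuousOn)
    (hh.continuousOn_smul hcont.continuousOn), smul_sub]

theorem integral_eq_zero_of_hasDerivAt_of_eq {g g' : ℝ → ℝ} (hg : ∀ x, HasDerivAt g (g' x) x)
    (hg' : Continuous g') (hends : g b = g a) : ∫ x in a..b, g' x = 0 := by
  rw [intervalIntegral.integral_eq_sub_of_hasDerivAt (fun x _ => hg x)
    (hg'.intervalIntegrable _ _), hends, sub_self]

theorem integral_mul_forcing_eq (hu : ∀ x, HasDerivAt u (v x) x)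
    (hv : ∀ x, HasDerivAt v (φ x - u x) x) (hφ : Continuous φ) (hu_ends : u b = u a)
    (hv_ends : v b = v a) :
    ∫ x in a..b, u x * φ x = (∫ x in a..b, u x ^ 2) - ∫ x in a..b, v x ^ 2 := by
  have hcu : Continuous u := continuous_iff_continuousAt.mpr fun x => (hu x).continuousAt
  have hcv : Continuous v := continuous_iff_continuousAt.mpr fun x => (hv x).continuousAt
  have hparts := integral_eq_zero_of_hasDerivAt_of_eq (a := a) (b := b)
    (fun x => (hu x).fun_mul (hv x)) (by fun_prop) (by rw [hu_ends, hv_ends])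
  have hInt {g : ℝ → ℝ} (hg : Continuous g) : IntervalIntegrable g volume a b :=
    hg.intervalIntegrable _ _
  rw [← intervalIntegral.integral_sub (hInt (by fun_prop)) (hInt (by fun_prop)), ← sub_eq_zero,
    ← intervalIntegral.integral_sub (hInt (by fun_prop)) (hInt (by fun_prop)), ← hparts]
  congr 1 with x
  ring

/-- The Fourier coefficients over `[0, 2π]` of a real function. -/
def realFourierCoeff (g : ℝ → ℝ) : ℤ → ℂ := fourierCoeffOn two_pi_pos fun x => (g x : ℂ)

theorem realFourierCoeff_deriv {g g' : ℝ → ℝ} (hg : ∀ x, HasDerivAt g (g' x) x)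
    (hg' : Continuous g') (hends : g (2 * π) = g 0) (n : ℤ) :
    realFourierCoeff g' n = Complex.I * n * realFourierCoeff g n := by
  rw [realFourierCoeff, realFourierCoeff, fourierCoeffOn_deriv_of_eq two_pi_pos
    (fun x _ => (hg x).ofReal_comp)
    ((Complex.continuous_ofReal.comp hg').intervalIntegrable _ _) (by rw [hends])]
  have hπ : (π : ℂ) ≠ 0 := Complex.ofReal_ne_zero.mpr pi_ne_zero
  push_cast
  field_simp
  ring

theorem realFourierCoeff_sub {g h : ℝ → ℝ} (hg : Continuous g) (hh : Continuous h) (n : ℤ) :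
    realFourierCoeff (fun x => g x - h x) n = realFourierCoeff g n - realFourierCoeff h n := by
  have hInt {g : ℝ → ℝ} (hg : Continuous g) :
      IntervalIntegrable (fun x => (g x : ℂ)) volume 0 (2 * π) :=
    (Complex.continuous_ofReal.comp hg).intervalIntegrable _ _
  rw [realFourierCoeff, realFourierCoeff, realFourierCoeff,
    ← fourierCoeffOn_sub two_pi_pos (hInt hg) (hInt hh)]
  simp only [Complex.ofReal_sub]

theorem hasSum_sq_norm_realFourierCoeff {g : ℝ → ℝ} (hg : Continuous g) :
    HasSum (fun n => ‖realFourierCoeff g n‖ ^ 2)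
      ((2 * π)⁻¹ * ∫ x in (0 : ℝ)..2 * π, g x ^ 2) := by
  have hc : Continuous fun x => (g x : ℂ) := Complex.continuous_ofReal.comp hg
  obtain ⟨M, hM⟩ :=
    isCompact_Icc.exists_bound_of_continuousOn (s := Set.Icc 0 (2 * π)) hc.continuousOn
  have hL2 : MemLp (fun x => (g x : ℂ)) 2 (volume.restrict (Set.Ioc 0 (2 * π))) := by
    refine MemLp.of_bound hc.aestronglyMeasurable M ?_
    filter_upwards [ae_restrict_mem measurableSet_Ioc] with x hx
    exact hM x (Set.Ioc_subset_Icc_self hx)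
  simpa [realFourierCoeff] using hasSum_sq_fourierCoeffOn two_pi_pos hL2

theorem realFourierCoeff_zero_of_integral_eq_zero {g : ℝ → ℝ}
    (h : ∫ x in (0 : ℝ)..2 * π, g x = 0) : realFourierCoeff g 0 = 0 := by
  simp [realFourierCoeff, fourierCoeffOn_eq_integral, intervalIntegral.integral_ofReal, h]

theorem realFourierCoeff_forcing (hu : ∀ x, HasDerivAt u (v x) x)
    (hv : ∀ x, HasDerivAt v (φ x - u x) x) (hφ : Continuous φ) (hu_ends : u (2 * π) = u 0)
    (hv_ends : v (2 * π) = v 0) (n : ℤ) :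
    realFourierCoeff φ n = (1 - n ^ 2) * realFourierCoeff u n := by
  have hcu : Continuous u := continuous_iff_continuousAt.mpr fun x => (hu x).continuousAt
  have hcv : Continuous v := continuous_iff_continuousAt.mpr fun x => (hv x).continuousAt
  have hderiv := realFourierCoeff_deriv hv (hφ.sub hcu) hv_ends n
  rw [realFourierCoeff_sub hφ hcu, realFourierCoeff_deriv hu hcv hu_ends] at hderiv
  linear_combination hderiv + (n : ℂ) ^ 2 * realFourierCoeff u n * Complex.I_sq

theorem sq_norm_realFourierCoeff_deriv_sub (hu : ∀ x, HasDerivAt u (v x) x) (hv : Continuous v)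
    (hu_ends : u (2 * π) = u 0) (n : ℤ) :
    ‖realFourierCoeff v n‖ ^ 2 - ‖realFourierCoeff u n‖ ^ 2 =
      ((n : ℝ) ^ 2 - 1) * ‖realFourierCoeff u n‖ ^ 2 := by
  rw [realFourierCoeff_deriv hu hv hu_ends, norm_mul, norm_mul, Complex.norm_I, one_mul,
    Complex.norm_intCast, mul_pow, sq_abs]
  ring

theorem sq_norm_realFourierCoeff_le_deriv (hu : ∀ x, HasDerivAt u (v x) x) (hv : Continuous v)
    (hu_ends : u (2 * π) = u 0) (hmean : ∫ x in (0 : ℝ)..2 * π, u x = 0) (n : ℤ) :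
    0 ≤ ‖realFourierCoeff v n‖ ^ 2 - ‖realFourierCoeff u n‖ ^ 2 := by
  rcases eq_or_ne n 0 with rfl | hn
  · simp [realFourierCoeff_zero_of_integral_eq_zero hmean]
  · have hone : (1 : ℝ) ≤ (n : ℝ) ^ 2 :=
      mod_cast (one_le_sq_iff_one_le_abs n).mpr (Int.one_le_abs hn)
    rw [sq_norm_realFourierCoeff_deriv_sub hu hv hu_ends]
    exact mul_nonneg (by linarith) (sq_nonneg _)

-- Since `‖v̂‖² - ‖û‖² = (n² - 1) ‖û‖² ≥ 0` mode by mode, `0 ≤ ∫ u φ` forces `û` to be supported on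
-- the resonant modes `n = ±1`, where `φ̂ = (1 - n²) û` vanishes.
theorem integral_sq_eq_zero_of_integral_mul_nonneg (hu : ∀ x, HasDerivAt u (v x) x)
    (hv : ∀ x, HasDerivAt v (φ x - u x) x) (hφ : Continuous φ) (hu_ends : u (2 * π) = u 0)
    (hv_ends : v (2 * π) = v 0) (hmean : ∫ x in (0 : ℝ)..2 * π, φ x = 0)
    (hnonneg : 0 ≤ ∫ x in (0 : ℝ)..2 * π, u x * φ x) :
    ∫ x in (0 : ℝ)..2 * π, φ x ^ 2 = 0 := by
  have hcu : Continuous u := continuous_iff_continuousAt.mpr fun x => (hu x).continuousAt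
  have hcv : Continuous v := continuous_iff_continuousAt.mpr fun x => (hv x).continuousAt
  have hmean_u : ∫ x in (0 : ℝ)..2 * π, u x = 0 := by
    have hparts := integral_eq_zero_of_hasDerivAt_of_eq hv (hφ.sub hcu) hv_ends
    rwa [intervalIntegral.integral_sub (hφ.intervalIntegrable _ _) (hcu.intervalIntegrable _ _),
      hmean, zero_sub, neg_eq_zero] at hparts
  have hgap := sq_norm_realFourierCoeff_le_deriv hu hcv hu_ends hmean_u
  have hsum := (hasSum_sq_norm_realFourierCoeff hcv).sub (hasSum_sq_norm_realFourierCoeff hcu)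
  rw [integral_mul_forcing_eq hu hv hφ hu_ends hv_ends] at hnonneg
  have hsum_zero : (2 * π)⁻¹ * (∫ x in (0 : ℝ)..2 * π, v x ^ 2) -
      (2 * π)⁻¹ * ∫ x in (0 : ℝ)..2 * π, u x ^ 2 = 0 := by
    refine le_antisymm ?_ (hsum.nonneg hgap)
    rw [← mul_sub]
    exact mul_nonpos_of_nonneg_of_nonpos (inv_nonneg.mpr two_pi_pos.le) (by linarith)
  have hmodes (n : ℤ) : realFourierCoeff φ n = 0 := by
    have hzero := congrFun ((hasSum_zero_iff_of_nonneg hgap).mp (hsum_zero ▸ hsum)) n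
    rw [sq_norm_realFourierCoeff_deriv_sub hu hcv hu_ends, Pi.zero_apply, mul_eq_zero,
      sq_eq_zero_iff, norm_eq_zero, sub_eq_zero] at hzero
    rw [realFourierCoeff_forcing hu hv hφ hu_ends hv_ends]
    rcases hzero with hn | hn
    · rw [show (n : ℂ) ^ 2 = 1 from mod_cast hn, sub_self, zero_mul]
    · rw [hn, mul_zero]
  have hparseval := hasSum_sq_norm_realFourierCoeff hφ
  simp only [hmodes, norm_zero, ne_eq, OfNat.ofNat_ne_zero, not_false_eq_true, zero_pow]
    at hparseval
  exact (mul_eq_zero.mp (hparseval.unique hasSum_zero)).resolve_left (inv_ne_zero two_pi_pos.ne')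

theorem eq_zero_of_integral_sq_eq_zero (hφ : Continuous φ) (hper : Function.Periodic φ (2 * π))
    (h : ∫ x in (0 : ℝ)..2 * π, φ x ^ 2 = 0) (x : ℝ) : φ x = 0 := by
  by_contra hx
  obtain ⟨y, hy, hxy⟩ := hper.exists_mem_Ico₀ two_pi_pos x
  rw [hxy] at hx
  exact (intervalIntegral.integral_pos two_pi_pos (hφ.pow 2).continuousOn
    (fun _ _ => sq_nonneg _) ⟨y, ⟨hy.1, hy.2.le⟩, sq_pos_of_ne_zero hx⟩).ne' h

end Wirtinger

section CircleDerivatives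

open Quaternion

variable {f : Sph → ℝ} {ζ : ℍ[ℝ]}

theorem hasDerivAt_conjVec_unitI_mul_expK (ζ : ℍ[ℝ]) (θ : ℝ) :
    HasDerivAt (fun θ => conjVec unitI (ζ * expK θ)) (conjVec unitJ (ζ * expK θ)) θ := by
  simp only [conjVec_unitI_mul_expK, conjVec_unitJ_mul_expK]
  refine (((hasDerivAt_cos θ).smul_const _).add
    ((hasDerivAt_sin θ).smul_const _)).congr_deriv ?_
  module

theorem hasDerivAt_conjVec_unitJ_mul_expK (ζ : ℍ[ℝ]) (θ : ℝ) :
    HasDerivAt (fun θ => conjVec unitJ (ζ * expK θ)) (-conjVec unitI (ζ * expK θ)) θ := by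
  simp only [conjVec_unitI_mul_expK, conjVec_unitJ_mul_expK]
  refine (((hasDerivAt_cos θ).smul_const _).sub
    ((hasDerivAt_sin θ).smul_const _)).congr_deriv ?_
  module

theorem continuous_conjVec_mul_expK (u ζ : ℍ[ℝ]) : Continuous fun θ => conjVec u (ζ * expK θ) :=
  (contDiff_conjVec u).continuous.comp (continuous_const.mul continuous_expK)

theorem periodic_conjVec_mul_expK (u ζ : ℍ[ℝ]) :
    Function.Periodic (fun θ => conjVec u (ζ * expK θ)) (2 * π) := fun θ => by
  simp only [expK_add_two_pi, mul_neg, conjVec_neg_right]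

theorem continuous_fderiv_radialExt_apply {Y : Type*} [TopologicalSpace Y] (hf : SmoothSph f)
    {x v : Y → E3} (hx : Continuous x) (hv : Continuous v) (h0 : ∀ y, x y ≠ 0) :
    Continuous fun y => fderiv ℝ (radialExt f) (x y) (v y) := by
  refine Continuous.clm_apply (continuous_iff_continuousAt.mpr fun y => ?_) hv
  exact ContinuousAt.comp (g := fderiv ℝ (radialExt f))
    ((contDiffAt_radialExt hf (h0 y)).fderiv_right (m := 0) (by simp)).continuousAt hx.continuousAt

theorem continuous_normalDeriv (hf : SmoothSph f) (hζ : ‖ζ‖ = 1) : Continuous (normalDeriv f ζ) :=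
  continuous_fderiv_radialExt_apply hf (continuous_conjVec_mul_expK unitI ζ) continuous_const
    fun θ => conjVec_unitI_ne_zero (mul_expK_ne_zero hζ θ)

theorem continuous_tangentDeriv (hf : SmoothSph f) (hζ : ‖ζ‖ = 1) :
    Continuous (tangentDeriv f ζ) :=
  continuous_fderiv_radialExt_apply hf (continuous_conjVec_mul_expK unitI ζ)
    (continuous_conjVec_mul_expK unitJ ζ) fun θ => conjVec_unitI_ne_zero (mul_expK_ne_zero hζ θ)

theorem periodic_normalDeriv (f : Sph → ℝ) (ζ : ℍ[ℝ]) :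
    Function.Periodic (normalDeriv f ζ) (2 * π) :=
  (periodic_conjVec_mul_expK unitI ζ).comp fun x => fderiv ℝ (radialExt f) x (conjVec unitK ζ)

theorem periodic_circleRestrict (f : Sph → ℝ) (ζ : ℍ[ℝ]) :
    Function.Periodic (circleRestrict f ζ) (2 * π) :=
  (periodic_conjVec_mul_expK unitI ζ).comp (radialExt f)

theorem hasDerivAt_circleRestrict (hf : SmoothSph f) (hζ : ‖ζ‖ = 1) (θ : ℝ) :
    HasDerivAt (circleRestrict f ζ) (tangentDeriv f ζ θ) θ :=
  HasFDerivAt.comp_hasDerivAt θ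
    (hasFDerivAt_radialExt hf (conjVec_unitI_ne_zero (mul_expK_ne_zero hζ θ)))
    (hasDerivAt_conjVec_unitI_mul_expK ζ θ)

end CircleDerivatives

section SecondVariationSign

open Quaternion Topology

variable {f : Sph → ℝ} {β : ContDiffBump (0 : ℝ)} {C : ℝ} {ζ : ℍ[ℝ]} {w : ℝ → ℍ[ℝ]}

theorem PerturbationBounds.inner_linearForce (X : PerturbationBounds f β C) (hζ : ‖ζ‖ = 1)
    (v : ℍ[ℝ]) (θ : ℝ) : ⟪linearForce f β ζ θ, v⟫ =
      1 / 2 * (normalDeriv f ζ θ * cos θ * ⟪ζ * unitJ, v⟫ -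
        normalDeriv f ζ θ * sin θ * ⟪ζ * unitI, v⟫ -
        tangentDeriv f ζ θ * ⟪ζ * unitK, v⟫ - circleRestrict f ζ θ * ⟪ζ, v⟫) := by
  have hforce : linearForce f β ζ θ = -(linearForce f β ζ θ * unitK * unitK) := by
    rw [mul_assoc, unitK_mul_unitK, mul_neg_one, neg_neg]
  rw [hforce, X.linearForce_mul_unitK hζ]
  simp only [inner_quaternion_eq]
  simp
  ring

theorem PerturbationBounds.integral_linearForce_eq_zero (X : PerturbationBounds f β C)
    (hζ : ‖ζ‖ = 1) (hS : funkTransform f ζ = 0)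
    (hcos : ∫ θ in (0 : ℝ)..2 * π, normalDeriv f ζ θ * cos θ = 0)
    (hsin : ∫ θ in (0 : ℝ)..2 * π, normalDeriv f ζ θ * sin θ = 0) :
    ∫ θ in (0 : ℝ)..2 * π, linearForce f β ζ θ = 0 := by
  have hn := continuous_normalDeriv X.smooth hζ
  have ht := continuous_tangentDeriv X.smooth hζ
  have hF := continuous_circleRestrict X.smooth hζ
  have htan : ∫ θ in (0 : ℝ)..2 * π, tangentDeriv f ζ θ = 0 :=
    integral_eq_zero_of_hasDerivAt_of_eq (hasDerivAt_circleRestrict X.smooth hζ) ht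
      (by simpa using periodic_circleRestrict f ζ 0)
  refine ext_inner_left ℝ fun v => ?_
  rw [inner_zero_right, ← integral_inner_const v _ _ (continuous_linearForce X ζ)]
  simp only [real_inner_comm _ v, X.inner_linearForce hζ]
  have hInt {g : ℝ → ℝ} (hg : Continuous g) : IntervalIntegrable g volume 0 (2 * π) :=
    hg.intervalIntegrable _ _
  rw [intervalIntegral.integral_const_mul,
    intervalIntegral.integral_sub (hInt (by fun_prop)) (hInt (by fun_prop)),
    intervalIntegral.integral_sub (hInt (by fun_prop)) (hInt (by fun_prop)),
    intervalIntegral.integral_sub (hInt (by fun_prop)) (hInt (by fun_prop))]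
  simp only [intervalIntegral.integral_mul_const, hcos, hsin, htan]
  simp [show ∫ θ in (0 : ℝ)..2 * π, circleRestrict f ζ θ = 0 from hS]

theorem PerturbationBounds.inner_linearForce_mul_unitK (X : PerturbationBounds f β C)
    (hζ : ‖ζ‖ = 1) (θ : ℝ) :
    ⟪ζ, linearForce f β ζ θ * unitK⟫ = 1 / 2 * tangentDeriv f ζ θ ∧
      ⟪ζ * unitI, linearForce f β ζ θ * unitK⟫ = 1 / 2 * (normalDeriv f ζ θ * cos θ) ∧
      ⟪ζ * unitJ, linearForce f β ζ θ * unitK⟫ = 1 / 2 * (normalDeriv f ζ θ * sin θ) ∧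
      ⟪ζ * unitK, linearForce f β ζ θ * unitK⟫ = -(1 / 2) * circleRestrict f ζ θ := by
  have hsq : ζ.re ^ 2 + ζ.imI ^ 2 + ζ.imJ ^ 2 + ζ.imK ^ 2 = 1 := by
    rw [← norm_sq_quaternion_eq, hζ, one_pow]
  rw [X.linearForce_mul_unitK hζ]
  simp only [inner_quaternion_eq]
  refine ⟨?_, ?_, ?_, ?_⟩ <;> simp
  · linear_combination 1 / 2 * tangentDeriv f ζ θ * hsq
  · linear_combination 1 / 2 * (normalDeriv f ζ θ * cos θ) * hsq
  · linear_combination 1 / 2 * (normalDeriv f ζ θ * sin θ) * hsq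
  · linear_combination -(1 / 2) * circleRestrict f ζ θ * hsq

/-- The coefficient `sin θ ⟪ζ i, w⟫ - cos θ ⟪ζ j, w⟫` through which a loop `w` enters the second
variation along the great circle of `ζ`. -/
def jacobiCoord (ζ : ℍ[ℝ]) (w : ℝ → ℍ[ℝ]) (θ : ℝ) : ℝ :=
  sin θ * ⟪ζ * unitI, w θ⟫ - cos θ * ⟪ζ * unitJ, w θ⟫

theorem PerturbationBounds.secondVariation_eq (X : PerturbationBounds f β C) (hζ : ‖ζ‖ = 1)
    (hw : ∀ θ, HasDerivAt w (linearForce f β ζ θ * unitK) θ)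
    (hper : Function.Periodic w (2 * π)) :
    secondVariation f β ζ w =
      -(1 / 2) * ∫ θ in (0 : ℝ)..2 * π, jacobiCoord ζ w θ * (1 / 2 * normalDeriv f ζ θ) := by
  have hn := continuous_normalDeriv X.smooth hζ
  have ht := continuous_tangentDeriv X.smooth hζ
  have hF := continuous_circleRestrict X.smooth hζ
  have hwc : Continuous w := continuous_iff_continuousAt.mpr fun θ => (hw θ).continuousAt
  have hu : Continuous (jacobiCoord ζ w) := by unfold jacobiCoord; fun_prop
  have hFper : circleRestrict f ζ (2 * π) = circleRestrict f ζ 0 := by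
    simpa using periodic_circleRestrict f ζ 0
  have hwper : w (2 * π) = w 0 := by simpa using hper 0
  set a : ℝ → ℝ := fun θ => ⟪ζ, w θ⟫ with ha
  set b : ℝ → ℝ := fun θ => ⟪ζ * unitK, w θ⟫ with hb
  have hbdry : ∀ θ, HasDerivAt (fun θ => (a θ - circleRestrict f ζ θ) * b θ)
      (-(1 / 2) * tangentDeriv f ζ θ * b θ -
        1 / 2 * (a θ - circleRestrict f ζ θ) * circleRestrict f ζ θ) θ := fun θ => by
    obtain ⟨ha', -, -, hb'⟩ := X.inner_linearForce_mul_unitK hζ θ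
    refine ((((innerSL ℝ ζ).hasFDerivAt.comp_hasDerivAt θ (hw θ)).sub
      (hasDerivAt_circleRestrict X.smooth hζ θ)).mul
      ((innerSL ℝ (ζ * unitK)).hasFDerivAt.comp_hasDerivAt θ (hw θ))).congr_deriv ?_
    simp only [Function.comp_apply, innerSL_apply_apply, Pi.sub_apply, ha', hb', ha, hb]
    ring
  have hbdry_int := integral_eq_zero_of_hasDerivAt_of_eq hbdry (by fun_prop)
    (a := 0) (b := 2 * π) (by simp only [ha, hb, hFper, hwper])
  calc secondVariation f β ζ w
      = ∫ θ in (0 : ℝ)..2 * π, (1 / 2 * (-(1 / 2) * tangentDeriv f ζ θ * b θ -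
          1 / 2 * (a θ - circleRestrict f ζ θ) * circleRestrict f ζ θ) +
          -(1 / 2) * (jacobiCoord ζ w θ * (1 / 2 * normalDeriv f ζ θ))) := by
        refine intervalIntegral.integral_congr fun θ _ => ?_
        simp only [X.inner_linearForce hζ, jacobiCoord, ha, hb]
        ring
    _ = _ := by
        rw [intervalIntegral.integral_add
          (Continuous.intervalIntegrable (by fun_prop) _ _)
          (Continuous.intervalIntegrable (by fun_prop) _ _),
          intervalIntegral.integral_const_mul, hbdry_int, intervalIntegral.integral_const_mul,
          mul_zero, zero_add]

theorem PerturbationBounds.hasDerivAt_jacobiCoord (X : PerturbationBounds f β C) (hζ : ‖ζ‖ = 1)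
    (hw : ∀ θ, HasDerivAt w (linearForce f β ζ θ * unitK) θ) (θ : ℝ) :
    HasDerivAt (jacobiCoord ζ w) (cos θ * ⟪ζ * unitI, w θ⟫ + sin θ * ⟪ζ * unitJ, w θ⟫) θ ∧
      HasDerivAt (fun θ => cos θ * ⟪ζ * unitI, w θ⟫ + sin θ * ⟪ζ * unitJ, w θ⟫)
        (1 / 2 * normalDeriv f ζ θ - jacobiCoord ζ w θ) θ := by
  obtain ⟨-, hI, hJ, -⟩ := X.inner_linearForce_mul_unitK hζ θ
  have hI' := (innerSL ℝ (ζ * unitI)).hasFDerivAt.comp_hasDerivAt θ (hw θ)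
  have hJ' := (innerSL ℝ (ζ * unitJ)).hasFDerivAt.comp_hasDerivAt θ (hw θ)
  constructor
  · refine (((hasDerivAt_sin θ).mul hI').sub ((hasDerivAt_cos θ).mul hJ')).congr_deriv ?_
    simp only [Function.comp_apply, innerSL_apply_apply, hI, hJ]
    ring
  · refine (((hasDerivAt_cos θ).mul hI').add ((hasDerivAt_sin θ).mul hJ')).congr_deriv ?_
    simp only [Function.comp_apply, innerSL_apply_apply, hI, hJ, jacobiCoord]
    linear_combination 1 / 2 * normalDeriv f ζ θ * sin_sq_add_cos_sq θ

theorem PerturbationBounds.secondVariation_pos (X : PerturbationBounds f β C) (hζ : ‖ζ‖ = 1)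
    (hw : ∀ θ, HasDerivAt w (linearForce f β ζ θ * unitK) θ)
    (hper : Function.Periodic w (2 * π))
    (hmean : ∫ θ in (0 : ℝ)..2 * π, normalDeriv f ζ θ = 0) {θ₀ : ℝ}
    (hθ₀ : normalDeriv f ζ θ₀ ≠ 0) : 0 < secondVariation f β ζ w := by
  have hwper : w (2 * π) = w 0 := by simpa using hper 0
  have hn : Continuous fun θ => 1 / 2 * normalDeriv f ζ θ :=
    continuous_const.mul (continuous_normalDeriv X.smooth hζ)
  by_contra! hneg
  rw [X.secondVariation_eq hζ hw hper] at hneg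
  have hsq := integral_sq_eq_zero_of_integral_mul_nonneg
    (fun θ => (X.hasDerivAt_jacobiCoord hζ hw θ).1) (fun θ => (X.hasDerivAt_jacobiCoord hζ hw θ).2)
    hn (by simp [jacobiCoord, hwper]) (by simp [hwper])
    (by rw [intervalIntegral.integral_const_mul, hmean, mul_zero]) (by linarith)
  have hzero := eq_zero_of_integral_sq_eq_zero hn
    (fun θ => by simp only [periodic_normalDeriv f ζ θ]) hsq θ₀
  exact hθ₀ (by linarith)

theorem PerturbationBounds.eventually_systole_le_of_normalDeriv_ne_zero
    (X : PerturbationBounds f β C) (hζ : ‖ζ‖ = 1) (hS : funkTransform f ζ = 0)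
    (hcos : ∫ θ in (0 : ℝ)..2 * π, normalDeriv f ζ θ * cos θ = 0)
    (hsin : ∫ θ in (0 : ℝ)..2 * π, normalDeriv f ζ θ * sin θ = 0)
    (hmean : ∫ θ in (0 : ℝ)..2 * π, normalDeriv f ζ θ = 0) {θ₀ : ℝ}
    (hθ₀ : normalDeriv f ζ θ₀ ≠ 0) :
    ∀ᶠ t in 𝓝[≠] 0, systole (confMetric fun x => (1 + t * f x) ^ 2) ≤ 2 * π := by
  have hw := isMeanZeroLoop_meanZeroPrimitive (J := mulRightIsometry unitK norm_unitK)
    (continuous_linearForce X ζ) (periodic_linearForce f β ζ)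
  refine X.eventually_systole_le_of_secondVariation_pos hζ hw hS
    (X.secondVariation_pos hζ (fun θ => ?_) hw.periodic hmean hθ₀)
  simpa [periodAvg, X.integral_linearForce_eq_zero hζ hS hcos hsin, mulRightIsometry_apply]
    using hw.hasDerivAt θ

end SecondVariationSign

section Reparametrization

variable {S r : ℝ → ℝ} {T L : ℝ}

theorem exists_add_period_inverse (hS : ∀ θ, HasDerivAt S (r θ) θ) (hr : ∀ θ, 0 < r θ)
    (hT : 0 < T) (hL : 0 < L) (hper : ∀ θ, S (θ + T) = S θ + L) :
    ∃ Θ : ℝ → ℝ, (∀ s, HasDerivAt Θ (r (Θ s))⁻¹ s) ∧ ∀ s, Θ (s + L) = Θ s + T := by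
  have hcont : Continuous S := continuous_iff_continuousAt.mpr fun θ => (hS θ).continuousAt
  have hmono : StrictMono S := strictMono_of_hasDerivAt_pos hS hr
  have hsubper : Function.Periodic (fun θ => S θ - L / T * θ) T := fun θ => by
    simp only [hper]
    field_simp
    ring
  have hInt (n : ℤ) : S (n * T) = S 0 + n * L := by
    have hn := hsubper.int_mul n 0
    simp only [zero_add, mul_zero, sub_zero] at hn
    rw [← hn]
    field_simp
    ring
  have hsurj : Function.Surjective S := fun y => by
    obtain ⟨n, hn⟩ := exists_int_gt ((y - S 0) / L)
    obtain ⟨m, hm⟩ := exists_int_lt ((y - S 0) / L)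
    rw [div_lt_iff₀ hL] at hn
    rw [lt_div_iff₀ hL] at hm
    exact mem_range_of_exists_le_of_exists_ge hcont ⟨m * T, by rw [hInt]; linarith⟩
      ⟨n * T, by rw [hInt]; linarith⟩
  let e : ℝ ≃o ℝ := hmono.orderIsoOfSurjective S hsurj
  have he : ∀ s, S (e.symm s) = s := e.apply_symm_apply
  refine ⟨e.symm, fun s => HasDerivAt.of_local_left_inverse e.symm.continuous.continuousAt
    (hS _) (hr _).ne' (Filter.Eventually.of_forall he), fun s => hmono.injective ?_⟩
  rw [hper, he, he]

end Reparametrization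

section GreatCircleGeodesic

open Quaternion
open scoped Gradient

variable {ρ f : Sph → ℝ} {ζ : ℍ[ℝ]}

theorem conjVec_unitI_mul_expK_mem_sphere (hζ : ‖ζ‖ = 1) (θ : ℝ) :
    conjVec unitI (ζ * expK θ) ∈ Metric.sphere (0 : E3) 1 := by
  rw [mem_sphere_zero_iff_norm, norm_conjVec_unitI, norm_mul_expK, hζ, one_pow]

theorem circleRestrict_eq (f : Sph → ℝ) (hζ : ‖ζ‖ = 1) (θ : ℝ) :
    circleRestrict f ζ θ = f ⟨_, conjVec_unitI_mul_expK_mem_sphere hζ θ⟩ :=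
  radialExt_coe f ⟨_, conjVec_unitI_mul_expK_mem_sphere hζ θ⟩

theorem funkTransform_pos (hρ : SmoothSph ρ) (hρ0 : ∀ x, 0 < ρ x) (hζ : ‖ζ‖ = 1) :
    0 < funkTransform ρ ζ :=
  intervalIntegral.intervalIntegral_pos_of_pos
    ((continuous_circleRestrict hρ hζ).intervalIntegrable _ _)
    (fun θ => circleRestrict_eq ρ hζ θ ▸ hρ0 _) two_pi_pos

theorem exists_arcLength_parametrization (hρ : SmoothSph ρ) (hρ0 : ∀ x, 0 < ρ x) (hζ : ‖ζ‖ = 1) :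
    ∃ Θ : ℝ → ℝ, (∀ s, HasDerivAt Θ (circleRestrict ρ ζ (Θ s))⁻¹ s) ∧
      ∀ s, Θ (s + funkTransform ρ ζ) = Θ s + 2 * π := by
  have hc := continuous_circleRestrict hρ hζ
  refine exists_add_period_inverse
    (S := fun θ => ∫ τ in (0 : ℝ)..θ, circleRestrict ρ ζ τ)
    (fun θ => hc.integral_hasStrictDerivAt 0 θ |>.hasDerivAt)
    (fun θ => circleRestrict_eq ρ hζ θ ▸ hρ0 _) two_pi_pos (funkTransform_pos hρ hρ0 hζ) fun θ => ?_
  have := (periodic_circleRestrict ρ ζ).intervalIntegral_add_eq θ 0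
  rw [← intervalIntegral.integral_add_adjacent_intervals (hc.intervalIntegrable 0 θ)
    (hc.intervalIntegrable θ (θ + 2 * π)), this, zero_add, funkTransform]

theorem hasDerivAt_circleRestrict_smul_conjVec (hρ : SmoothSph ρ) (hζ : ‖ζ‖ = 1) {Θ : ℝ → ℝ} {s : ℝ}
    (hΘ : HasDerivAt Θ (circleRestrict ρ ζ (Θ s))⁻¹ s) (hne : circleRestrict ρ ζ (Θ s) ≠ 0) :
    HasDerivAt (fun s => circleRestrict ρ ζ (Θ s) • conjVec unitJ (ζ * expK (Θ s)))
      (((circleRestrict ρ ζ (Θ s))⁻¹ * tangentDeriv ρ ζ (Θ s)) • conjVec unitJ (ζ * expK (Θ s)) -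
        conjVec unitI (ζ * expK (Θ s))) s := by
  refine (((hasDerivAt_circleRestrict hρ hζ (Θ s)).comp s hΘ).smul
    ((hasDerivAt_conjVec_unitJ_mul_expK ζ (Θ s)).scomp s hΘ)).congr_deriv ?_
  rw [Function.comp_apply, smul_smul, mul_inv_cancel₀ hne, mul_comm (tangentDeriv _ _ _)]
  simp only [Function.comp_apply, one_smul]
  abel

theorem fderiv_radialExt_eq_of_normalDeriv_eq_zero (hρ : SmoothSph ρ) (hζ : ‖ζ‖ = 1) {θ : ℝ}
    (hnormal : normalDeriv ρ ζ θ = 0) (v : E3) :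
    fderiv ℝ (radialExt ρ) (conjVec unitI (ζ * expK θ)) v =
      tangentDeriv ρ ζ θ * ⟪conjVec unitJ (ζ * expK θ), v⟫ := by
  rw [← inner_gradient_left, gradient_radialExt_eq hρ hζ, hnormal, zero_smul, add_zero,
    real_inner_smul_left]

theorem systole_le_funkTransform (hρ : SmoothSph ρ) (hρ0 : ∀ x, 0 < ρ x) (hζ : ‖ζ‖ = 1)
    (hnormal : ∀ θ, normalDeriv ρ ζ θ = 0) :
    systole (confMetric fun x => ρ x ^ 2) ≤ funkTransform ρ ζ := by
  obtain ⟨Θ, hΘ, hΘper⟩ := exists_arcLength_parametrization hρ hρ0 hζ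
  have hΘc : Continuous Θ := continuous_iff_continuousAt.mpr fun s => (hΘ s).continuousAt
  let c : ℝ → Sph := fun s => ⟨_, conjVec_unitI_mul_expK_mem_sphere hζ (Θ s)⟩
  have hρc (s) : circleRestrict ρ ζ (Θ s) = ρ (c s) := circleRestrict_eq ρ hζ _
  have hne (s) : circleRestrict ρ ζ (Θ s) ≠ 0 := (hρc s).trans_ne (hρ0 _).ne'
  refine systole_le_of_hamilton_eq hρ hρ0 (c := c)
    (p := fun s => circleRestrict ρ ζ (Θ s) • conjVec unitJ (ζ * expK (Θ s)))
    (fun s => ?_) (fun s => ?_)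
    (fun s => hasDerivAt_circleRestrict_smul_conjVec hρ hζ (hΘ s) (hne s)) ?_ (fun s v => ?_)
    (funkTransform_pos hρ hρ0 hζ) fun s => Subtype.ext ?_
  · refine ((hasDerivAt_conjVec_unitI_mul_expK ζ (Θ s)).scomp s (hΘ s)).congr_deriv ?_
    rw [← hρc, smul_smul]
    congr 1
    field_simp [hne s]
  · rw [norm_smul, norm_conjVec_unitJ, norm_mul_expK, hζ, hρc, Real.norm_of_nonneg (hρ0 _).le,
      one_pow, mul_one]
  · refine Continuous.sub (.smul (.mul (.inv₀ ?_ hne) ?_) ?_) ?_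
    exacts [(continuous_circleRestrict hρ hζ).comp hΘc, (continuous_tangentDeriv hρ hζ).comp hΘc,
      (continuous_conjVec_mul_expK unitJ ζ).comp hΘc,
      (continuous_conjVec_mul_expK unitI ζ).comp hΘc]
  · rw [fderiv_radialExt_eq_of_normalDeriv_eq_zero hρ hζ (hnormal _), ← hρc, inner_sub_left,
      real_inner_smul_left, mul_assoc]
  · simp only [c, hΘper, periodic_conjVec_mul_expK unitI ζ (Θ s)]

theorem normalDeriv_conformalFactor (f : Sph → ℝ) (t : ℝ) (ζ : ℍ[ℝ]) (θ : ℝ) :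
    normalDeriv (conformalFactor f t) ζ θ = t * normalDeriv f ζ θ := by
  rw [normalDeriv, show radialExt (conformalFactor f t) =
    fun x => 1 + (t • radialExt f) x from rfl, fderiv_const_add, fderiv_const_smul_field]
  rfl

theorem funkTransform_conformalFactor (hf : SmoothSph f) (t : ℝ) (hζ : ‖ζ‖ = 1) :
    funkTransform (conformalFactor f t) ζ = 2 * π + t * funkTransform f ζ := by
  have hc := continuous_circleRestrict hf hζ
  rw [funkTransform, show circleRestrict (conformalFactor f t) ζ =
    fun θ => 1 + t * circleRestrict f ζ θ from rfl, intervalIntegral.integral_add (by simp)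
    ((hc.const_mul t).intervalIntegrable _ _)]
  simp [funkTransform]

end GreatCircleGeodesic

section Averaging

theorem integral_smul_eq_integral_smul {G X : Type*} [Group G] [MeasurableSpace G] [MeasurableMul G]
    [MulAction G X] [MulAction.IsPretransitive G X] (ν : Measure G) [ν.IsMulRightInvariant]
    (g : X → ℝ) (x y : X) : ∫ z, g (z • x) ∂ν = ∫ z, g (z • y) ∂ν := by
  obtain ⟨w, rfl⟩ := MulAction.exists_smul_eq G y x
  simp only [smul_smul]
  exact integral_mul_right_eq_self (fun z => g (z • y)) w

variable {G X : Type*} [Group G] [TopologicalSpace G] [IsTopologicalGroup G] [CompactSpace G]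
  [MeasurableSpace G] [BorelSpace G] [TopologicalSpace X] [CompactSpace X] [MeasurableSpace X]
  [BorelSpace X] [MulAction G X] [ContinuousSMul G X] [MulAction.IsPretransitive G X]

/-- In a compact homogeneous space, averaging over an orbit is averaging over the space. -/
theorem measureReal_univ_mul_integral_smul (ν : Measure G) [ν.IsMulRightInvariant]
    [IsFiniteMeasure ν] (μ : Measure X) [SMulInvariantMeasure G X μ] [IsFiniteMeasure μ]
    {g : X → ℝ} (hg : Continuous g) (x₀ : X) :
    μ.real Set.univ * ∫ z, g (z • x₀) ∂ν = ν.real Set.univ * ∫ x, g x ∂μ :=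
  calc
    μ.real Set.univ * ∫ z, g (z • x₀) ∂ν = ∫ x, ∫ z, g (z • x) ∂ν ∂μ := by
      simp only [fun x => integral_smul_eq_integral_smul ν g x x₀, integral_const, smul_eq_mul]
    _ = ∫ z, ∫ x, g (z • x) ∂μ ∂ν :=
      integral_integral_swap_of_hasCompactSupport (by fun_prop) (.of_compactSpace _)
    _ = ν.real Set.univ * ∫ x, g x ∂μ := by
      simp only [integral_smul_eq_self, integral_const, smul_eq_mul]

end Averaging

section SphereMeasure

open scoped ContDiff

theorem hausdorffMeasure_image_lt_top {φ : ℝ × ℝ → E3} (hφ : ContDiff ℝ 1 φ) {s : Set (ℝ × ℝ)}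
    (hs : IsCompact s) : (μH[2] : Measure E3) (φ '' s) < ⊤ := by
  obtain ⟨K, hK⟩ := hφ.locallyLipschitz.locallyLipschitzOn.exists_lipschitzOnWith_of_compact hs
  refine (hK.hausdorffMeasure_image_le zero_le_two).trans_lt ?_
  rw [hausdorffMeasure_prod_real]
  exact ENNReal.mul_lt_top (ENNReal.rpow_lt_top_of_nonneg zero_le_two ENNReal.coe_ne_top)
    hs.measure_lt_top

/-- Spherical coordinates: `p.1` is the colatitude and `p.2` the longitude. -/
def sphericalCoord (p : ℝ × ℝ) : E3 := !₂[sin p.1 * cos p.2, sin p.1 * sin p.2, cos p.1]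

theorem contDiff_sphericalCoord : ContDiff ℝ 1 sphericalCoord := by
  rw [contDiff_euclidean]
  intro i
  fin_cases i
  · exact (contDiff_sin.comp contDiff_fst).mul (contDiff_cos.comp contDiff_snd)
  · exact (contDiff_sin.comp contDiff_fst).mul (contDiff_sin.comp contDiff_snd)
  · exact contDiff_cos.comp contDiff_fst

theorem sphere_subset_image_sphericalCoord :
    Metric.sphere (0 : E3) 1 ⊆ sphericalCoord '' Set.Icc 0 π ×ˢ Set.Icc (-π) π := by
  intro x hx
  have hsum : x 0 ^ 2 + x 1 ^ 2 + x 2 ^ 2 = 1 := by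
    rw [← norm_sq_E3_eq, mem_sphere_zero_iff_norm.mp hx, one_pow]
  have hlower : -1 ≤ x 2 := by nlinarith [sq_nonneg (x 0), sq_nonneg (x 1)]
  have hupper : x 2 ≤ 1 := by nlinarith [sq_nonneg (x 0), sq_nonneg (x 1)]
  have hnorm : ‖(⟨x 0, x 1⟩ : ℂ)‖ = sin (arccos (x 2)) := by
    rw [sin_arccos, Complex.norm_def, Complex.normSq_mk]
    congr 1
    linarith
  have hcos := Complex.norm_mul_cos_arg ⟨x 0, x 1⟩
  have hsin := Complex.norm_mul_sin_arg ⟨x 0, x 1⟩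
  rw [hnorm] at hcos hsin
  refine ⟨(arccos (x 2), Complex.arg ⟨x 0, x 1⟩),
    ⟨⟨arccos_nonneg _, arccos_le_pi _⟩, abs_le.mp (Complex.abs_arg_le_pi _)⟩, ?_⟩
  ext i
  fin_cases i
  · simpa [sphericalCoord] using hcos
  · simpa [sphericalCoord] using hsin
  · simpa [sphericalCoord] using cos_arccos hlower hupper

instance : IsFiniteMeasure (μH[2] : Measure Sph) := ⟨by
  rw [← isometry_subtype_coe.hausdorffMeasure_image (Or.inl zero_le_two), Subtype.coe_image_univ]
  exact (measure_mono sphere_subset_image_sphericalCoord).trans_lt <|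
    hausdorffMeasure_image_lt_top contDiff_sphericalCoord (isCompact_Icc.prod isCompact_Icc)⟩

theorem lipschitzWith_equatorialProjection :
    LipschitzWith 1 fun x : Sph => ((x : E3) 0, (x : E3) 1) := by
  refine LipschitzWith.mk_one fun x y => max_le ?_ ?_ <;>
    exact PiLp.dist_apply_le (x : E3) y _

theorem ball_subset_range_equatorialProjection :
    Metric.ball (0 : ℝ × ℝ) (1 / 2) ⊆ Set.range fun x : Sph => ((x : E3) 0, (x : E3) 1) := by
  intro p hp
  rw [mem_ball_zero_iff, Prod.norm_def, max_lt_iff, norm_eq_abs, norm_eq_abs, abs_lt, abs_lt] at hp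
  have hheight : 0 ≤ 1 - p.1 ^ 2 - p.2 ^ 2 := by nlinarith
  refine ⟨⟨!₂[p.1, p.2, √(1 - p.1 ^ 2 - p.2 ^ 2)], ?_⟩, by simp⟩
  rw [mem_sphere_zero_iff_norm, ← sq_eq_sq₀ (norm_nonneg _) zero_le_one, norm_sq_E3_eq]
  simp [sq_sqrt hheight]

theorem hausdorffMeasure_two_sphere_ne_zero : (μH[2] : Measure Sph) Set.univ ≠ 0 := by
  intro hzero
  have himage := lipschitzWith_equatorialProjection.hausdorffMeasure_image_le zero_le_two Set.univ
  rw [hausdorffMeasure_prod_real, hzero, mul_zero, Set.image_univ] at himage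
  exact (Metric.measure_ball_pos volume (0 : ℝ × ℝ) one_half_pos).not_ge
    ((measure_mono ball_subset_range_equatorialProjection).trans himage)

end SphereMeasure

section UnitQuaternions

open Quaternion

/-- The group `S³` of unit quaternions, which acts on `S²` by rotations. -/
abbrev UnitQuaternion : Type := Metric.sphere (0 : ℍ[ℝ]) 1

instance : Group UnitQuaternion := Metric.unitSphere.instGroup

instance : MeasurableSpace ℍ[ℝ] := borel _

instance : BorelSpace ℍ[ℝ] := ⟨rfl⟩

theorem imQuat_sub (x y : E3) : imQuat (x - y) = imQuat x - imQuat y := by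
  ext <;> simp

theorem continuous_imQuat : Continuous imQuat := by
  have heq : imQuat = fun x => x 0 • unitI + x 1 • unitJ + x 2 • unitK := by
    ext <;> simp
  rw [heq]
  fun_prop

theorem conjVec_imQuat_mem_sphere (z : UnitQuaternion) (x : Sph) :
    conjVec (imQuat x) (z : ℍ[ℝ]) ∈ Metric.sphere (0 : E3) 1 := by
  rw [mem_sphere_zero_iff_norm, norm_conjVec (re_imQuat x), norm_imQuat, norm_eq_of_mem_sphere,
    norm_eq_of_mem_sphere, one_pow, one_mul]

instance : MulAction UnitQuaternion Sph where
  smul z x := ⟨conjVec (imQuat x) (z : ℍ[ℝ]), conjVec_imQuat_mem_sphere z x⟩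
  one_smul x := Subtype.ext <| by
    change imVec (1 * imQuat x * star 1) = x
    rw [one_mul, star_one, mul_one, imVec_imQuat]
  mul_smul z w x := Subtype.ext (conjVec_imQuat_conjVec (re_imQuat x) (z : ℍ[ℝ]) w).symm

theorem coe_smul_sphere (z : UnitQuaternion) (x : Sph) :
    ((z • x : Sph) : E3) = conjVec (imQuat x) (z : ℍ[ℝ]) := rfl

instance : IsIsometricSMul UnitQuaternion Sph := ⟨fun z => Isometry.of_dist_eq fun x y => by
  rw [Subtype.dist_eq, Subtype.dist_eq, dist_eq_norm, dist_eq_norm, coe_smul_sphere,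
    coe_smul_sphere, sub_eq_add_neg, ← neg_one_smul ℝ, ← conjVec_smul, ← conjVec_add, neg_one_smul,
    ← sub_eq_add_neg, ← imQuat_sub, norm_conjVec (re_imQuat _), norm_imQuat, norm_eq_of_mem_sphere,
    one_pow, one_mul]⟩

instance : ContinuousSMul UnitQuaternion Sph := ⟨by
  refine Continuous.subtype_mk (imVec.continuous.comp ?_) _
  have hz : Continuous fun p : UnitQuaternion × Sph => (p.1 : ℍ[ℝ]) := by fun_prop
  exact (hz.mul (continuous_imQuat.comp (by fun_prop))).mul hz.star⟩

theorem conjVec_unitI_unitI_add_imQuat {x : E3} (hx : ‖x‖ = 1) :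
    conjVec unitI (unitI + imQuat x) = ‖unitI + imQuat x‖ ^ 2 • x := by
  have hsum : x 0 ^ 2 + x 1 ^ 2 + x 2 ^ 2 = 1 := by rw [← norm_sq_E3_eq, hx, one_pow]
  rw [norm_sq_quaternion_eq]
  ext i
  fin_cases i <;> simp [conjVec, imVec_apply]
  · linear_combination (-1 - x 0) * hsum
  · linear_combination (-x 1) * hsum
  · linear_combination (-x 2) * hsum

/-- The base point `i` of the homogeneous space `S²`. -/
def sphereI : Sph := ⟨conjVec unitI 1, by simp [norm_conjVec_unitI]⟩

theorem coe_smul_sphereI (z : UnitQuaternion) :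
    ((z • sphereI : Sph) : E3) = conjVec unitI (z : ℍ[ℝ]) := by
  rw [coe_smul_sphere, sphereI, conjVec_imQuat_conjVec re_unitI, mul_one]

instance : MulAction.IsPretransitive UnitQuaternion Sph := by
  refine (MulAction.isPretransitive_iff_base sphereI).mpr fun x => ?_
  by_cases hq : unitI + imQuat x = 0
  · refine ⟨⟨unitJ, by simp⟩, Subtype.ext ?_⟩
    rw [coe_smul_sphereI, ← imVec_imQuat x, eq_neg_of_add_eq_zero_right hq, conjVec]
    congr 1
    ext <;> simp
  · refine ⟨⟨‖unitI + imQuat x‖⁻¹ • (unitI + imQuat x), ?_⟩, Subtype.ext ?_⟩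
    · rw [mem_sphere_zero_iff_norm, norm_smul, norm_inv, norm_norm,
        inv_mul_cancel₀ (norm_ne_zero_iff.mpr hq)]
    · rw [coe_smul_sphereI, conjVec_smul_right,
        conjVec_unitI_unitI_add_imQuat (norm_eq_of_mem_sphere x), smul_smul, ← mul_pow,
        inv_mul_cancel₀ (norm_ne_zero_iff.mpr hq), one_pow, one_smul]

end UnitQuaternions

section FunkTransformAverage

open Quaternion

variable {f : Sph → ℝ}

/-- `expK` as a one-parameter family of unit quaternions. -/
def unitExpK (θ : ℝ) : UnitQuaternion := ⟨expK θ, by simp [norm_expK]⟩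

theorem continuous_unitExpK : Continuous unitExpK := continuous_expK.subtype_mk _

theorem circleRestrict_eq_smul (f : Sph → ℝ) (z : UnitQuaternion) (θ : ℝ) :
    circleRestrict f z θ = f ((z * unitExpK θ) • sphereI) := by
  rw [circleRestrict_eq f (norm_eq_of_mem_sphere z)]
  congr 1
  refine Subtype.ext ?_
  rw [coe_smul_sphereI]
  rfl

theorem continuous_mul_unitExpK_smul_sphereI :
    Continuous fun p : UnitQuaternion × ℝ => (p.1 * unitExpK p.2) • sphereI :=
  (continuous_fst.mul (continuous_unitExpK.comp continuous_snd)).smul continuous_const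

theorem continuous_uncurry_circleRestrict (hf : Continuous f) :
    Continuous (Function.uncurry fun (z : UnitQuaternion) θ => circleRestrict f z θ) := by
  simp only [circleRestrict_eq_smul]
  exact hf.comp continuous_mul_unitExpK_smul_sphereI

theorem continuous_funkTransform (hf : Continuous f) :
    Continuous fun z : UnitQuaternion => funkTransform f z :=
  intervalIntegral.continuous_parametric_intervalIntegral_of_continuous'
    (continuous_uncurry_circleRestrict hf) 0 (2 * π)

theorem integrable_uncurry_circleRestrict (hf : Continuous f) (κ : Measure (ℝ × UnitQuaternion))
    [IsFiniteMeasure κ] :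
    Integrable (Function.uncurry fun θ (z : UnitQuaternion) => circleRestrict f z θ) κ := by
  simp only [circleRestrict_eq_smul]
  exact ((BoundedContinuousFunction.mkOfCompact ⟨f, hf⟩).compContinuous
    ⟨_, continuous_mul_unitExpK_smul_sphereI.comp continuous_swap⟩).integrable κ

theorem integral_funkTransform_eq_zero (hf : Continuous f)
    (hmean : ∫ x, f x ∂(μH[2] : Measure Sph) = 0) (ν : Measure UnitQuaternion)
    [ν.IsMulRightInvariant] [IsFiniteMeasure ν] :
    ∫ z : UnitQuaternion, funkTransform f z ∂ν = 0 := by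
  have horbit : ∫ z : UnitQuaternion, f (z • sphereI) ∂ν = 0 := by
    have haverage := measureReal_univ_mul_integral_smul ν (μH[2] : Measure Sph) hf sphereI
    rw [hmean, mul_zero] at haverage
    exact (mul_eq_zero.mp haverage).resolve_left
      ((measureReal_ne_zero_iff).mpr hausdorffMeasure_two_sphere_ne_zero)
  have hrotate (θ : ℝ) : ∫ z : UnitQuaternion, circleRestrict f z θ ∂ν = 0 := by
    simp only [circleRestrict_eq_smul]
    rw [integral_mul_right_eq_self (fun z : UnitQuaternion => f (z • sphereI)), horbit]
  have : IsFiniteMeasure (volume.restrict (Set.uIoc 0 (2 * π))) :=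
    inferInstanceAs (IsFiniteMeasure (volume.restrict (Set.Ioc _ _)))
  simp only [funkTransform]
  rw [← intervalIntegral_integral_swap (integrable_uncurry_circleRestrict hf _)]
  simp only [hrotate, intervalIntegral.integral_zero]

theorem exists_funkTransform_neg (hf : Continuous f)
    (hmean : ∫ x, f x ∂(μH[2] : Measure Sph) = 0)
    (hS : ∃ z : UnitQuaternion, funkTransform f z ≠ 0) :
    ∃ z : UnitQuaternion, funkTransform f z < 0 := by
  by_contra! hnonneg
  obtain ⟨z, hz⟩ := hS
  exact ((continuous_funkTransform hf).integral_pos_of_hasCompactSupport_nonneg_nonzero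
    (.of_compactSpace _) hnonneg hz).ne'
    (integral_funkTransform_eq_zero hf hmean (Measure.haar : Measure UnitQuaternion).inv)

theorem funkTransform_neg (f : Sph → ℝ) (ζ : ℍ[ℝ]) :
    funkTransform (-f) ζ = -funkTransform f ζ :=
  (intervalIntegral.integral_neg (f := circleRestrict f ζ) (a := 0) (b := 2 * π) (μ := volume))

theorem exists_funkTransform_pos (hf : Continuous f)
    (hmean : ∫ x, f x ∂(μH[2] : Measure Sph) = 0)
    (hS : ∃ z : UnitQuaternion, funkTransform f z ≠ 0) :
    ∃ z : UnitQuaternion, 0 < funkTransform f z := by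
  have hneg := exists_funkTransform_neg hf.neg (by simp [integral_neg, hmean])
    (by simpa only [funkTransform_neg, neg_ne_zero] using hS)
  simpa only [funkTransform_neg, neg_lt_zero] using hneg

end FunkTransformAverage

section FirstOrderConditions

open Quaternion

variable {f : Sph → ℝ} {u ζ : ℍ[ℝ]}

theorem hasDerivAt_intervalIntegral_of_continuous_deriv {a b : ℝ} {g g' : ℝ → ℝ → ℝ}
    (hg : ∀ s, Continuous (g s)) (hderiv : ∀ s θ, HasDerivAt (fun s => g s θ) (g' s θ) s)
    (hg' : Continuous (Function.uncurry g')) (s : ℝ) :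
    HasDerivAt (fun s => ∫ θ in a..b, g s θ) (∫ θ in a..b, g' s θ) s := by
  obtain ⟨M, hM⟩ := ((isCompact_Icc (a := s - 1) (b := s + 1)).prod
    (isCompact_uIcc (a := a) (b := b))).exists_bound_of_continuousOn hg'.continuousOn
  refine (intervalIntegral.hasDerivAt_integral_of_dominated_loc_of_deriv_le (μ := volume)
    (F := g) (F' := g') (bound := fun _ => M) (Icc_mem_nhds (sub_one_lt s) (lt_add_one s))
    (.of_forall fun x => (hg x).aestronglyMeasurable) ((hg s).intervalIntegrable _ _)
    (hg'.comp (Continuous.prodMk_right s)).aestronglyMeasurable ?_ intervalIntegrable_const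
    (.of_forall fun θ _ x _ => hderiv x θ)).2
  exact .of_forall fun θ hθ x hx => hM (x, θ) ⟨hx, Set.uIoc_subset_uIcc hθ⟩

theorem funkTransform_smul (f : Sph → ℝ) {r : ℝ} (hr : r ≠ 0) (ζ : ℍ[ℝ]) :
    funkTransform f (r • ζ) = funkTransform f ζ := by
  simp only [funkTransform, circleRestrict, hopfLift, smul_mul_assoc, conjVec_smul_right,
    radialExt_smul f (sq_pos_of_ne_zero hr)]

theorem funkTransform_eq_zero_of_ne_zero (hS : ∀ z : UnitQuaternion, funkTransform f z = 0)
    (hζ : ζ ≠ 0) : funkTransform f ζ = 0 := by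
  rw [← funkTransform_smul f (inv_ne_zero (norm_ne_zero_iff.mpr hζ))]
  exact hS ⟨‖ζ‖⁻¹ • ζ, by
    rw [mem_sphere_zero_iff_norm, norm_smul, norm_inv, norm_norm,
      inv_mul_cancel₀ (norm_ne_zero_iff.mpr hζ)]⟩

theorem add_smul_mul_ne_zero (hζ : ζ ≠ 0) (hu : u.re = 0) (s : ℝ) : ζ + s • (ζ * u) ≠ 0 := by
  have hfactor : ζ + s • (ζ * u) = ζ * (1 + s • u) := by rw [mul_add, mul_one, mul_smul_comm]
  rw [hfactor]
  refine mul_ne_zero hζ fun h => ?_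
  simpa [hu] using congrArg QuaternionAlgebra.re h

theorem hasDerivAt_funkTransform_add_smul_mul (hf : SmoothSph f) (hζ : ζ ≠ 0) (hu : u.re = 0) :
    HasDerivAt (fun s : ℝ => funkTransform f (ζ + s • (ζ * u)))
      (∫ θ in (0 : ℝ)..2 * π, fderiv ℝ (radialExt f) (conjVec unitI (ζ * expK θ))
        (conjVecPolar unitI (ζ * expK θ) (ζ * u * expK θ))) 0 := by
  have hne (s θ : ℝ) : (ζ + s • (ζ * u)) * expK θ ≠ 0 :=
    mul_ne_zero (add_smul_mul_ne_zero hζ hu s) (norm_ne_zero_iff.mp (by simp [norm_expK]))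
  have hcurve (s θ : ℝ) :
      HasDerivAt (fun s : ℝ => (ζ + s • (ζ * u)) * expK θ) (ζ * u * expK θ) s := by
    simpa using (((hasDerivAt_id s).smul_const (ζ * u)).const_add ζ).mul_const (expK θ)
  have hexpK := continuous_expK
  have h := hasDerivAt_intervalIntegral_of_continuous_deriv (a := 0) (b := 2 * π)
    (g := fun s => circleRestrict f (ζ + s • (ζ * u)))
    (g' := fun s θ => fderiv ℝ (radialExt f) (conjVec unitI ((ζ + s • (ζ * u)) * expK θ))
      (conjVecPolar unitI ((ζ + s • (ζ * u)) * expK θ) (ζ * u * expK θ)))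
    (fun s => continuous_iff_continuousAt.mpr fun θ =>
      ContinuousAt.comp (g := hopfLift f) (contDiffAt_hopfLift hf (hne s θ)).continuousAt
        (by fun_prop))
    (fun s θ => (hasFDerivAt_radialExt hf (conjVec_unitI_ne_zero (hne s θ))).comp_hasDerivAt s
      (hasDerivAt_conjVec unitI (hcurve s θ)))
    (continuous_fderiv_radialExt_apply hf
      ((contDiff_conjVec unitI).continuous.comp (by fun_prop))
      (imVec.continuous.comp (by fun_prop)) fun p => conjVec_unitI_ne_zero (hne p.1 p.2)) 0
  simpa only [funkTransform, zero_smul, add_zero] using h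

theorem conjVecPolar_mul_mul (u z w : ℍ[ℝ]) :
    conjVecPolar unitI (z * w) (z * u * w) =
      conjVec (w * unitI * star w * star u + u * (w * unitI * star w)) z := by
  simp only [conjVecPolar, conjVec, star_mul, mul_add, add_mul, mul_assoc]

theorem conjVecPolar_unitI_mul_unitI (z : ℍ[ℝ]) (θ : ℝ) :
    conjVecPolar unitI (z * expK θ) (z * unitI * expK θ) = (2 * sin θ) • conjVec unitK z := by
  rw [conjVecPolar_mul_mul, expK_mul_unitI_mul_star_expK, ← conjVec_smul]
  congr 1
  ext <;> simp
  ring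

theorem conjVecPolar_unitI_mul_unitJ (z : ℍ[ℝ]) (θ : ℝ) :
    conjVecPolar unitI (z * expK θ) (z * unitJ * expK θ) = (-2 * cos θ) • conjVec unitK z := by
  rw [conjVecPolar_mul_mul, expK_mul_unitI_mul_star_expK, ← conjVec_smul]
  congr 1
  ext <;> simp
  ring

theorem integral_mul_normalDeriv_eq_zero (hf : SmoothSph f)
    (hS : ∀ z : UnitQuaternion, funkTransform f z = 0) (hζ : ζ ≠ 0) (hu : u.re = 0) {r : ℝ → ℝ}
    (hr : ∀ θ, conjVecPolar unitI (ζ * expK θ) (ζ * u * expK θ) = r θ • conjVec unitK ζ) :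
    ∫ θ in (0 : ℝ)..2 * π, r θ * normalDeriv f ζ θ = 0 := by
  have h := hasDerivAt_funkTransform_add_smul_mul hf hζ hu
  simp only [hr, map_smul, smul_eq_mul,
    funkTransform_eq_zero_of_ne_zero hS (add_smul_mul_ne_zero hζ hu _)] at h
  exact h.unique (hasDerivAt_const 0 0)

theorem integral_normalDeriv_mul_sin_eq_zero (hf : SmoothSph f)
    (hS : ∀ z : UnitQuaternion, funkTransform f z = 0) (hζ : ζ ≠ 0) :
    ∫ θ in (0 : ℝ)..2 * π, normalDeriv f ζ θ * sin θ = 0 := by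
  have h := integral_mul_normalDeriv_eq_zero hf hS hζ re_unitI (conjVecPolar_unitI_mul_unitI ζ)
  simpa [mul_assoc, mul_comm (sin _)] using h

theorem integral_normalDeriv_mul_cos_eq_zero (hf : SmoothSph f)
    (hS : ∀ z : UnitQuaternion, funkTransform f z = 0) (hζ : ζ ≠ 0) :
    ∫ θ in (0 : ℝ)..2 * π, normalDeriv f ζ θ * cos θ = 0 := by
  have h := integral_mul_normalDeriv_eq_zero hf hS hζ re_unitJ (conjVecPolar_unitI_mul_unitJ ζ)
  simpa [mul_assoc, mul_comm (cos _)] using h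

theorem normalDeriv_mul_unitI (f : Sph → ℝ) (ζ : ℍ[ℝ]) (θ : ℝ) :
    normalDeriv f (ζ * unitI) θ = -normalDeriv f ζ (-θ) := by
  have hcircle : conjVec unitI (ζ * unitI * expK θ) = conjVec unitI (ζ * expK (-θ)) := by
    have hcomm : unitI * expK θ = expK (-θ) * unitI := by ext <;> simp [neg_div]
    have hconj : unitI * unitI * star unitI = unitI := by ext <;> simp
    rw [mul_assoc, hcomm, ← mul_assoc, conjVec_mul, hconj]
  have hnormal : conjVec unitK (ζ * unitI) = -conjVec unitK ζ := by
    have hconj : unitI * unitK * star unitI = (-1 : ℝ) • unitK := by ext <;> simp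
    rw [conjVec_mul, hconj, conjVec_smul, neg_one_smul]
  rw [normalDeriv, hcircle, hnormal, map_neg, normalDeriv]

theorem integral_normalDeriv_mul_unitI (f : Sph → ℝ) (ζ : ℍ[ℝ]) :
    ∫ θ in (0 : ℝ)..2 * π, normalDeriv f (ζ * unitI) θ =
      -∫ θ in (0 : ℝ)..2 * π, normalDeriv f ζ θ := by
  simp only [normalDeriv_mul_unitI, intervalIntegral.integral_neg]
  rw [intervalIntegral.integral_comp_neg, neg_zero]
  simpa using (periodic_normalDeriv f ζ).intervalIntegral_add_eq (-(2 * π)) 0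

theorem continuous_integral_normalDeriv (hf : SmoothSph f) :
    Continuous fun z : UnitQuaternion => ∫ θ in (0 : ℝ)..2 * π, normalDeriv f z θ := by
  have hexpK := continuous_expK
  have hcoe : Continuous fun p : UnitQuaternion × ℝ => (p.1 : ℍ[ℝ]) := by fun_prop
  refine intervalIntegral.continuous_parametric_intervalIntegral_of_continuous' ?_ _ _
  exact continuous_fderiv_radialExt_apply hf
    ((contDiff_conjVec unitI).continuous.comp (hcoe.mul (by fun_prop)))
    ((contDiff_conjVec unitK).continuous.comp hcoe)
    fun p => conjVec_unitI_ne_zero (mul_expK_ne_zero (norm_eq_of_mem_sphere p.1) p.2)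

instance : PreconnectedSpace UnitQuaternion :=
  Subtype.preconnectedSpace (isPreconnected_sphere (by simp [Quaternion.rank_eq_four]) 0 1)

theorem exists_integral_normalDeriv_eq_zero (hf : SmoothSph f) :
    ∃ z : UnitQuaternion, ∫ θ in (0 : ℝ)..2 * π, normalDeriv f z θ = 0 := by
  have hodd := integral_normalDeriv_mul_unitI f 1
  rw [one_mul] at hodd
  have hcont := continuous_integral_normalDeriv hf
  rcases le_total (∫ θ in (0 : ℝ)..2 * π, normalDeriv f 1 θ) 0 with h | h
  · exact mem_range_of_exists_le_of_exists_ge hcont ⟨⟨1, by simp⟩, h⟩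
      ⟨⟨unitI, by simp⟩, by rw [hodd]; linarith⟩
  · exact mem_range_of_exists_le_of_exists_ge hcont ⟨⟨unitI, by simp⟩, by rw [hodd]; linarith⟩
      ⟨⟨1, by simp⟩, h⟩

end FirstOrderConditions

section SmallParameters

open Filter Quaternion Topology

variable {f : Sph → ℝ} {β : ContDiffBump (0 : ℝ)} {C t : ℝ} {ζ : ℍ[ℝ]}

theorem exists_contDiffBump_rOut_mul_abs_le {X : Type*} [TopologicalSpace X] [CompactSpace X]
    {f : X → ℝ} (hf : Continuous f) {ε : ℝ} (hε : 0 < ε) :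
    ∃ β : ContDiffBump (0 : ℝ), ∀ x, β.rOut * |f x| ≤ ε := by
  obtain ⟨M, hM⟩ := isCompact_univ.exists_bound_of_continuousOn hf.continuousOn
  have hlt : ε / (|M| + 1) / 2 < ε / (|M| + 1) := half_lt_self (by positivity)
  refine ⟨⟨_, _, by positivity, hlt⟩, fun x => ?_⟩
  have hfx : |f x| ≤ |M| + 1 :=
    ((hM x (Set.mem_univ x)).trans (le_abs_self M)).trans (lt_add_one _).le
  calc ε / (|M| + 1) * |f x| ≤ ε / (|M| + 1) * (|M| + 1) := by gcongr
    _ = ε := by field_simp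

theorem systole_le_two_pi_of_mul_normalDeriv_eq_zero (hf : SmoothSph f)
    (hpos : ∀ x, 0 < 1 + t * f x) (hζ : ‖ζ‖ = 1) (hnormal : ∀ θ, t * normalDeriv f ζ θ = 0)
    (hS : t * funkTransform f ζ = 0) :
    systole (confMetric fun x => (1 + t * f x) ^ 2) ≤ 2 * π := by
  have h := systole_le_funkTransform (smoothSph_conformalFactor hf t) hpos hζ fun θ => by
    rw [normalDeriv_conformalFactor, hnormal]
  rwa [funkTransform_conformalFactor hf t hζ, hS, add_zero] at h

theorem PerturbationBounds.eventually_systole_le_of_exists_funkTransform_ne_zero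
    (X : PerturbationBounds f β C) (hmean : ∫ x, f x ∂(μH[2] : Measure Sph) = 0)
    (hS : ∃ z : UnitQuaternion, funkTransform f z ≠ 0) :
    ∀ᶠ t in 𝓝[≠] 0, systole (confMetric fun x => (1 + t * f x) ^ 2) ≤ 2 * π := by
  have hf := X.smooth.continuous
  obtain ⟨z, hz⟩ := exists_funkTransform_pos hf hmean hS
  obtain ⟨w, hw⟩ := exists_funkTransform_neg hf hmean hS
  filter_upwards [eventually_mem_nhdsWithin,
    X.eventually_systole_le_of_mul_funkTransform_neg (norm_eq_of_mem_sphere z) hz.ne',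
    X.eventually_systole_le_of_mul_funkTransform_neg (norm_eq_of_mem_sphere w) hw.ne]
    with t ht hneg hpos
  rcases lt_or_gt_of_ne ht with ht | ht
  · exact hneg (mul_neg_of_neg_of_pos ht hz)
  · exact hpos (mul_neg_of_pos_of_neg ht hw)

theorem PerturbationBounds.eventually_systole_le_of_funkTransform_eq_zero
    (X : PerturbationBounds f β C) (hS : ∀ z : UnitQuaternion, funkTransform f z = 0) :
    ∀ᶠ t in 𝓝[≠] 0, systole (confMetric fun x => (1 + t * f x) ^ 2) ≤ 2 * π := by
  obtain ⟨z, hmean⟩ := exists_integral_normalDeriv_eq_zero X.smooth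
  have hz : ‖(z : ℍ[ℝ])‖ = 1 := norm_eq_of_mem_sphere z
  have hz₀ : (z : ℍ[ℝ]) ≠ 0 := ne_zero_of_mem_unit_sphere z
  by_cases hnormal : ∀ θ, normalDeriv f z θ = 0
  · filter_upwards [eventually_isSmallParameter β C] with t ht
    exact systole_le_two_pi_of_mul_normalDeriv_eq_zero X.smooth (X.conformalFactor_pos ht) hz
      (fun θ => by rw [hnormal, mul_zero]) (by rw [hS, mul_zero])
  · obtain ⟨θ₀, hθ₀⟩ := not_forall.mp hnormal
    exact X.eventually_systole_le_of_normalDeriv_ne_zero hz (hS z)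
      (integral_normalDeriv_mul_cos_eq_zero X.smooth hS hz₀)
      (integral_normalDeriv_mul_sin_eq_zero X.smooth hS hz₀) hmean hθ₀

theorem eventually_systole_le_two_pi (hf : SmoothSph f)
    (hmean : ∫ x, f x ∂(μH[2] : Measure Sph) = 0) :
    ∀ᶠ t in 𝓝[≠] 0, systole (confMetric fun x => (1 + t * f x) ^ 2) ≤ 2 * π := by
  obtain ⟨β, hβ⟩ := exists_contDiffBump_rOut_mul_abs_le hf.continuous one_half_pos
  obtain ⟨C, X⟩ := exists_perturbationBounds hf hβ
  by_cases hS : ∀ z : UnitQuaternion, funkTransform f z = 0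
  · exact X.eventually_systole_le_of_funkTransform_eq_zero hS
  · exact X.eventually_systole_le_of_exists_funkTransform_ne_zero hmean (not_forall.mp hS)

end SmallParameters

/-- If `f` is a smooth nonzero function of mean zero and `g_t = (1+tf)²·g₀`
is defined for `|t| < a`, then there is `α ∈ (0, a)` with `sys(S², g_t) ≤ 2π` for `|t| < α`. -/
theorem systole_le_two_pi_of_small_t (f : Sph → ℝ) (hf : SmoothSph f) (hf0 : f ≠ 0)
    (hmean : ∫ x, f x ∂(μH[2] : Measure Sph) = 0)
    (a : ℝ) (ha : 0 < a)
    (hdef : ∀ t : ℝ, |t| < a → ∀ x, 0 < 1 + t * f x) :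
    ∃ α : ℝ, 0 < α ∧ α < a ∧ ∀ t : ℝ, |t| < α →
      systole (confMetric fun x => (1 + t * f x) ^ 2) ≤ 2 * π := by
  obtain ⟨δ, hδ, hsystole⟩ := Metric.mem_nhdsWithin_iff.mp (eventually_systole_le_two_pi hf hmean)
  refine ⟨min δ (a / 2), by positivity, (min_le_right _ _).trans_lt (half_lt_self ha),
    fun t ht => ?_⟩
  obtain rfl | ht₀ := eq_or_ne t 0
  · exact systole_le_two_pi_of_mul_normalDeriv_eq_zero hf (hdef 0 (by simpa)) norm_one
      (by simp) (by simp)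
  · exact hsystole ⟨by simpa using ht.trans_le (min_le_left _ _), ht₀⟩

end
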